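/- Let d > 1 and let α be a faithful, strongly irreducible ℤ^d-action by automorphisms of 𝕋^n. Let μ be an α-invariant and α-ergodic Borel probability measure on 𝕋^n such that: (i) for some 𝐧 ∈ ℤ^d the entropy h_μ(α_𝐧) is positive, and (ii) the ℤ^d-action α on (𝕋^n, μ) is weakly mixing (i.e. the diagonal ℤ^d-action on the product system (𝕋^n × 𝕋^n, μ × μ) is ergodic; in particular μ is ergodic for the single transformation α_𝐧 for every nonzero 𝐧 ∈ ℤ^d). Then μ is Lebesgue measure on 𝕋^n. -/

import Mathlib

open MeasureTheory ENNReal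

section Entropy

variable {α : Type*} [MeasurableSpace α]

/-- `P : Fin m → Set α` is a finite measurable partition of `α` modulo `μ`-null sets. -/
def IsFinMeasPartition (μ : Measure α) {m : ℕ} (P : Fin m → Set α) : Prop :=
  (∀ i, MeasurableSet (P i)) ∧ Pairwise (Function.onFun Disjoint P) ∧ μ (⋃ i, P i)ᶜ = 0

/-- Shannon entropy (information) of a finite family of sets with respect to `μ`. -/
noncomputable def finPartitionEntropy (μ : Measure α) {ι : Type*} [Fintype ι]
    (P : ι → Set α) : ℝ≥0∞ :=
  ENNReal.ofReal (∑ i, Real.negMulLog ((μ (P i)).toReal))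

/-- The common refinement `P ∨ T⁻¹ P ∨ ⋯ ∨ T^{-(n-1)} P`, indexed by `Fin n → Fin m`. -/
def refinedPartition (T : α → α) {m : ℕ} (P : Fin m → Set α) (n : ℕ) :
    (Fin n → Fin m) → Set α :=
  fun f => ⋂ i : Fin n, T^[(i : ℕ)] ⁻¹' P (f i)

/-- The measure-theoretic (Kolmogorov–Sinai) entropy `h_μ(T)` of a transformation `T`
preserving `μ`, defined as the supremum over all finite measurable partitions `P` of
`inf_n H_μ(P ∨ T⁻¹P ∨ ⋯ ∨ T^{-n}P)/(n+1)` (by subadditivity this infimum equals the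
usual limit). -/
noncomputable def ksEntropy (T : α → α) (μ : Measure α) : ℝ≥0∞ :=
  ⨆ (m : ℕ) (P : Fin m → Set α) (_ : IsFinMeasPartition μ P),
    ⨅ n : ℕ, finPartitionEntropy μ (refinedPartition T P (n + 1)) / (n + 1 : ℝ≥0∞)

end Entropy

open MeasureTheory

/-- The endomorphism of the torus `𝕋^n = (ℝ/ℤ)^n` induced by an integer matrix `A`. -/
noncomputable def toralMap {N : ℕ} (A : Matrix (Fin N) (Fin N) ℤ)
    (x : Fin N → UnitAddCircle) : Fin N → UnitAddCircle :=
  fun i => ∑ j, A i j • x j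

/-- A `ℤ^d`-action `α` by toral automorphisms is irreducible when restricted to a
subgroup `Λ ≤ ℤ^d` if every closed `Λ`-invariant proper subgroup of the torus is
finite. -/
def IsIrreducibleOn {d N : ℕ} (α : (Fin d → ℤ) → Matrix (Fin N) (Fin N) ℤ)
    (Λ : AddSubgroup (Fin d → ℤ)) : Prop :=
  ∀ S : AddSubgroup (Fin N → UnitAddCircle), IsClosed (S : Set (Fin N → UnitAddCircle)) →
    (∀ v ∈ Λ, ∀ x ∈ S, toralMap (α v) x ∈ S) → S ≠ ⊤ →
    (S : Set (Fin N → UnitAddCircle)).Finite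


namespace KS

open Matrix

theorem circle_infinite : Infinite UnitAddCircle := by
  refine Infinite.of_injective (fun n : ℕ => (((1 : ℝ) / (n + 2) : ℝ) : UnitAddCircle)) ?_
  intro a b hab
  have hIco : ∀ n : ℕ, ((1 : ℝ) / (n + 2)) ∈ Set.Ico (0 : ℝ) (0 + 1) := by
    intro n
    refine ⟨by positivity, ?_⟩
    rw [zero_add, div_lt_one (by positivity)]
    have : (0 : ℝ) ≤ n := Nat.cast_nonneg n
    linarith
  have := (AddCircle.coe_eq_coe_iff_of_mem_Ico (p := (1 : ℝ)) (a := 0) (hIco a) (hIco b)).1 hab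
  have h2 : (a : ℝ) + 2 = b + 2 := by
    have ha : (a : ℝ) + 2 ≠ 0 := by positivity
    have hb : (b : ℝ) + 2 ≠ 0 := by positivity
    field_simp at this
    linarith
  have : (a : ℝ) = b := by linarith
  exact_mod_cast this

theorem sp_int {d N : ℕ} (α : (Fin d → ℤ) → Matrix (Fin N) (Fin N) ℤ) (hα0 : α 0 = 1)
    (hαadd : ∀ v w, α (v + w) = α v * α w) (Λ : AddSubgroup (Fin d → ℤ))
    (hΛ : IsIrreducibleOn α Λ) (ξ η : Fin N → ℤ) (hξ : ξ ≠ 0)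
    (h : ∀ v ∈ Λ, (ξ ᵥ* α v) ⬝ᵥ η = 0) : η = 0 := by
  by_contra hη
  let S : AddSubgroup (Fin N → UnitAddCircle) :=
    { carrier := {x | ∀ v ∈ Λ, ∑ j, (ξ ᵥ* α v) j • x j = 0}
      zero_mem' := by intro v _; simp
      add_mem' := by
        intro x y hx hy v hv
        simp only [Pi.add_apply, smul_add, Finset.sum_add_distrib, hx v hv, hy v hv, add_zero]
      neg_mem' := by
        intro x hx v hv
        simp only [Pi.neg_apply, smul_neg, Finset.sum_neg_distrib, hx v hv, neg_zero] }
  have hSmem : ∀ x, x ∈ S ↔ ∀ v ∈ Λ, ∑ j, (ξ ᵥ* α v) j • x j = 0 := fun x => Iff.rfl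
  have hcl : IsClosed (S : Set (Fin N → UnitAddCircle)) := by
    have : (S : Set (Fin N → UnitAddCircle)) =
        ⋂ v ∈ Λ, {x | ∑ j, (ξ ᵥ* α v) j • x j = 0} := by
      ext x; simp [hSmem]
    rw [this]
    refine isClosed_biInter fun v _ => isClosed_eq ?_ continuous_const
    fun_prop
  have hinv : ∀ v ∈ Λ, ∀ x ∈ S, toralMap (α v) x ∈ S := by
    intro v hv x hx u hu
    have := hx (u + v) (Λ.add_mem hu hv)
    rw [hαadd, ← Matrix.vecMul_vecMul] at this
    rw [← this]
    simp only [toralMap, Finset.smul_sum]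
    rw [Finset.sum_comm]
    refine Finset.sum_congr rfl fun j _ => ?_
    conv_rhs => rw [Matrix.vecMul, dotProduct, Finset.sum_smul]
    refine Finset.sum_congr rfl fun i _ => ?_
    rw [smul_smul]
  have hne : S ≠ ⊤ := by
    intro htop
    obtain ⟨i, hi⟩ : ∃ i, ξ i ≠ 0 := by
      by_contra hcon; push Not at hcon; exact hξ (funext hcon)
    have hx : (Pi.single i (((1 / (2 * ξ i) : ℝ)) : UnitAddCircle) : Fin N → UnitAddCircle) ∈ S := by
      rw [htop]; trivial
    have := hx 0 Λ.zero_mem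
    rw [hα0, Matrix.vecMul_one, Finset.sum_eq_single i] at this
    · rw [Pi.single_eq_same, ← AddCircle.coe_zsmul] at this
      have h2 : ξ i • (1 / (2 * ξ i) : ℝ) = 1 / 2 := by
        have : (ξ i : ℝ) ≠ 0 := by exact_mod_cast hi
        rw [zsmul_eq_mul]; field_simp
      rw [h2] at this
      rw [← AddCircle.coe_zero] at this
      have := (AddCircle.coe_eq_coe_iff_of_mem_Ico (p := (1 : ℝ)) (a := 0)
        (by constructor <;> norm_num) (by constructor <;> norm_num)).1 this
      norm_num at this
    · intro j _ hj; simp [hj]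
    · simp
  have hfin := hΛ S hcl hinv hne
  obtain ⟨i, hi⟩ : ∃ i, η i ≠ 0 := by
    by_contra hcon; push Not at hcon; exact hη (funext hcon)
  have hfin2 := hfin.image (fun x => x i)
  have huniv : (fun x : Fin N → UnitAddCircle => x i) '' (S : Set (Fin N → UnitAddCircle)) =
      Set.univ := by
    refine Set.eq_univ_of_forall fun y => ?_
    obtain ⟨r, rfl⟩ := QuotientAddGroup.mk_surjective y
    have hi' : (η i : ℝ) ≠ 0 := by exact_mod_cast hi
    refine ⟨fun j => ((r / η i * η j : ℝ) : UnitAddCircle), ?_, ?_⟩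
    · intro v hv
      have := h v hv
      have h3 : ∑ j, (ξ ᵥ* α v) j • (r / η i * η j : ℝ) = 0 := by
        have h4 : ((∑ j, (ξ ᵥ* α v) j * η j : ℤ) : ℝ) = 0 := by
          rw [show (∑ j, (ξ ᵥ* α v) j * η j : ℤ) = (ξ ᵥ* α v) ⬝ᵥ η from rfl, this]; simp
        push_cast at h4
        calc ∑ j, (ξ ᵥ* α v) j • (r / η i * η j : ℝ)
            = (r / η i) * ∑ j, ((ξ ᵥ* α v) j : ℝ) * η j := by
              rw [Finset.mul_sum]; refine Finset.sum_congr rfl fun j _ => ?_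
              rw [zsmul_eq_mul]; ring
          _ = 0 := by rw [h4, mul_zero]
      have h5 := congrArg (fun t : ℝ => (QuotientAddGroup.mk' (AddSubgroup.zmultiples (1:ℝ))) t) h3
      simp only [map_sum, map_zsmul, map_zero] at h5
      exact h5
    · show ((r / η i * η i : ℝ) : UnitAddCircle) = _
      rw [div_mul_cancel₀ _ hi']
  rw [huniv] at hfin2
  have := circle_infinite
  exact Set.infinite_univ hfin2

/-- clear denominators of a rational vector -/
theorem clear_den {N : ℕ} (y : Fin N → ℚ) : ∃ (k : ℤ) (η : Fin N → ℤ), k ≠ 0 ∧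
    ∀ i, (η i : ℚ) = k * y i := by
  obtain ⟨⟨k, hk⟩, h⟩ := IsLocalization.exist_integer_multiples_of_finite (nonZeroDivisors ℤ) y
  choose η hη using h
  refine ⟨k, η, nonZeroDivisors.ne_zero hk, fun i => ?_⟩
  have := hη i
  simp only [algebraMap_int_eq, Int.coe_castRingHom] at this
  rw [this]; simp

abbrev toQ {N : ℕ} (A : Matrix (Fin N) (Fin N) ℤ) : Matrix (Fin N) (Fin N) ℚ :=
  A.map (Int.cast : ℤ → ℚ)

theorem sp_rat {d N : ℕ} (α : (Fin d → ℤ) → Matrix (Fin N) (Fin N) ℤ) (hα0 : α 0 = 1)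
    (hαadd : ∀ v w, α (v + w) = α v * α w) (Λ : AddSubgroup (Fin d → ℤ))
    (hΛ : IsIrreducibleOn α Λ) (ξ η : Fin N → ℚ) (hξ : ξ ≠ 0)
    (h : ∀ v ∈ Λ, (ξ ᵥ* toQ (α v)) ⬝ᵥ η = 0) : η = 0 := by
  obtain ⟨k, ξ', hk, hξ'⟩ := clear_den ξ
  obtain ⟨l, η', hl, hη'⟩ := clear_den η
  have hkq : (k : ℚ) ≠ 0 := by exact_mod_cast hk
  have hlq : (l : ℚ) ≠ 0 := by exact_mod_cast hl
  have h1 : η' = 0 := by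
    refine sp_int α hα0 hαadd Λ hΛ ξ' η' ?_ ?_
    · rintro rfl
      refine hξ (funext fun i => ?_)
      have := hξ' i
      simpa [hkq] using this.symm
    · intro v hv
      have h2 : ((((ξ' ᵥ* α v) ⬝ᵥ η') : ℤ) : ℚ) = k * l * ((ξ ᵥ* toQ (α v)) ⬝ᵥ η) := by
        simp only [Matrix.vecMul, dotProduct, Int.cast_sum, Int.cast_mul, hξ', hη', Finset.sum_mul,
          Finset.mul_sum, Matrix.map_apply]
        refine Finset.sum_congr rfl fun i _ => Finset.sum_congr rfl fun j _ => ?_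
        ring
      rw [h v hv, mul_zero] at h2
      exact_mod_cast h2
  funext i
  have := hη' i
  rw [h1] at this
  simpa [hlq] using this.symm

theorem comm_zero {d N : ℕ} (α : (Fin d → ℤ) → Matrix (Fin N) (Fin N) ℤ) (hα0 : α 0 = 1)
    (hαadd : ∀ v w, α (v + w) = α v * α w)
    (hΛ : IsIrreducibleOn α ⊤) (a : Matrix (Fin N) (Fin N) ℚ)
    (hc : ∀ v, a * toQ (α v) = toQ (α v) * a) (ξ : Fin N → ℚ) (hξ : ξ ≠ 0)
    (h : ξ ᵥ* a = 0) : a = 0 := by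
  have : ∀ j, (fun i => a i j) = 0 := by
    intro j
    refine sp_rat α hα0 hαadd ⊤ hΛ ξ _ hξ ?_
    intro v _
    have h1 : (ξ ᵥ* toQ (α v)) ᵥ* a = 0 := by
      rw [Matrix.vecMul_vecMul, ← hc, ← Matrix.vecMul_vecMul, h, Matrix.zero_vecMul]
    exact congrFun h1 j
  ext i j
  exact congrFun (this j) i

theorem toQ_mul {N : ℕ} (A B : Matrix (Fin N) (Fin N) ℤ) : toQ (A * B) = toQ A * toQ B :=
  Matrix.map_mul (f := Int.castRingHom ℚ)

theorem minpoly_irred {d N : ℕ} [NeZero N] (α : (Fin d → ℤ) → Matrix (Fin N) (Fin N) ℤ) (hα0 : α 0 = 1)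
    (hαadd : ∀ v w, α (v + w) = α v * α w)
    (hΛ : IsIrreducibleOn α ⊤) (v : Fin d → ℤ) : Irreducible (minpoly ℚ (toQ (α v))) := by
  have hint : IsIntegral ℚ (toQ (α v)) := Algebra.IsIntegral.isIntegral _
  have hcomm : ∀ p : Polynomial ℚ, ∀ w, (Polynomial.aeval (toQ (α v)) p) * toQ (α w)
      = toQ (α w) * (Polynomial.aeval (toQ (α v)) p) := by
    intro p w
    have : Commute (toQ (α v)) (toQ (α w)) := by
      show _ * _ = _ * _
      rw [← toQ_mul, ← toQ_mul, ← hαadd, ← hαadd, add_comm]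
    have : Commute (Polynomial.aeval (toQ (α v)) p) (toQ (α w)) := by
      rw [Polynomial.aeval_eq_sum_range]
      exact Commute.sum_left _ _ _ fun i _ => (this.pow_left i).smul_left _
    exact this
  refine (Polynomial.irreducible_of_monic (minpoly.monic hint) (minpoly.ne_one ℚ _)).2 ?_
  intro f g hf hg he
  by_contra! h
  have heval := congr_arg (Polynomial.aeval (toQ (α v))) he
  rw [minpoly.aeval ℚ (toQ (α v)), Polynomial.aeval_mul] at heval
  have hor : Polynomial.aeval (toQ (α v)) f = 0 ∨ Polynomial.aeval (toQ (α v)) g = 0 := by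
    by_contra! hne
    apply hne.2
    obtain ⟨i, hi⟩ : ∃ i, (Polynomial.aeval (toQ (α v)) f) i ≠ 0 := by
      by_contra! hcon; exact hne.1 (funext hcon)
    refine comm_zero α hα0 hαadd hΛ _ (hcomm g) _ hi ?_
    have := congrFun heval i
    rw [Matrix.mul_apply_eq_vecMul] at this
    exact this
  rcases hor with heval | heval
  · exact minpoly.aeval_ne_zero_of_dvdNotUnit_minpoly hint hf ⟨hf.ne_zero, g, fun hu => h.2 (hg.eq_one_of_isUnit hu), he.symm⟩ heval
  · refine minpoly.aeval_ne_zero_of_dvdNotUnit_minpoly hint hg ⟨hg.ne_zero, f, fun hu => h.1 (hf.eq_one_of_isUnit hu), ?_⟩ heval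
    rw [mul_comm, he]

abbrev toR {N : ℕ} (A : Matrix (Fin N) (Fin N) ℤ) : Matrix (Fin N) (Fin N) ℝ :=
  A.map (Int.cast : ℤ → ℝ)

abbrev toC {N : ℕ} (A : Matrix (Fin N) (Fin N) ℤ) : Matrix (Fin N) (Fin N) ℂ :=
  A.map (Int.cast : ℤ → ℂ)

theorem toC_mul {N : ℕ} (A B : Matrix (Fin N) (Fin N) ℤ) : toC (A * B) = toC A * toC B :=
  Matrix.map_mul (f := Int.castRingHom ℂ)

theorem semisimple {d N : ℕ} [NeZero N] (α : (Fin d → ℤ) → Matrix (Fin N) (Fin N) ℤ) (hα0 : α 0 = 1)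
    (hαadd : ∀ v w, α (v + w) = α v * α w)
    (hΛ : IsIrreducibleOn α ⊤) (v : Fin d → ℤ) :
    Module.End.IsSemisimple (Matrix.toLin' (toC (α v))) := by
  have hirr := minpoly_irred α hα0 hαadd hΛ v
  have hsep : (minpoly ℚ (toQ (α v))).Separable := hirr.separable
  have hsq : Squarefree ((minpoly ℚ (toQ (α v))).map (algebraMap ℚ ℂ)) := hsep.map.squarefree
  refine Module.End.isSemisimple_of_squarefree_aeval_eq_zero hsq ?_
  have h1 : Polynomial.aeval (toC (α v)) ((minpoly ℚ (toQ (α v))).map (algebraMap ℚ ℂ)) = 0 := by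
    rw [Polynomial.aeval_map_algebraMap]
    have h2 : toC (α v) = (Algebra.ofId ℚ ℂ).mapMatrix (toQ (α v)) := by
      ext i j; simp [toC, toQ]
    rw [h2, Polynomial.aeval_algHom_apply, minpoly.aeval, map_zero]
  have h3 : Matrix.toLin' (toC (α v)) = Matrix.toLinAlgEquiv' (toC (α v)) := rfl
  rw [h3, Polynomial.aeval_algHom_apply, h1, map_zero]

/-- Joint eigen-data of the action. -/
structure Eig {d N : ℕ} (α : (Fin d → ℤ) → Matrix (Fin N) (Fin N) ℤ) where
  sg : Fin N → (Fin d → ℤ) → ℂ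
  lam : Fin N → ((Fin N → ℝ) →ₗ[ℝ] ℂ)
  eig : ∀ j v w, lam j (toR (α v) *ᵥ w) = sg j v * lam j w
  inj : ∀ w, (∀ j, lam j w = 0) → w = 0
  sg_zero : ∀ j, sg j 0 = 1
  sg_add : ∀ j v w, sg j (v + w) = sg j v * sg j w
  sg_inj : ∀ j v, sg j v = 1 → v = 0

theorem exists_eig {d N : ℕ} [NeZero N] (α : (Fin d → ℤ) → Matrix (Fin N) (Fin N) ℤ) (hα0 : α 0 = 1)
    (hαadd : ∀ v w, α (v + w) = α v * α w) (hfaithful : ∀ v : Fin d → ℤ, v ≠ 0 → α v ≠ 1)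
    (hΛ : IsIrreducibleOn α ⊤) : Nonempty (Eig α) := by
  set f : (Fin d → ℤ) → Module.End ℂ (Fin N → ℂ) := fun v => Matrix.toLin' (toC (α v)) with hf
  have hcomm : ∀ v w, Commute (f v) (f w) := by
    intro v w
    show f v * f w = f w * f v
    simp only [hf, Module.End.mul_eq_comp, ← Matrix.toLin'_mul, ← toC_mul, ← hαadd, add_comm]
  have htop := Module.End.iSup_iInf_maxGenEigenspace_eq_top_of_iSup_maxGenEigenspace_eq_top_of_commute
    f (fun v w _ => hcomm v w) (fun v => Module.End.iSup_maxGenEigenspace_eq_top _)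
  have hss : ∀ v μ, (f v).maxGenEigenspace μ = (f v).eigenspace μ := fun v μ =>
    (semisimple α hα0 hαadd hΛ v).isFinitelySemisimple.maxGenEigenspace_eq_eigenspace μ
  simp only [hss] at htop
  set s : Set (Fin N → ℂ) := {x | ∃ χ : (Fin d → ℤ) → ℂ, ∀ v, f v x = χ v • x} with hs
  have hspan : ⊤ ≤ Submodule.span ℂ s := by
    rw [← htop]
    refine iSup_le fun χ => ?_
    intro x hx
    refine Submodule.subset_span ⟨χ, fun v => ?_⟩
    rw [Submodule.mem_iInf] at hx
    exact Module.End.mem_eigenspace_iff.1 (hx v)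
  let b0 := Module.Basis.ofSpan hspan
  have hb0 : ∀ i, b0 i ∈ s := fun i => Module.Basis.ofSpan_subset hspan ⟨i, rfl⟩
  have := FiniteDimensional.fintypeBasisIndex b0
  have hcard := (Module.finrank_eq_card_basis b0).symm
  rw [Module.finrank_fin_fun] at hcard
  let b := b0.reindex (Fintype.equivFinOfCardEq hcard)
  have hb : ∀ i, b i ∈ s := by
    intro i; simp only [b, Module.Basis.reindex_apply]; exact hb0 _
  choose χ hχ using hb
  have hrep : ∀ j v x, b.repr (f v x) j = χ j v * b.repr x j := by
    intro j v x
    have h1 : (b.coord j) ∘ₗ (f v) = (χ j v) • (b.coord j) := by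
      refine b.ext fun i => ?_
      simp only [LinearMap.comp_apply, hχ, map_smul, LinearMap.smul_apply, Module.Basis.coord_apply,
        Module.Basis.repr_self, smul_eq_mul]
      by_cases hij : i = j
      · subst hij; rfl
      · simp [Finsupp.single_apply, hij]
    have := LinearMap.congr_fun h1 x
    simpa using this
  have hz : ∀ j, χ j 0 = 1 := by
    intro j
    have := hrep j 0 (b j)
    simpa [hf, hα0, toC] using this.symm
  let emb : (Fin N → ℝ) →ₗ[ℝ] (Fin N → ℂ) :=
    LinearMap.pi fun i => Complex.ofRealCLM.toLinearMap ∘ₗ LinearMap.proj i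
  have hemb : ∀ w i, emb w i = (w i : ℂ) := fun w i => rfl
  refine ⟨⟨χ, fun j => (b.coord j).restrictScalars ℝ ∘ₗ emb, ?_, ?_, hz, ?_, ?_⟩⟩
  · intro j v w
    simp only [LinearMap.comp_apply, LinearMap.restrictScalars_apply, Module.Basis.coord_apply]
    rw [← hrep]
    congr 2
    ext i
    simp [hemb, hf, Matrix.mulVec, dotProduct]
  · intro w h
    have : emb w = 0 := by
      apply b.repr.injective
      ext j
      simpa using h j
    ext i
    have := congrFun this i
    rw [hemb] at this
    simpa using this
  · intro j v w
    have h1 := hrep j (v + w) (b j)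
    have h2 : f (v + w) (b j) = f v (f w (b j)) := by
      simp only [hf, hαadd, toC_mul, Matrix.toLin'_mul]; rfl
    rw [h2, hrep, hrep] at h1
    simpa using h1.symm
  · intro j v hv
    by_contra hne
    have hdet : (toC (α v - 1)).det = 0 := by
      refine Matrix.exists_mulVec_eq_zero_iff.1 ⟨b j, b.ne_zero j, ?_⟩
      have h1 := hχ j v
      have h3 : toC (α v - 1) = toC (α v) - 1 := by
        ext i k; simp [toC, Matrix.one_apply]
      rw [h3, Matrix.sub_mulVec, Matrix.one_mulVec, sub_eq_zero]
      rw [hv, one_smul] at h1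
      exact h1
    have hdetZ : (α v - 1).det = 0 := by
      have : ((Int.castRingHom ℂ) (α v - 1).det) = 0 := by
        rw [RingHom.map_det]; exact hdet
      simpa using this
    have hdetQ : (toQ (α v - 1)).det = 0 := by
      have : ((Int.castRingHom ℚ) (α v - 1).det) = (toQ (α v - 1)).det := by
        rw [RingHom.map_det]; rfl
      rw [← this, hdetZ, map_zero]
    obtain ⟨ξ, hξ, hξ2⟩ := Matrix.exists_vecMul_eq_zero_iff.2 hdetQ
    have := comm_zero α hα0 hαadd hΛ (toQ (α v - 1)) (fun w => by
      rw [← toQ_mul, ← toQ_mul, sub_mul, mul_sub, one_mul, mul_one, ← hαadd, ← hαadd, add_comm]) ξ hξ hξ2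
    apply hfaithful v hne
    ext i k
    have := congrFun (congrFun this i) k
    simp only [toQ, Matrix.map_apply, Matrix.sub_apply, Matrix.zero_apply, Int.cast_eq_zero] at this
    linarith

end KS

namespace KS

open Matrix

theorem ch_nat {N : ℕ} (M : Matrix (Fin N) (Fin N) ℚ) (x y : Fin N → ℚ)
    (h : ∀ k : ℕ, k < N → (x ᵥ* M ^ k) ⬝ᵥ y = 0) (k : ℕ) : (x ᵥ* M ^ k) ⬝ᵥ y = 0 := by
  rw [Matrix.pow_eq_aeval_mod_charpoly, Polynomial.aeval_eq_sum_range, Matrix.vecMul_sum,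
    sum_dotProduct]
  refine Finset.sum_eq_zero fun i hi => ?_
  rw [Matrix.vecMul_smul, smul_dotProduct]
  by_cases hiN : i < N
  · rw [h i hiN, smul_zero]
  · have : (Polynomial.X ^ k %ₘ M.charpoly).coeff i = 0 := by
      apply Polynomial.coeff_eq_zero_of_degree_lt
      refine lt_of_lt_of_le (Polynomial.degree_modByMonic_lt _ M.charpoly_monic) ?_
      rw [Matrix.charpoly_degree_eq_dim]
      simp only [Fintype.card_fin, Nat.cast_le]
      omega
    rw [this, zero_smul]

theorem toQ_nsmul {d N : ℕ} (α : (Fin d → ℤ) → Matrix (Fin N) (Fin N) ℤ) (hα0 : α 0 = 1)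
    (hαadd : ∀ v w, α (v + w) = α v * α w) (k : ℕ) (u : Fin d → ℤ) :
    toQ (α (k • u)) = toQ (α u) ^ k := by
  induction k with
  | zero => ext i j; simp [hα0, Matrix.one_apply]
  | succ k ih => rw [succ_nsmul, hαadd, toQ_mul, ih, pow_succ]

theorem ch_int {d N : ℕ} (α : (Fin d → ℤ) → Matrix (Fin N) (Fin N) ℤ) (hα0 : α 0 = 1)
    (hαadd : ∀ v w, α (v + w) = α v * α w) (u b : Fin d → ℤ) (x y : Fin N → ℚ)
    (h : ∀ k : ℕ, k < N → (x ᵥ* toQ (α (b + (k : ℤ) • u))) ⬝ᵥ y = 0) (z : ℤ) :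
    (x ᵥ* toQ (α (b + z • u))) ⬝ᵥ y = 0 := by
  have key : ∀ (b u : Fin d → ℤ), (∀ k : ℕ, k < N → (x ᵥ* toQ (α (b + k • u))) ⬝ᵥ y = 0) →
      ∀ k : ℕ, (x ᵥ* toQ (α (b + k • u))) ⬝ᵥ y = 0 := by
    intro b u h k
    have := ch_nat (toQ (α u)) (x ᵥ* toQ (α b)) y (fun k hk => by
      have := h k hk
      rwa [hαadd, toQ_mul, toQ_nsmul α hα0 hαadd, ← Matrix.vecMul_vecMul] at this) k
    rwa [hαadd, toQ_mul, toQ_nsmul α hα0 hαadd, ← Matrix.vecMul_vecMul]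
  have h1 := key b u (fun k hk => by simpa using h k hk)
  rcases le_total 0 z with hz | hz
  · lift z to ℕ using hz
    simpa using h1 z
  · have h2 := key (b + N • u) (-u) (fun k hk => by
      have := h1 (N - k)
      rw [← this]
      congr 4
      rw [sub_nsmul _ hk.le]; simp [add_assoc])
    obtain ⟨n, rfl⟩ : ∃ n : ℕ, z = -n := ⟨z.natAbs, by omega⟩
    have := h2 (N + n)
    rw [← this]
    congr 4
    rw [add_nsmul]; simp [add_assoc]

theorem new_point {d N : ℕ} (α : (Fin d → ℤ) → Matrix (Fin N) (Fin N) ℤ) (hα0 : α 0 = 1)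
    (hαadd : ∀ v w, α (v + w) = α v * α w)
    (hstrirr : ∀ Λ : AddSubgroup (Fin d → ℤ), Λ.FiniteIndex → IsIrreducibleOn α Λ)
    (ξ : Fin N → ℚ) (hξ : ξ ≠ 0) {κ : Type} [Finite κ] (W : κ → Submodule ℚ (Fin N → ℚ))
    (hW : ∀ k, W k < ⊤) : ∃ m, ∀ k, ξ ᵥ* toQ (α m) ∉ W k := by
  by_contra! hcon
  choose C hC using hcon
  let S : Finset (Fin d → ℤ) := Fintype.piFinset fun _ => (Finset.range N).image (fun k : ℕ => (k : ℤ))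
  obtain ⟨a, ha, b, c, hS⟩ := Combinatorics.exists_mono_homothetic_copy S C
  obtain ⟨f, hf, hker⟩ := Submodule.exists_le_ker_of_lt_top (W c) (hW c)
  let y : Fin N → ℚ := fun i => f (Pi.single i 1)
  have hfy : ∀ x, f x = x ⬝ᵥ y := by
    intro x
    conv_lhs => rw [pi_eq_sum_univ' x, map_sum]
    simp [dotProduct, y]
  have hy : y ≠ 0 := by
    rintro h0
    apply hf
    ext x
    simp [hfy, h0]
  have hbox : ∀ s ∈ S, (ξ ᵥ* toQ (α (a • s + b))) ⬝ᵥ y = 0 := by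
    intro s hs
    rw [← hfy]
    have := hC (a • s + b)
    rw [hS s hs] at this
    exact hker this
  have hall : ∀ D : Finset (Fin d), ∀ s : Fin d → ℤ, (∀ i, i ∉ D → ∃ k : ℕ, k < N ∧ s i = k) →
      (ξ ᵥ* toQ (α (a • s + b))) ⬝ᵥ y = 0 := by
    intro D
    induction D using Finset.induction_on with
    | empty =>
      intro s hs
      refine hbox s ?_
      simp only [S, Fintype.mem_piFinset, Finset.mem_image, Finset.mem_range]
      intro i
      obtain ⟨k, hk, hk2⟩ := hs i (by simp)
      exact ⟨k, hk, hk2.symm⟩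
    | insert i D hi ih =>
      intro s hs
      have hdec : ∀ z : ℤ, a • (Function.update s i z) + b =
          (a • (Function.update s i 0) + b) + z • (a • Pi.single i (1 : ℤ)) := by
        intro z
        ext j
        by_cases hj : j = i
        · subst hj; simp; ring
        · simp [hj]
      have := ch_int α hα0 hαadd (a • Pi.single i (1 : ℤ)) (a • (Function.update s i 0) + b) ξ y
        (fun k hk => by
          rw [← hdec]
          refine ih _ fun j hj => ?_
          by_cases hji : j = i
          · subst hji; exact ⟨k, hk, by simp⟩
          · simp only [Function.update_of_ne hji]
            exact hs j (by simp [hji, hj])) (s i)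
      rw [← hdec, Function.update_eq_self] at this
      exact this
  let Λ : AddSubgroup (Fin d → ℤ) := (zsmulAddGroupHom (a : ℤ) : (Fin d → ℤ) →+ _).range
  have hΛ : Λ.FiniteIndex := by
    have hle : AddSubgroup.pi Set.univ (fun _ : Fin d => AddSubgroup.zmultiples (a : ℤ)) ≤ Λ := by
      intro x hx
      rw [AddSubgroup.mem_pi] at hx
      have : ∀ i, ∃ k : ℤ, k • (a : ℤ) = x i := fun i => AddSubgroup.mem_zmultiples_iff.1 (hx i trivial)
      choose k hk using this
      refine ⟨k, ?_⟩
      ext i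
      rw [← hk i]
      simp [mul_comm]
    have : (AddSubgroup.pi Set.univ (fun _ : Fin d => AddSubgroup.zmultiples (a : ℤ))).FiniteIndex := by
      have h1 : AddSubgroup.pi Set.univ (fun _ : Fin d => AddSubgroup.zmultiples (a : ℤ)) =
        ⨅ i : Fin d, (AddSubgroup.zmultiples (a : ℤ)).comap (Pi.evalAddMonoidHom (fun _ => ℤ) i) := by
        ext x; simp [AddSubgroup.mem_pi, AddSubgroup.mem_iInf]
      have h0 : (AddSubgroup.zmultiples (a : ℤ)).FiniteIndex := by
        constructor; rw [Int.index_zmultiples]; simp; omega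
      rw [h1]
      exact AddSubgroup.finiteIndex_iInf fun i => ⟨by
        rw [AddSubgroup.index_comap_of_surjective _ (Function.surjective_eval i)]
        exact h0.index_ne_zero⟩
    exact AddSubgroup.finiteIndex_of_le hle
  have hy0 := sp_rat α hα0 hαadd Λ (hstrirr Λ hΛ) ξ (toQ (α b) *ᵥ y) hξ (by
    rintro v ⟨s, rfl⟩
    have := hall Finset.univ s (by simp)
    rw [hαadd, toQ_mul, ← Matrix.vecMul_vecMul] at this
    rw [Matrix.dotProduct_mulVec]
    simpa using this)
  apply hy
  have h1 : toQ (α (-b)) *ᵥ (toQ (α b) *ᵥ y) = y := by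
    rw [Matrix.mulVec_mulVec, ← toQ_mul, ← hαadd]
    have : toQ (α (-b + b)) = 1 := by
      rw [neg_add_cancel, hα0]; ext i j; simp [Matrix.one_apply]
    rw [this, Matrix.one_mulVec]
  rw [← h1, hy0, Matrix.mulVec_zero]

theorem gen_pos {d N : ℕ} (α : (Fin d → ℤ) → Matrix (Fin N) (Fin N) ℤ) (hα0 : α 0 = 1)
    (hαadd : ∀ v w, α (v + w) = α v * α w)
    (hstrirr : ∀ Λ : AddSubgroup (Fin d → ℤ), Λ.FiniteIndex → IsIrreducibleOn α Λ)
    (ξ : Fin N → ℚ) (hξ : ξ ≠ 0) (B : ℕ) : ∃ m : ℕ → (Fin d → ℤ), ∀ t : Finset ℕ,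
      t ⊆ Finset.range B → t.card ≤ N → LinearIndepOn ℚ (fun b => ξ ᵥ* toQ (α (m b))) (t : Set ℕ) := by
  classical
  induction B with
  | zero =>
    refine ⟨fun _ => 0, fun t ht _ => ?_⟩
    have : t = ∅ := by simpa using ht
    subst this
    simp
  | succ B ih =>
    obtain ⟨m, hm⟩ := ih
    have hfin : Finite {t : Finset ℕ // t ∈ (Finset.range B).powerset ∧ t.card < N} :=
      Finite.of_injective (fun t => (⟨t.1, t.2.1⟩ : (Finset.range B).powerset))
        (fun a b h => by simpa [Subtype.ext_iff] using h)
    obtain ⟨p, hp⟩ := new_point α hα0 hαadd hstrirr ξ hξ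
      (κ := {t : Finset ℕ // t ∈ (Finset.range B).powerset ∧ t.card < N})
      (fun t => Submodule.span ℚ ((t.1.image (fun b => ξ ᵥ* toQ (α (m b))) : Finset (Fin N → ℚ)) : Set (Fin N → ℚ)))
      (fun t => by
        rw [lt_top_iff_ne_top]
        intro h
        have h1 := finrank_span_finset_le_card (R := ℚ) (t.1.image (fun b => ξ ᵥ* toQ (α (m b))))
        rw [Set.finrank, h, finrank_top, Module.finrank_fin_fun] at h1
        have := t.2.2
        have := Finset.card_image_le (s := t.1) (f := (fun b => ξ ᵥ* toQ (α (m b))))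
        omega)
    refine ⟨Function.update m B p, fun t ht htc => ?_⟩
    have hsame : ∀ s : Finset ℕ, s ⊆ Finset.range B → s.card ≤ N →
        LinearIndepOn ℚ (fun b => ξ ᵥ* toQ (α (Function.update m B p b))) (s : Set ℕ) := by
      intro s hs hsc
      refine (hm s hs hsc).congr fun b hb => ?_
      have : b ≠ B := by
        have := hs hb; simp at this; omega
      simp [this]
    by_cases hB : B ∈ t
    · have hsub : t.erase B ⊆ Finset.range B := by
        intro b hb
        have h1 := Finset.mem_erase.1 hb
        have := Finset.mem_range.1 (ht h1.2)
        simp; omega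
      have hcard := Finset.card_erase_lt_of_mem hB
      have h2 := (hsame (t.erase B) hsub (by omega)).insert (x := B) (by
        have := hp ⟨t.erase B, Finset.mem_powerset.2 hsub, by omega⟩
        simp only [Function.update_self]
        have himg : (fun b => ξ ᵥ* toQ (α (Function.update m B p b))) '' ((t.erase B : Finset ℕ) : Set ℕ) =
            (((t.erase B).image (fun b => ξ ᵥ* toQ (α (m b))) : Finset (Fin N → ℚ)) : Set (Fin N → ℚ)) := by
          rw [Finset.coe_image]
          refine Set.image_congr fun b hb => ?_
          have : b ≠ B := (Finset.mem_erase.1 hb).1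
          simp [this]
        rw [himg]
        exact this)
      rwa [← Finset.coe_insert, Finset.insert_erase hB] at h2
    · refine hsame t (fun b hb => ?_) htc
      have := Finset.mem_range.1 (ht hb)
      have : b ≠ B := by rintro rfl; exact hB hb
      simp; omega

/-- real pairing -/
def pr {N : ℕ} (ξ : Fin N → ℤ) (w : Fin N → ℝ) : ℝ := ∑ i, (ξ i : ℝ) * w i

theorem pr_q {N : ℕ} (ξ : Fin N → ℤ) (A : Matrix (Fin N) (Fin N) ℤ) (u : Fin N → ℝ) :
    pr ξ (toR A *ᵥ u) = ∑ i, (((fun i => (ξ i : ℚ)) ᵥ* toQ A) i : ℝ) * u i := by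
  simp only [pr, Matrix.mulVec, Matrix.vecMul, dotProduct, Finset.mul_sum, Rat.cast_sum,
    Finset.sum_mul]
  rw [Finset.sum_comm]
  simp [mul_assoc]

theorem gen_pos' {d N : ℕ} (hN : 0 < N) (α : (Fin d → ℤ) → Matrix (Fin N) (Fin N) ℤ) (hα0 : α 0 = 1)
    (hαadd : ∀ v w, α (v + w) = α v * α w)
    (hstrirr : ∀ Λ : AddSubgroup (Fin d → ℤ), Λ.FiniteIndex → IsIrreducibleOn α Λ)
    (B : ℕ) : ∃ m : ℕ → (Fin d → ℤ), ∀ ξ : Fin N → ℤ, ξ ≠ 0 → ∃ κ > 0, ∀ u : Fin N → ℝ,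
      ((Finset.range B).filter (fun b => |pr ξ (toR (α (m b)) *ᵥ u)| < κ * ‖u‖)).card < N := by
  classical
  have hirr : IsIrreducibleOn α ⊤ := hstrirr ⊤ inferInstance
  obtain ⟨m, hm⟩ := gen_pos α hα0 hαadd hstrirr (Pi.single ⟨0, hN⟩ 1) (by simp) B
  refine ⟨m, fun ξ hξ => ?_⟩
  set q : Fin N → ℚ := fun i => (ξ i : ℚ) with hq
  have hq0 : q ≠ 0 := by
    rintro h
    apply hξ
    ext i
    have := congrFun h i
    simpa [hq] using this
  -- transfer
  have htr : ∀ t : Finset ℕ, t ⊆ Finset.range B → t.card ≤ N →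
      LinearIndepOn ℚ (fun b => q ᵥ* toQ (α (m b))) (t : Set ℕ) := by
    intro t ht htc
    have h1 := hm t ht htc
    rw [linearIndepOn_finset_iff] at h1 ⊢
    intro g hg
    apply h1
    have h2 := comm_zero α hα0 hαadd hirr (∑ b ∈ t, g b • toQ (α (m b))) (fun v => by
      rw [Finset.sum_mul, Finset.mul_sum]
      refine Finset.sum_congr rfl fun b _ => ?_
      rw [smul_mul_assoc, mul_smul_comm, ← toQ_mul, ← toQ_mul, ← hαadd, ← hαadd, add_comm]) q hq0
      (by
        rw [Matrix.vecMul_sum, ← hg]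
        refine Finset.sum_congr rfl fun b _ => ?_
        rw [Matrix.vecMul_smul])
    have h3 := congrArg (fun M => (Pi.single (⟨0, hN⟩ : Fin N) (1 : ℚ)) ᵥ* M) h2
    simp only [Matrix.vecMul_sum, Matrix.vecMul_smul, Matrix.vecMul_zero] at h3
    exact h3
  have hkt : ∀ t : Finset ℕ, t ∈ (Finset.range B).powersetCard N → ∃ κ > 0, ∀ u : Fin N → ℝ,
      (∀ b ∈ t, |pr ξ (toR (α (m b)) *ᵥ u)| < κ * ‖u‖) → False := by
    intro t ht
    rw [Finset.mem_powersetCard] at ht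
    have hli := htr t ht.1 ht.2.le
    let L : (Fin N → ℝ) →ₗ[ℝ] (t → ℝ) :=
      { toFun := fun u b => pr ξ (toR (α (m b)) *ᵥ u)
        map_add' := by
          intro u v; ext b; simp [pr, Matrix.mulVec_add, mul_add, Finset.sum_add_distrib]
        map_smul' := by
          intro c u; ext b
          simp only [pr, Matrix.mulVec_smul, Pi.smul_apply, smul_eq_mul, RingHom.id_apply, Finset.mul_sum]
          refine Finset.sum_congr rfl fun i _ => ?_
          ring }
    have hL : ∀ u b, L u b = pr ξ (toR (α (m b)) *ᵥ u) := fun u b => rfl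
    have hker : LinearMap.ker L = ⊥ := by
      rw [LinearMap.ker_eq_bot']
      intro u hu
      have hspan := LinearIndependent.span_eq_top_of_card_eq_finrank' (K := ℚ) hli (by
        simp [ht.2])
      ext i
      have hmem : (Pi.single i (1 : ℚ) : Fin N → ℚ) ∈
          Submodule.span ℚ (Set.range fun b : (t : Set ℕ) => q ᵥ* toQ (α (m b))) := by
        rw [hspan]; trivial
      have hall : ∀ x ∈ Submodule.span ℚ (Set.range fun b : (t : Set ℕ) => q ᵥ* toQ (α (m b))),
          ∑ i, ((x i : ℚ) : ℝ) * u i = 0 := by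
        intro x hx
        induction hx using Submodule.span_induction with
        | mem x hx =>
          obtain ⟨b, rfl⟩ := hx
          rw [← pr_q]
          exact congrFun hu b
        | zero => simp
        | add x y _ _ hx hy => simp [add_mul, Finset.sum_add_distrib, hx, hy]
        | smul c x _ hx =>
          have : ∀ i, (((c • x) i : ℚ) : ℝ) * u i = c * ((x i : ℝ) * u i) := by
            intro i; simp [mul_assoc]
          simp_rw [this, ← Finset.mul_sum, hx, mul_zero]
      have := hall _ hmem
      rw [Finset.sum_eq_single i] at this
      · simpa using this
      · intro j _ hj; simp [hj]
      · simp
    obtain ⟨K, hK, hanti⟩ := L.exists_antilipschitzWith hker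
    have hK' : (0 : ℝ) < K := hK
    refine ⟨1 / (2 * K), by positivity, fun u hu => ?_⟩
    have h1 : ‖u‖ ≤ K * ‖L u‖ := by
      have := hanti.le_mul_dist u 0
      simpa using this
    obtain ⟨b, hb⟩ : t.Nonempty := by rw [← Finset.card_pos]; omega
    have hpos : 0 < ‖u‖ := by
      have := (abs_nonneg _).trans_lt (hu b hb)
      exact pos_of_mul_pos_right this (by positivity)
    have h2 : ‖L u‖ ≤ 1 / (2 * K) * ‖u‖ := by
      rw [pi_norm_le_iff_of_nonneg (by positivity)]
      intro b
      rw [Real.norm_eq_abs, hL]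
      exact (hu b b.2).le
    have h3 : K * ‖L u‖ ≤ K * (1 / (2 * K) * ‖u‖) := by gcongr
    have h4 : K * (1 / (2 * K) * ‖u‖) = ‖u‖ / 2 := by field_simp
    linarith
  choose! κ hκ hκ2 using hkt
  obtain ⟨k0, hk0, hk0'⟩ : ∃ k0 > 0, ∀ t ∈ (Finset.range B).powersetCard N, k0 ≤ κ t := by
    by_cases hne : ((Finset.range B).powersetCard N).Nonempty
    · obtain ⟨t0, ht0, hmin⟩ := Finset.exists_min_image _ κ hne
      exact ⟨κ t0, hκ t0 ht0, hmin⟩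
    · exact ⟨1, one_pos, fun t ht => absurd ⟨t, ht⟩ hne⟩
  refine ⟨k0, hk0, fun u => ?_⟩
  by_contra! hcon
  obtain ⟨t, ht, htc⟩ := Finset.exists_subset_card_eq hcon
  have htm : t ∈ (Finset.range B).powersetCard N :=
    Finset.mem_powersetCard.2 ⟨fun b hb => (Finset.mem_filter.1 (ht hb)).1, htc⟩
  refine hκ2 t htm u fun b hb => ?_
  refine (Finset.mem_filter.1 (ht hb)).2.trans_le ?_
  gcongr
  exact hk0' t htm

end KS

namespace KS

open Matrix

theorem fin_min {ι : Type*} [Fintype ι] (f : ι → ℝ) (hf : ∀ i, 0 < f i) : ∃ a > 0, ∀ i, a ≤ f i := by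
  rcases isEmpty_or_nonempty ι with h | h
  · exact ⟨1, one_pos, fun i => h.elim i⟩
  · obtain ⟨i, hi⟩ := Finite.exists_min f
    exact ⟨f i, hf i, hi⟩

theorem fin_max {ι : Type*} [Finite ι] (f : ι → ℝ) : ∃ a > 0, ∀ i, f i ≤ a := by
  rcases isEmpty_or_nonempty ι with h | h
  · exact ⟨1, one_pos, fun i => h.elim i⟩
  · obtain ⟨i, hi⟩ := Finite.exists_max f
    exact ⟨max (f i) 1, by positivity, fun j => (hi j).trans (le_max_left _ _)⟩

theorem hom_zsmul {d : ℕ} (s : (Fin d → ℤ) → ℂ) (h0 : s 0 = 1) (hadd : ∀ v w, s (v + w) = s v * s w)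
    (k : ℤ) (v : Fin d → ℤ) (z : ℂ) (hz : Complex.exp z = s v) : s (k • v) = Complex.exp (k * z) := by
  have hn : ∀ n : ℕ, s (n • v) = Complex.exp (n * z) := by
    intro n
    induction n with
    | zero => simp [h0]
    | succ n ih => rw [succ_nsmul, hadd, ih, ← hz, ← Complex.exp_add]; congr 1; push_cast; ring
  obtain ⟨n, rfl | rfl⟩ := k.eq_nat_or_neg
  · simpa using hn n
  · have h1 : s (-(n : ℤ) • v) * s (n • v) = 1 := by
      rw [← hadd, ← h0]; congr 1; simp
    rw [hn] at h1
    have h2 : Complex.exp ((-(n : ℤ) : ℤ) * z) * Complex.exp (n * z) = 1 := by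
      rw [← Complex.exp_add, ← Complex.exp_zero]; congr 1; push_cast; ring
    exact mul_right_cancel₀ (Complex.exp_ne_zero _) (h1.trans h2.symm)

theorem hom_sum {d : ℕ} (s : (Fin d → ℤ) → ℂ) (h0 : s 0 = 1) (hadd : ∀ v w, s (v + w) = s v * s w)
    {κ : Type*} (b : Finset κ) (k : κ → ℤ) (v : κ → Fin d → ℤ) (z : κ → ℂ)
    (hz : ∀ i ∈ b, Complex.exp (z i) = s (v i)) :
    s (∑ i ∈ b, k i • v i) = Complex.exp (∑ i ∈ b, k i * z i) := by
  classical
  induction b using Finset.induction_on with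
  | empty => simp [h0]
  | insert i b hi ih =>
    rw [Finset.sum_insert hi, Finset.sum_insert hi, hadd, Complex.exp_add,
      ih (fun j hj => hz j (Finset.mem_insert_of_mem hj)),
      hom_zsmul s h0 hadd _ _ _ (hz i (Finset.mem_insert_self _ _))]

theorem exp_bounds {z : ℂ} (hz : ‖z‖ ≤ 1 / 2) :
    ‖z‖ / 2 ≤ ‖Complex.exp z - 1‖ ∧ ‖Complex.exp z - 1‖ ≤ 2 * ‖z‖ := by
  have h := Complex.norm_exp_sub_one_sub_id_le (x := z) (by linarith)
  have h1 : ‖z‖ ^ 2 ≤ ‖z‖ / 2 := by nlinarith [norm_nonneg z]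
  have h2 := norm_sub_norm_le z (z - (Complex.exp z - 1))
  have h3 : ‖z - (Complex.exp z - 1)‖ = ‖Complex.exp z - 1 - z‖ := norm_sub_rev _ _
  have h4 : z - (z - (Complex.exp z - 1)) = Complex.exp z - 1 := by ring
  have h5 := norm_sub_norm_le (Complex.exp z - 1) (Complex.exp z - 1 - z)
  have h6 : (Complex.exp z - 1) - (Complex.exp z - 1 - z) = z := by ring
  have h7 := norm_add_le (Complex.exp z - 1 - z) z
  have h8 : (Complex.exp z - 1 - z) + z = Complex.exp z - 1 := by ring
  rw [h4, h3] at h2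
  rw [h8] at h7
  constructor <;> linarith [norm_nonneg z]

theorem dir {d : ℕ} {ι : Type} [Fintype ι] (s : ι → (Fin d → ℤ) → ℂ) (h0 : ∀ j, s j 0 = 1)
    (hadd : ∀ j v w, s j (v + w) = s j v * s j w)
    (hnear : ∀ ε > 0, ∃ m, ∀ j, ‖s j m - 1‖ < ε ∧ s j m ≠ 1) :
    ∃ ρ > 0, ∀ δ > 0, ∃ m, ∃ τ > 0, τ < δ ∧ ∀ j, ρ * τ ≤ ‖s j m - 1‖ ∧ ‖s j m - 1‖ ≤ τ := by
  classical
  let L : ℕ → Set (ι → ℂ) := fun n => {z | ‖z‖ < 1 / ((n : ℝ) + 1) ∧ ∃ m, ∀ j, Complex.exp (z j) = s j m}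
  let W : ℕ → Submodule ℝ (ι → ℂ) := fun n => Submodule.span ℝ (L n)
  have hWanti : ∀ n n', n ≤ n' → W n' ≤ W n := by
    intro n n' hn
    refine Submodule.span_mono fun z hz => ⟨hz.1.trans_le ?_, hz.2⟩
    gcongr
  obtain ⟨n0, hn0⟩ : ∃ n0, ∀ n, Module.finrank ℝ (W n0) ≤ Module.finrank ℝ (W n) := by
    obtain ⟨n0, h⟩ := exists_minimal_of_wellFoundedLT (P := fun k => ∃ n, Module.finrank ℝ (W n) = k) ⟨_, 0, rfl⟩
    obtain ⟨n1, rfl⟩ := h.1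
    refine ⟨n1, fun n => ?_⟩
    rcases le_total (Module.finrank ℝ (W n1)) (Module.finrank ℝ (W n)) with h' | h'
    · exact h'
    · exact h.2 ⟨n, rfl⟩ h'
  have hWeq : ∀ n, n0 ≤ n → W n = W n0 := fun n hn =>
    Submodule.eq_of_le_of_finrank_le (hWanti _ _ hn) (hn0 n)
  -- the base logarithm
  obtain ⟨z0, hz0L, hz0⟩ : ∃ z0 : ι → ℂ, z0 ∈ L n0 ∧ ∀ j, z0 j ≠ 0 := by
    have hc : Filter.Tendsto Complex.log (nhds 1) (nhds 0) := by
      have := (continuousAt_clog (x := 1) (by simp [Complex.slitPlane])).tendsto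
      simpa using this
    have hpos : (0 : ℝ) < 1 / ((n0 : ℝ) + 1) := by positivity
    obtain ⟨ε, hε, hlog⟩ := Metric.tendsto_nhds_nhds.1 hc _ hpos
    obtain ⟨m, hm⟩ := hnear (min ε 1) (by positivity)
    have hne : ∀ j, s j m ≠ 0 := by
      intro j h
      have := (hm j).1.trans_le (min_le_right _ _)
      rw [h] at this
      simp at this
    refine ⟨fun j => Complex.log (s j m), ⟨?_, m, fun j => Complex.exp_log (hne j)⟩, ?_⟩
    · rw [pi_norm_lt_iff hpos]
      intro j
      have := hlog (x := s j m) (by rw [dist_eq_norm]; exact (hm j).1.trans_le (min_le_left _ _))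
      simpa using this
    · intro j h
      apply (hm j).2
      simp only at h
      rw [← Complex.exp_log (hne j), h, Complex.exp_zero]
  obtain ⟨a, ha, haz⟩ := fin_min (fun j => ‖z0 j‖) (fun j => norm_pos_iff.2 (hz0 j))
  set b := ‖z0‖ + a with hb
  have hb0 : 0 < b := by positivity
  refine ⟨3 * a / (16 * b), by positivity, fun δ hδ => ?_⟩
  obtain ⟨t, ht, ht1, ht2⟩ : ∃ t > 0, 2 * (t * b) < δ ∧ t * b ≤ 1 / 2 := by
    refine ⟨min (δ / (4 * b)) (1 / (2 * b)), by positivity, ?_, ?_⟩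
    · have : min (δ / (4 * b)) (1 / (2 * b)) * b ≤ δ / (4 * b) * b := by gcongr; exact min_le_left _ _
      have h2 : δ / (4 * b) * b = δ / 4 := by field_simp
      linarith
    · have : min (δ / (4 * b)) (1 / (2 * b)) * b ≤ 1 / (2 * b) * b := by gcongr; exact min_le_right _ _
      have h2 : 1 / (2 * b) * b = 1 / 2 := by field_simp
      linarith
  set D := Module.finrank ℝ (ι → ℂ) with hD
  obtain ⟨n1, hn1⟩ := exists_nat_gt (4 * D / (t * a))
  set n := max n0 n1 with hn
  have hnb : (D : ℝ) * (1 / ((n : ℝ) + 1)) ≤ t * a / 4 := by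
    have h1 : (n1 : ℝ) ≤ n := by exact_mod_cast le_max_right n0 n1
    have h2 : 4 * D / (t * a) < (n : ℝ) + 1 := by linarith
    rw [div_lt_iff₀ (by positivity)] at h2
    rw [mul_one_div, div_le_div_iff₀ (by positivity) (by positivity)]
    linarith
  have hmem : z0 ∈ W n := by
    rw [hWeq n (le_max_left _ _)]; exact Submodule.subset_span hz0L
  obtain ⟨T, hTL, hTspan, hTli⟩ := exists_linearIndependent ℝ (L n)
  have hTfin : T.Finite := LinearIndependent.setFinite hTli
  obtain ⟨T, rfl⟩ := hTfin.exists_finset_coe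
  have hTcard : T.card ≤ D := by
    have := hTli.fintype_card_le_finrank
    simpa using this
  have hmem2 : z0 ∈ Submodule.span ℝ (T : Set (ι → ℂ)) := by rw [hTspan]; exact hmem
  obtain ⟨c, -, hc⟩ := Submodule.mem_span_finset.1 hmem2
  have hLm : ∀ x ∈ T, ∃ m, ∀ j, Complex.exp (x j) = s j m := fun x hx => (hTL hx).2
  choose! mm hmm using hLm
  let ζ : ι → ℂ := fun j => ∑ x ∈ T, ((⌊t * c x⌋ : ℤ) : ℂ) * x j
  have hexp : ∀ j, s j (∑ x ∈ T, ⌊t * c x⌋ • mm x) = Complex.exp (ζ j) := fun j =>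
    hom_sum (s j) (h0 j) (hadd j) T _ mm (fun x => x j) (fun x hx => hmm x hx j)
  have hclose : ∀ j, ‖ζ j - t * z0 j‖ ≤ t * a / 4 := by
    intro j
    refine le_trans ?_ hnb
    have h1 : ζ j - t * z0 j = ∑ x ∈ T, (((⌊t * c x⌋ : ℤ) : ℂ) - t * c x) * x j := by
      rw [← hc]
      simp only [ζ, Finset.sum_apply, Pi.smul_apply, Complex.real_smul, Finset.mul_sum,
        ← Finset.sum_sub_distrib]
      refine Finset.sum_congr rfl fun x _ => ?_
      ring
    rw [h1]
    refine (norm_sum_le _ _).trans ?_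
    calc ∑ x ∈ T, ‖(((⌊t * c x⌋ : ℤ) : ℂ) - t * c x) * x j‖ ≤ ∑ x ∈ T, 1 / ((n : ℝ) + 1) := by
          refine Finset.sum_le_sum fun x hx => ?_
          rw [norm_mul]
          have h2 : ‖(((⌊t * c x⌋ : ℤ) : ℂ) - t * c x)‖ ≤ 1 := by
            have : (((⌊t * c x⌋ : ℤ) : ℂ) - t * c x) = ((((⌊t * c x⌋ : ℤ) : ℝ) - t * c x : ℝ) : ℂ) := by
              push_cast; rfl
            rw [this, Complex.norm_real, Real.norm_eq_abs, abs_le]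
            constructor <;> linarith [Int.floor_le (t * c x), Int.lt_floor_add_one (t * c x)]
          have h3 : ‖x j‖ ≤ 1 / ((n : ℝ) + 1) := (norm_le_pi_norm x j).trans (hTL hx).1.le
          calc _ ≤ 1 * (1 / ((n : ℝ) + 1)) := by gcongr
            _ = _ := one_mul _
      _ = T.card * (1 / ((n : ℝ) + 1)) := by rw [Finset.sum_const, nsmul_eq_mul]
      _ ≤ _ := by gcongr
  have hlow : ∀ j, 3 * (t * a) / 4 ≤ ‖ζ j‖ ∧ ‖ζ j‖ ≤ t * b := by
    intro j
    have h1 := hclose j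
    have h2 : ‖(t : ℂ) * z0 j‖ = t * ‖z0 j‖ := by
      rw [norm_mul, Complex.norm_real, Real.norm_eq_abs, abs_of_pos ht]
    have h3 := norm_sub_norm_le ((t : ℂ) * z0 j) ((t : ℂ) * z0 j - ζ j)
    have h4 : (t : ℂ) * z0 j - ((t : ℂ) * z0 j - ζ j) = ζ j := by ring
    rw [h4, norm_sub_rev, h2] at h3
    have h5 : t * a ≤ t * ‖z0 j‖ := by gcongr; exact haz j
    have h6 := norm_add_le (ζ j - t * z0 j) (t * z0 j)
    have h7 : t * ‖z0 j‖ ≤ t * ‖z0‖ := by gcongr; exact norm_le_pi_norm z0 j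
    rw [sub_add_cancel, h2] at h6
    constructor
    · linarith
    · rw [hb, mul_add]; nlinarith
  refine ⟨∑ x ∈ T, ⌊t * c x⌋ • mm x, 2 * (t * b), by positivity, ht1, fun j => ?_⟩
  rw [hexp j]
  obtain ⟨h1, h2⟩ := hlow j
  obtain ⟨h3, h4⟩ := exp_bounds (z := ζ j) (by linarith)
  constructor
  · have : 3 * a / (16 * b) * (2 * (t * b)) = 3 * (t * a) / 8 := by field_simp; norm_num
    rw [this]; linarith
  · linarith

end KS

namespace KS

open Matrix

variable {d N : ℕ} {α : (Fin d → ℤ) → Matrix (Fin N) (Fin N) ℤ}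

theorem Eig.sg_ne (E : Eig α) (j : Fin N) (v : Fin d → ℤ) : E.sg j v ≠ 0 := by
  intro h
  have := E.sg_add j v (-v)
  rw [h, add_neg_cancel, E.sg_zero, zero_mul] at this
  exact one_ne_zero this

noncomputable def Eig.xv (E : Eig α) (j : Fin N) : EuclideanSpace ℝ (Fin d) :=
  WithLp.toLp 2 fun i => Real.log ‖E.sg j (Pi.single i 1)‖

noncomputable def Eig.chi (E : Eig α) (j : Fin N) (v : Fin d → ℤ) : ℝ := ∑ i, E.xv j i * v i

theorem Eig.norm_sg (E : Eig α) (j : Fin N) (v : Fin d → ℤ) :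
    ‖E.sg j v‖ = Real.exp (E.chi j v) := by
  let φ : (Fin d → ℤ) →+ ℝ :=
    { toFun := fun v => Real.log ‖E.sg j v‖
      map_zero' := by simp [E.sg_zero]
      map_add' := by
        intro v w
        rw [E.sg_add, norm_mul, Real.log_mul (norm_ne_zero_iff.2 (E.sg_ne j v))
          (norm_ne_zero_iff.2 (E.sg_ne j w))] }
  have h1 : φ v = E.chi j v := by
    have hv : v = ∑ i, v i • (Pi.single i (1 : ℤ) : Fin d → ℤ) := by
      ext k
      simp [Finset.sum_apply, Pi.single_apply]
    conv_lhs => rw [hv]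
    rw [map_sum]
    refine Finset.sum_congr rfl fun i _ => ?_
    rw [map_zsmul, zsmul_eq_mul, mul_comm]
    rfl
  rw [← h1]
  exact (Real.exp_log (norm_pos_iff.2 (E.sg_ne j v))).symm

theorem Eig.chi_add (E : Eig α) (j : Fin N) (v w : Fin d → ℤ) :
    E.chi j (v + w) = E.chi j v + E.chi j w := by
  simp [Eig.chi, mul_add, Finset.sum_add_distrib]

noncomputable def Eig.cls (E : Eig α) (r : Fin N) : Finset (Fin N) := by
  classical
  exact Finset.univ.filter fun j => E.xv j ≠ 0 ∧ E.xv r ≠ 0 ∧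
    inner ℝ (E.xv j) (E.xv r) = ‖E.xv j‖ * ‖E.xv r‖

theorem Eig.mem_cls (E : Eig α) (r j : Fin N) : j ∈ E.cls r ↔ E.xv j ≠ 0 ∧ E.xv r ≠ 0 ∧
    inner ℝ (E.xv j) (E.xv r) = ‖E.xv j‖ * ‖E.xv r‖ := by
  simp [Eig.cls]

theorem Eig.self_mem_cls (E : Eig α) (r : Fin N) (h : E.xv r ≠ 0) : r ∈ E.cls r := by
  rw [E.mem_cls]
  exact ⟨h, h, by rw [real_inner_self_eq_norm_sq, sq]⟩

theorem Eig.chi_cls (E : Eig α) (r j : Fin N) (hj : j ∈ E.cls r) (v : Fin d → ℤ) :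
    ‖E.xv r‖ * E.chi j v = ‖E.xv j‖ * E.chi r v := by
  rw [E.mem_cls] at hj
  have h := inner_eq_norm_mul_iff_real.1 hj.2.2
  simp only [Eig.chi, Finset.mul_sum]
  refine Finset.sum_congr rfl fun i _ => ?_
  have := congrFun (congrArg (fun x : EuclideanSpace ℝ (Fin d) => x.ofLp) h) i
  simp at this
  rw [← mul_assoc, this, mul_assoc]

theorem Eig.chi_abs_le (E : Eig α) (j : Fin N) (v : Fin d → ℤ) :
    E.chi j v ≤ ‖E.xv j‖ * ‖(WithLp.toLp 2 (fun i => (v i : ℝ)) : EuclideanSpace ℝ (Fin d))‖ := by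
  refine le_trans (le_of_eq ?_) (real_inner_le_norm _ _)
  simp [Eig.chi, PiLp.inner_apply, mul_comm]

theorem Eig.round (E : Eig α) : ∃ C > 0, ∀ r, E.xv r ≠ 0 → ∀ s : ℝ, ∃ m, ∀ j,
    |E.chi j m - s * (inner ℝ (E.xv j) (E.xv r) / ‖E.xv r‖)| ≤ C := by
  obtain ⟨C, hC, hC2⟩ := fin_max (fun j => ∑ i, |E.xv j i|)
  refine ⟨C, hC, fun r hr s => ⟨fun i => ⌊s * (E.xv r i / ‖E.xv r‖)⌋, fun j => ?_⟩⟩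
  refine le_trans ?_ (hC2 j)
  have h1 : E.chi j (fun i => ⌊s * (E.xv r i / ‖E.xv r‖)⌋) - s * (inner ℝ (E.xv j) (E.xv r) / ‖E.xv r‖)
      = ∑ i, E.xv j i * ((⌊s * (E.xv r i / ‖E.xv r‖)⌋ : ℝ) - s * (E.xv r i / ‖E.xv r‖)) := by
    simp only [Eig.chi, PiLp.inner_apply, mul_sub, Finset.sum_sub_distrib, Finset.sum_div, Finset.mul_sum]
    congr 1
    refine Finset.sum_congr rfl fun i _ => ?_
    simp
    ring
  rw [h1]
  refine (Finset.abs_sum_le_sum_abs _ _).trans (Finset.sum_le_sum fun i _ => ?_)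
  rw [abs_mul]
  refine mul_le_of_le_one_right (abs_nonneg _) ?_
  rw [abs_le]
  constructor <;> linarith [Int.floor_le (s * (E.xv r i / ‖E.xv r‖)), Int.lt_floor_add_one (s * (E.xv r i / ‖E.xv r‖))]

theorem seq_exists (hd : 1 < d) (x : Fin d → ℝ) : ∃ B : ℝ, ∃ m : ℕ → Fin d → ℤ, Function.Injective m ∧
    ∀ k, |∑ i, x i * m k i| ≤ B := by
  classical
  let i0 : Fin d := ⟨0, by omega⟩
  let i1 : Fin d := ⟨1, hd⟩
  have h01 : i0 ≠ i1 := by simp [i0, i1]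
  by_cases hx : x i1 = 0
  · refine ⟨0, fun k => Pi.single i1 (k : ℤ), ?_, fun k => ?_⟩
    · intro a b h
      simpa using h
    · rw [Finset.sum_eq_single i1] <;> simp +contextual [hx]
  · let l : ℕ → ℤ := fun k => ⌊-(k * x i0) / x i1⌋
    refine ⟨|x i1|, fun k => Pi.single i0 (k : ℤ) + Pi.single i1 (l k), ?_, fun k => ?_⟩
    · intro a b h
      have := congrFun h i0
      simpa [h01] using this
    · have : ∑ i, x i * ((Pi.single i0 (k : ℤ) + Pi.single i1 (l k) : Fin d → ℤ) i : ℤ) =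
          x i1 * (l k - (-(k * x i0) / x i1)) := by
        have h2 : ∀ i, x i * (((Pi.single i0 (k : ℤ) + Pi.single i1 (l k) : Fin d → ℤ) i : ℤ) : ℝ) =
            (if i = i0 then x i * k else 0) + (if i = i1 then x i * l k else 0) := by
          intro i
          simp only [Pi.add_apply, Pi.single_apply]
          rw [Int.cast_add, mul_add]
          congr 1 <;> split_ifs <;> simp
        rw [Finset.sum_congr rfl fun i _ => h2 i, Finset.sum_add_distrib, Finset.sum_ite_eq', Finset.sum_ite_eq']
        simp only [Finset.mem_univ, if_true]
        field_simp
        ring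
      rw [this, abs_mul]
      refine mul_le_of_le_one_right (abs_nonneg _) ?_
      rw [abs_le]
      constructor <;> linarith [Int.floor_le (-(k * x i0) / x i1), Int.lt_floor_add_one (-(k * x i0) / x i1)]

theorem Eig.near (E : Eig α) (hd : 1 < d) (r : Fin N) (ε : ℝ) (hε : 0 < ε) :
    ∃ m, ∀ j : E.cls r, ‖E.sg j m - 1‖ < ε ∧ E.sg j m ≠ 1 := by
  by_cases hr : E.xv r = 0
  · exact ⟨0, fun ⟨j, hj⟩ => absurd hr ((E.mem_cls r j).1 hj).2.1⟩
  obtain ⟨B, m, hm, hB⟩ := seq_exists hd (E.xv r)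
  have hB' : ∀ k, |E.chi r (m k)| ≤ B := hB
  have hB0 : 0 ≤ B := (abs_nonneg _).trans (hB' 0)
  obtain ⟨C, hC, hC2⟩ := fin_max (fun j => ‖E.xv j‖ / ‖E.xv r‖ * B)
  have hrn : 0 < ‖E.xv r‖ := norm_pos_iff.2 hr
  have hbd : ∀ (j : E.cls r) k, |E.chi j (m k)| ≤ C := by
    intro j k
    have h1 := E.chi_cls r j j.2 (m k)
    have h2 : E.chi j (m k) = ‖E.xv j‖ / ‖E.xv r‖ * E.chi r (m k) := by
      field_simp; linarith
    rw [h2, abs_mul, abs_of_nonneg (by positivity)]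
    refine le_trans ?_ (hC2 j)
    gcongr
    exact hB' k
  obtain ⟨a, -, φ, hφ, hlim⟩ := tendsto_subseq_of_bounded
    (s := Metric.closedBall (0 : E.cls r → ℂ) (Real.exp C)) Metric.isBounded_closedBall
    (x := fun k j => E.sg j (m k)) (fun k => by
      rw [mem_closedBall_zero_iff, pi_norm_le_iff_of_nonneg (Real.exp_pos _).le]
      intro j
      rw [E.norm_sg]
      exact Real.exp_le_exp.2 (le_of_abs_le (hbd j k)))
  have hcau := hlim.cauchySeq
  rw [Metric.cauchySeq_iff] at hcau
  obtain ⟨k0, hk0⟩ := hcau (ε * Real.exp (-C)) (by positivity)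
  have hdist := hk0 k0 le_rfl (k0 + 1) (by omega)
  set p := φ k0
  set q := φ (k0 + 1)
  have hpq : p ≠ q := (hφ (Nat.lt_succ_self k0)).ne
  refine ⟨m p - m q, fun j => ⟨?_, fun h => ?_⟩⟩
  · have h1 : E.sg j (m p) = E.sg j (m p - m q) * E.sg j (m q) := by
      rw [← E.sg_add, sub_add_cancel]
    have h2 : ‖E.sg j (m p) - E.sg j (m q)‖ < ε * Real.exp (-C) := by
      rw [dist_pi_lt_iff (by positivity)] at hdist
      have := hdist j
      rwa [dist_eq_norm] at this
    have h3 : E.sg j (m p) - E.sg j (m q) = (E.sg j (m p - m q) - 1) * E.sg j (m q) := by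
      rw [h1]; ring
    rw [h3, norm_mul, E.norm_sg j (m q)] at h2
    have h4 : Real.exp (-C) ≤ Real.exp (E.chi j (m q)) :=
      Real.exp_le_exp.2 (neg_le_of_abs_le (hbd j q))
    have h5 : ‖E.sg j (m p - m q) - 1‖ * Real.exp (-C) < ε * Real.exp (-C) :=
      lt_of_le_of_lt (by gcongr) h2
    exact lt_of_mul_lt_mul_right h5 (Real.exp_pos _).le
  · have := E.sg_inj j _ h
    exact hpq (hm (sub_eq_zero.1 this))

theorem Eig.dir (E : Eig α) (hd : 1 < d) (r : Fin N) :
    ∃ ρ > 0, ∀ δ > 0, ∃ m, ∃ τ > 0, τ < δ ∧ ∀ j ∈ E.cls r,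
      ρ * τ ≤ ‖E.sg j m - 1‖ ∧ ‖E.sg j m - 1‖ ≤ τ := by
  obtain ⟨ρ, hρ, h⟩ := KS.dir (fun j : E.cls r => E.sg j) (fun j => E.sg_zero j)
    (fun j => E.sg_add j) (fun ε hε => E.near hd r ε hε)
  refine ⟨ρ, hρ, fun δ hδ => ?_⟩
  obtain ⟨m, τ, h1, h2, h3⟩ := h δ hδ
  exact ⟨m, τ, h1, h2, fun j hj => h3 ⟨j, hj⟩⟩

/-- norm comparison -/
theorem Eig.norm_le (E : Eig α) : ∃ C > 0, ∀ w : Fin N → ℝ, ∀ t : ℝ, 0 ≤ t → (∀ j, ‖E.lam j w‖ ≤ t) →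
    ‖w‖ ≤ C * t := by
  let L : (Fin N → ℝ) →ₗ[ℝ] (Fin N → ℂ) := LinearMap.pi E.lam
  have hker : LinearMap.ker L = ⊥ := by
    rw [LinearMap.ker_eq_bot']
    intro w hw
    exact E.inj w fun j => congrFun hw j
  obtain ⟨K, hK, hanti⟩ := L.exists_antilipschitzWith hker
  refine ⟨K, hK, fun w t ht h => ?_⟩
  have h1 : ‖w‖ ≤ K * ‖L w‖ := by simpa using hanti.le_mul_dist w 0
  refine h1.trans ?_
  gcongr
  rw [pi_norm_le_iff_of_nonneg ht]
  exact h

theorem Eig.lam_le (E : Eig α) : ∃ C > 0, ∀ w : Fin N → ℝ, ∀ j, ‖E.lam j w‖ ≤ C * ‖w‖ := by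
  have : ∀ j, ∃ C : ℝ, ∀ w, ‖E.lam j w‖ ≤ C * ‖w‖ := fun j =>
    ⟨‖LinearMap.toContinuousLinearMap (E.lam j)‖, fun w => (LinearMap.toContinuousLinearMap (E.lam j)).le_opNorm w⟩
  choose C hC using this
  obtain ⟨M, hM, hM2⟩ := fin_max C
  refine ⟨M, hM, fun w j => (hC j w).trans ?_⟩
  gcongr
  exact hM2 j

end KS

namespace KS

open Matrix

variable {d N : ℕ} {α : (Fin d → ℤ) → Matrix (Fin N) (Fin N) ℤ}

noncomputable def ee (t : ℝ) : ℂ := Complex.exp (Complex.I * ((2 * Real.pi * t : ℝ) : ℂ))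

theorem ee_add (s t : ℝ) : ee (s + t) = ee s * ee t := by
  unfold ee
  rw [← Complex.exp_add]
  congr 1
  push_cast
  ring

theorem ee_zero : ee 0 = 1 := by simp [ee]

theorem norm_ee (t : ℝ) : ‖ee t‖ = 1 := by
  unfold ee
  rw [mul_comm]
  exact Complex.norm_exp_ofReal_mul_I _

theorem ee_nat (t : ℝ) (k : ℕ) : ee (k * t) = ee t ^ k := by
  unfold ee
  rw [← Complex.exp_nat_mul]
  congr 1
  push_cast
  ring

theorem ee_lip (s t : ℝ) : ‖ee s - ee t‖ ≤ 2 * Real.pi * |s - t| := by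
  have h : ee s - ee t = ee t * (ee (s - t) - 1) := by
    rw [mul_sub, ← ee_add]; simp
  rw [h, norm_mul, norm_ee, one_mul]
  unfold ee
  refine (Real.norm_exp_I_mul_ofReal_sub_one_le).trans ?_
  rw [Real.norm_eq_abs, abs_mul, abs_of_pos Real.two_pi_pos]

theorem ee_low (t : ℝ) (ht : |t| ≤ 1 / 2) : 4 * |t| ≤ ‖ee t - 1‖ := by
  unfold ee
  rw [Complex.norm_exp_I_mul_ofReal_sub_one]
  have hpi := Real.pi_pos
  have e : 2 * Real.pi * t / 2 = Real.pi * t := by ring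
  rw [e, norm_mul, Real.norm_eq_abs, Real.norm_eq_abs, abs_of_pos (by norm_num : (0:ℝ) < 2)]
  have h1 : |Real.sin (Real.pi * t)| = |Real.sin (Real.pi * |t|)| := by
    rcases abs_cases t with ⟨h, _⟩ | ⟨h, _⟩ <;> rw [h]
    rw [mul_neg, Real.sin_neg, abs_neg]
  have h2 := Real.mul_le_sin (x := Real.pi * |t|) (by positivity) (by nlinarith)
  have h3 : 2 / Real.pi * (Real.pi * |t|) = 2 * |t| := by field_simp
  rw [h1]
  have := le_abs_self (Real.sin (Real.pi * |t|))
  linarith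

theorem geom_ee (b : ℝ) (hb : |b| ≤ 1 / 2) (hb0 : b ≠ 0) (J : ℕ) :
    ‖∑ k ∈ Finset.range J, ee (k * b)‖ ≤ 1 / (2 * |b|) := by
  have hp : 0 < |b| := abs_pos.2 hb0
  have hl := ee_low b hb
  have hne : ee b ≠ 1 := by
    intro h
    rw [h] at hl
    simp at hl
    exact absurd hl (by simpa using hb0)
  simp_rw [ee_nat]
  rw [geom_sum_eq hne, norm_div]
  have h2 : ‖ee b ^ J - 1‖ ≤ 2 := by
    refine (norm_sub_le _ _).trans ?_
    rw [norm_pow, norm_ee]; norm_num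
  rw [div_le_div_iff₀ (by linarith) (by positivity)]
  nlinarith

theorem pow_err (z : ℂ) (τ : ℝ) (k : ℕ) (hz : ‖z - 1‖ ≤ τ) (hk : k * τ ≤ 1) :
    ‖z ^ k - 1 - k * (z - 1)‖ ≤ (k * τ) ^ 2 := by
  have hτ : 0 ≤ τ := (norm_nonneg _).trans hz
  have key : ∀ k : ℕ, ‖z ^ k - 1 - k * (z - 1)‖ ≤ (1 + τ) ^ k - 1 - k * τ ∧
      ‖z ^ k - 1‖ ≤ (1 + τ) ^ k - 1 := by
    intro k
    induction k with
    | zero => simp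
    | succ k ih =>
      constructor
      · have e : z ^ (k + 1) - 1 - (k + 1 : ℕ) * (z - 1) =
            (z ^ k - 1 - k * (z - 1)) + (z ^ k - 1) * (z - 1) := by push_cast; ring
        rw [e]
        refine (norm_add_le _ _).trans ?_
        rw [norm_mul]
        have := mul_le_mul ih.2 hz (norm_nonneg _) ((norm_nonneg _).trans ih.2)
        push_cast
        rw [pow_succ]
        nlinarith [ih.1]
      · have e : z ^ (k + 1) - 1 = (z ^ k - 1) + (z ^ k - 1) * (z - 1) + (z - 1) := by ring
        rw [e]
        refine (norm_add₃_le).trans ?_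
        rw [norm_mul]
        have := mul_le_mul ih.2 hz (norm_nonneg _) ((norm_nonneg _).trans ih.2)
        rw [pow_succ]
        nlinarith [ih.2]
  refine (key k).1.trans ?_
  have h1 : (1 + τ) ^ k ≤ Real.exp (k * τ) := by
    rw [Real.exp_nat_mul]
    exact pow_le_pow_left₀ (by linarith) (by linarith [Real.add_one_le_exp τ]) _
  have h2 := Real.abs_exp_sub_one_sub_id_le (x := k * τ) (by
    rw [abs_of_nonneg (by positivity)]; exact hk)
  have := le_abs_self (Real.exp (k * τ) - 1 - k * τ)
  linarith

theorem pr_add (ξ : Fin N → ℤ) (u w : Fin N → ℝ) : pr ξ (u + w) = pr ξ u + pr ξ w := by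
  unfold pr
  rw [← Finset.sum_add_distrib]
  exact Finset.sum_congr rfl fun i _ => by simp; ring

theorem pr_smul (ξ : Fin N → ℤ) (c : ℝ) (w : Fin N → ℝ) : pr ξ (c • w) = c * pr ξ w := by
  unfold pr
  rw [Finset.mul_sum]
  exact Finset.sum_congr rfl fun i _ => by simp; ring

theorem pr_bd (ξ : Fin N → ℤ) (M : Matrix (Fin N) (Fin N) ℝ) :
    ∃ P > 0, ∀ w : Fin N → ℝ, |pr ξ (M *ᵥ w)| ≤ P * ‖w‖ := by
  refine ⟨(∑ i, ∑ j, |(ξ i : ℝ)| * |M i j|) + 1, by positivity, fun w => ?_⟩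
  have : |pr ξ (M *ᵥ w)| ≤ (∑ i, ∑ j, |(ξ i : ℝ)| * |M i j|) * ‖w‖ := by
    unfold pr
    refine (Finset.abs_sum_le_sum_abs _ _).trans ?_
    rw [Finset.sum_mul]
    refine Finset.sum_le_sum fun i _ => ?_
    rw [abs_mul, ← Finset.mul_sum, mul_assoc]
    refine mul_le_mul_of_nonneg_left ?_ (abs_nonneg _)
    unfold Matrix.mulVec dotProduct
    refine (Finset.abs_sum_le_sum_abs _ _).trans ?_
    rw [Finset.sum_mul]
    refine Finset.sum_le_sum fun j _ => ?_
    rw [abs_mul]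
    exact mul_le_mul_of_nonneg_left (norm_le_pi_norm w j) (abs_nonneg _)
  nlinarith [norm_nonneg w]

theorem Eig.lam_pow (E : Eig α) (j : Fin N) (m : Fin d → ℤ) (k : ℕ) (w : Fin N → ℝ) :
    E.lam j (toR (α (k • m)) *ᵥ w) = E.sg j m ^ k * E.lam j w := by
  rw [E.eig]
  congr 1
  induction k with
  | zero => simp [E.sg_zero]
  | succ k ih => rw [succ_nsmul, E.sg_add, ih, pow_succ]

end KS

namespace KS

open Matrix

variable {d N : ℕ} {α : (Fin d → ℤ) → Matrix (Fin N) (Fin N) ℤ}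

theorem toR_mul (A B : Matrix (Fin N) (Fin N) ℤ) : toR (A * B) = toR A * toR B := by
  unfold toR
  exact Matrix.map_mul (f := Int.castRingHom ℝ)

/-- One progression. -/
theorem prog (c : ℝ) (β : ℝ) (J : ℕ) (φ : ℕ → ℝ) (δ : ℝ) (hβ : β ≠ 0) (hβ2 : |β| ≤ 1 / 2)
    (h : ∀ k < J, |φ k - (c + k * β)| ≤ δ) :
    ‖∑ k ∈ Finset.range J, ee (φ k)‖ ≤ 1 / (2 * |β|) + J * (2 * Real.pi * δ) := by
  have e : ∑ k ∈ Finset.range J, ee (φ k) = ee c * ∑ k ∈ Finset.range J, ee (k * β) +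
      ∑ k ∈ Finset.range J, (ee (φ k) - ee (c + k * β)) := by
    rw [Finset.mul_sum, ← Finset.sum_add_distrib]
    refine Finset.sum_congr rfl fun k _ => ?_
    rw [ee_add]; ring
  rw [e]
  refine (norm_add_le _ _).trans ?_
  rw [norm_mul, norm_ee, one_mul]
  refine add_le_add (geom_ee β hβ2 hβ J) ?_
  refine (norm_sum_le _ _).trans ?_
  refine (Finset.sum_le_card_nsmul _ _ (2 * Real.pi * δ) fun k hk => ?_).trans ?_
  · refine (ee_lip _ _).trans ?_
    exact mul_le_mul_of_nonneg_left (h k (Finset.mem_range.1 hk)) Real.two_pi_pos.le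
  · simp

set_option maxHeartbeats 1000000 in
theorem osc (E : Eig α) (hN : 0 < N) (hd : 1 < d) (hα0 : α 0 = 1)
    (hαadd : ∀ v w, α (v + w) = α v * α w)
    (hstrirr : ∀ Λ : AddSubgroup (Fin d → ℤ), Λ.FiniteIndex → IsIrreducibleOn α Λ)
    (r : Fin N) (l ε : ℝ) (hε : 0 < ε) (Ξ : Finset (Fin N → ℤ)) (hΞ : ∀ ξ ∈ Ξ, ξ ≠ 0) :
    ∃ X0 : ℝ, 0 < X0 ∧ ∀ X ≥ X0, ∃ n : ℕ, 0 < n ∧ ∃ K : Fin n → (Fin d → ℤ), ∃ η > 0,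
      ∀ v : Fin N → ℝ, (∀ j ∈ E.cls r, ‖E.lam j v‖ ≤ X) →
        (∃ j ∈ E.cls r, X * Real.exp (-l) ≤ ‖E.lam j v‖) → (∀ j ∉ E.cls r, ‖E.lam j v‖ ≤ η) →
        ∀ ξ ∈ Ξ, ‖∑ i, ee (pr ξ (toR (α (K i)) *ᵥ v))‖ ≤ ε * n := by
  obtain ⟨B, hB⟩ := exists_nat_gt (N / (ε / 2))
  have hN' : (0 : ℝ) < N := by exact_mod_cast hN
  have hB0 : (0 : ℝ) < B := lt_trans (by positivity) hB
  have hB1 : 0 < B := by exact_mod_cast hB0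
  rw [div_lt_iff₀ (by positivity)] at hB
  obtain ⟨m, hm⟩ := gen_pos' hN α hα0 hαadd hstrirr B
  have hm' : ∀ ξ : Ξ, ∃ κ > 0, ∀ u : Fin N → ℝ, ((Finset.range B).filter
      (fun b => |pr ξ.1 (toR (α (m b)) *ᵥ u)| < κ * ‖u‖)).card < N :=
    fun ξ => hm ξ.1 (hΞ _ ξ.2)
  choose κ hκ hκ2 using hm'
  obtain ⟨κ0, hκ0, hκ1⟩ := fin_min κ hκ
  have hP : ∀ q : Ξ × Fin B, ∃ P > 0, ∀ w : Fin N → ℝ, |pr q.1.1 (toR (α (m q.2)) *ᵥ w)| ≤ P * ‖w‖ :=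
    fun q => pr_bd _ _
  choose P0 hP0 hP1 using hP
  obtain ⟨P, hPp, hP2⟩ := fin_max P0
  obtain ⟨C1, hC1, hnorm⟩ := E.norm_le
  obtain ⟨C2, hC2, hlam⟩ := E.lam_le
  obtain ⟨ρ, hρ, hdir⟩ := E.dir hd r
  -- constants
  obtain ⟨Y0, hY0, hY1⟩ : ∃ Y0 : ℝ, 1 ≤ Y0 ∧
      C2 * Real.exp l / (κ0 * ρ) + 2 * Real.pi * (P * C1) ≤ ε / 2 * Y0 := by
    refine ⟨max 1 ((C2 * Real.exp l / (κ0 * ρ) + 2 * Real.pi * (P * C1)) / (ε / 2)), le_max_left _ _, ?_⟩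
    rw [← div_le_iff₀' (by positivity)]
    exact le_max_right _ _
  refine ⟨Y0 ^ 3, by positivity, fun X hX => ?_⟩
  obtain ⟨Y, hYY, hYX⟩ : ∃ Y : ℝ, Y0 ≤ Y ∧ X = Y ^ 3 := by
    have hXp : 0 ≤ X := le_trans (by positivity) hX
    have e : X = (X ^ (1/3 : ℝ)) ^ 3 := by
      rw [← Real.rpow_natCast, ← Real.rpow_mul hXp]; norm_num
    refine ⟨X ^ (1/3 : ℝ), ?_, e⟩
    rw [e] at hX
    exact le_of_pow_le_pow_left₀ (by norm_num) (by positivity) hX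
  have hY : 1 ≤ Y := hY0.trans hYY
  have hYp : 0 < Y := by linarith
  have hXp : 0 < X := by rw [hYX]; positivity
  have hY2 : C2 * Real.exp l / (κ0 * ρ) + 2 * Real.pi * (P * C1) ≤ ε / 2 * Y :=
    hY1.trans (by gcongr)
  have hs0 : 0 < 1 / Y ^ 2 := by positivity
  set s := 1 / Y ^ 2 with hs
  have hs1 : s ≤ 1 := by
    rw [hs, div_le_one (by positivity)]
    exact one_le_pow₀ hY
  obtain ⟨m', τ, hτ, hτ2, hτ3⟩ := hdir (min (s / 2) (1 / (2 * P * C1 * X))) (by positivity)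
  have hτs : τ < s / 2 := lt_of_lt_of_le hτ2 (min_le_left _ _)
  have hτX : P * C1 * (τ * X) ≤ 1 / 2 := by
    have := lt_of_lt_of_le hτ2 (min_le_right _ _)
    rw [lt_div_iff₀ (by positivity)] at this
    nlinarith
  set J := ⌊s / τ⌋₊ with hJ
  have hJ1 : (J : ℝ) * τ ≤ s := by
    have := Nat.floor_le (a := s / τ) (by positivity)
    rwa [le_div_iff₀ hτ] at this
  have hJ2 : s / 2 ≤ J * τ := by
    have := Nat.lt_floor_add_one (s / τ)
    rw [div_lt_iff₀ hτ] at this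
    nlinarith
  have hJ0 : (0 : ℝ) < J := by
    by_contra h
    push Not at h
    nlinarith
  have hJp : 0 < J := by exact_mod_cast hJ0
  have hexQ : ∃ Q > 0, ∀ q : Fin N × Fin (J + 1),
      ‖E.sg q.1 m' ^ (q.2 : ℕ) - 1 - (q.2 : ℕ) * (E.sg q.1 m' - 1)‖ + ‖E.sg q.1 m' - 1‖ ≤ Q := fin_max _
  obtain ⟨Q, hQ, hQ1⟩ := hexQ
  have hη0 : 0 < min (s ^ 2 * X / Q) (τ * X / Q) := by positivity
  refine ⟨B * J, by positivity, fun i => m (finProdFinEquiv.symm i).1 + ((finProdFinEquiv.symm i).2 : ℕ) • m',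
    _, hη0, fun v hv1 hv2 hv3 ξ hξ => ?_⟩
  set η := min (s ^ 2 * X / Q) (τ * X / Q) with hη
  have hη1 : Q * η ≤ s ^ 2 * X := by
    have : η ≤ s ^ 2 * X / Q := min_le_left _ _
    rwa [le_div_iff₀' hQ] at this
  have hη2 : Q * η ≤ τ * X := by
    have : η ≤ τ * X / Q := min_le_right _ _
    rwa [le_div_iff₀' hQ] at this
  set u := toR (α m') *ᵥ v - v with hu
  have hlu : ∀ j, E.lam j u = (E.sg j m' - 1) * E.lam j v := by
    intro j
    rw [hu, map_sub, E.eig]; ring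
  have hu1 : ‖u‖ ≤ C1 * (τ * X) := by
    refine hnorm u (τ * X) (by positivity) fun j => ?_
    rw [hlu, norm_mul]
    by_cases hj : j ∈ E.cls r
    · exact mul_le_mul (hτ3 j hj).2 (hv1 j hj) (norm_nonneg _) hτ.le
    · refine (mul_le_mul ?_ (hv3 j hj) (norm_nonneg _) hQ.le).trans hη2
      have := hQ1 (j, 0)
      exact le_trans (by simp) this
  have hu2 : ρ * τ * (X * Real.exp (-l)) ≤ C2 * ‖u‖ := by
    obtain ⟨j, hj, hj2⟩ := hv2
    refine le_trans ?_ (hlam u j)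
    rw [hlu, norm_mul]
    exact mul_le_mul (hτ3 j hj).1 hj2 (by positivity) (norm_nonneg _)
  have herr : ∀ k : ℕ, k < J → ‖toR (α (k • m')) *ᵥ v - (v + (k : ℝ) • u)‖ ≤ C1 * (s ^ 2 * X) := by
    intro k hk
    refine hnorm _ _ (by positivity) fun j => ?_
    have e : E.lam j (toR (α (k • m')) *ᵥ v - (v + (k : ℝ) • u)) =
        (E.sg j m' ^ k - 1 - k * (E.sg j m' - 1)) * E.lam j v := by
      rw [map_sub, map_add, map_smul, E.lam_pow, hlu, Complex.real_smul]
      push_cast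
      ring
    rw [e, norm_mul]
    have hkJ : (k : ℝ) * τ ≤ s := le_trans (by gcongr) hJ1
    by_cases hj : j ∈ E.cls r
    · refine mul_le_mul ?_ (hv1 j hj) (norm_nonneg _) (by positivity)
      refine (pow_err _ τ k (hτ3 j hj).2 (hkJ.trans hs1)).trans ?_
      gcongr
    · refine (mul_le_mul ?_ (hv3 j hj) (norm_nonneg _) hQ.le).trans hη1
      have := hQ1 (j, ⟨k, by omega⟩)
      exact le_trans (le_add_of_nonneg_right (norm_nonneg _)) this
  have hsum : ∑ i : Fin (B * J), ee (pr ξ (toR (α (m (finProdFinEquiv.symm i).1 +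
      ((finProdFinEquiv.symm i).2 : ℕ) • m')) *ᵥ v)) =
      ∑ b ∈ Finset.range B, ∑ k ∈ Finset.range J, ee (pr ξ (toR (α (m b + k • m')) *ᵥ v)) := by
    rw [Equiv.sum_comp finProdFinEquiv.symm
      (fun q : Fin B × Fin J => ee (pr ξ (toR (α (m q.1 + (q.2 : ℕ) • m')) *ᵥ v)))]
    rw [Fintype.sum_prod_type, Finset.sum_range]
    refine Finset.sum_congr rfl fun b _ => ?_
    rw [Finset.sum_range]
  rw [hsum]
  have hsX : s ^ 2 * X * Y = 1 := by rw [hs, hYX]; field_simp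
  have hsX' : s * X = Y := by rw [hs, hYX]; field_simp
  -- good indices
  have hgood : ∀ b ∈ Finset.range B, ¬ |pr ξ (toR (α (m b)) *ᵥ u)| < κ ⟨ξ, hξ⟩ * ‖u‖ →
      ‖∑ k ∈ Finset.range J, ee (pr ξ (toR (α (m b + k • m')) *ᵥ v))‖ ≤ ε / 2 * J := by
    intro b hb hlow
    push Not at hlow
    set β := pr ξ (toR (α (m b)) *ᵥ u) with hβ
    have hPw : ∀ w, |pr ξ (toR (α (m b)) *ᵥ w)| ≤ P * ‖w‖ := fun w =>
      (hP1 (⟨ξ, hξ⟩, ⟨b, Finset.mem_range.1 hb⟩) w).trans (by gcongr; exact hP2 _)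
    have hβ2 : |β| ≤ 1 / 2 := by
      refine (hPw u).trans (le_trans ?_ hτX)
      rw [mul_assoc]
      gcongr
    have hβ1 : κ0 * (ρ * τ * (X * Real.exp (-l))) ≤ C2 * |β| := by
      calc κ0 * (ρ * τ * (X * Real.exp (-l))) ≤ κ0 * (C2 * ‖u‖) := by gcongr
        _ = C2 * (κ0 * ‖u‖) := by ring
        _ ≤ C2 * (κ ⟨ξ, hξ⟩ * ‖u‖) := by gcongr; exact hκ1 _
        _ ≤ C2 * |β| := by gcongr
    have hβp : 0 < |β| := by
      have : 0 < C2 * |β| := lt_of_lt_of_le (by positivity) hβ1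
      exact pos_of_mul_pos_right this hC2.le
    have hp := prog (pr ξ (toR (α (m b)) *ᵥ v)) β J
      (fun k => pr ξ (toR (α (m b + k • m')) *ᵥ v)) (P * (C1 * (s ^ 2 * X)))
      (abs_pos.1 hβp) hβ2 (by
        intro k hk
        have e : pr ξ (toR (α (m b + k • m')) *ᵥ v) - (pr ξ (toR (α (m b)) *ᵥ v) + k * β) =
            pr ξ (toR (α (m b)) *ᵥ (toR (α (k • m')) *ᵥ v - (v + (k : ℝ) • u))) := by
          have : toR (α (m b + k • m')) *ᵥ v = toR (α (m b)) *ᵥ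
            ((toR (α (k • m')) *ᵥ v - (v + (k : ℝ) • u)) + (v + (k : ℝ) • u)) := by
            rw [sub_add_cancel, Matrix.mulVec_mulVec, hαadd, toR_mul]
          rw [this, Matrix.mulVec_add, Matrix.mulVec_add _ v, Matrix.mulVec_smul, pr_add, pr_add, pr_smul]
          ring
        rw [e]
        exact (hPw _).trans (by gcongr; exact herr k hk))
    refine hp.trans ?_
    have h1 : 1 / (2 * |β|) * Y ≤ J * (C2 * Real.exp l / (κ0 * ρ)) := by
      rw [div_mul_eq_mul_div, one_mul, div_le_iff₀ (by positivity)]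
      have e1 : Real.exp l * Real.exp (-l) = 1 := by rw [← Real.exp_add]; simp
      have e2 : J * (C2 * Real.exp l / (κ0 * ρ)) * (2 * |β|) =
        2 * J * Real.exp l * (C2 * |β|) / (κ0 * ρ) := by field_simp
      rw [e2, le_div_iff₀ (by positivity)]
      calc Y * (κ0 * ρ) = 2 * (s / 2) * X * (κ0 * ρ) * (Real.exp l * Real.exp (-l)) := by
            rw [e1, ← hsX']; ring
        _ ≤ 2 * (J * τ) * X * (κ0 * ρ) * (Real.exp l * Real.exp (-l)) := by gcongr
        _ = 2 * J * Real.exp l * (κ0 * (ρ * τ * (X * Real.exp (-l)))) := by ring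
        _ ≤ _ := by gcongr
    have h2 : (1 / (2 * |β|) + J * (2 * Real.pi * (P * (C1 * (s ^ 2 * X))))) * Y ≤ ε / 2 * J * Y := by
      calc _ = 1 / (2 * |β|) * Y + J * (2 * Real.pi * (P * C1)) * (s ^ 2 * X * Y) := by ring
        _ ≤ J * (C2 * Real.exp l / (κ0 * ρ)) + J * (2 * Real.pi * (P * C1)) := by
          rw [hsX, mul_one]; gcongr
        _ = J * (C2 * Real.exp l / (κ0 * ρ) + 2 * Real.pi * (P * C1)) := by ring
        _ ≤ J * (ε / 2 * Y) := by gcongr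
        _ = _ := by ring
    exact le_of_mul_le_mul_right h2 hYp
  have htriv : ∀ b, ‖∑ k ∈ Finset.range J, ee (pr ξ (toR (α (m b + k • m')) *ᵥ v))‖ ≤ J := by
    intro b
    refine (norm_sum_le _ _).trans ?_
    simp [norm_ee]
  refine (norm_sum_le _ _).trans ?_
  rw [← Finset.sum_filter_add_sum_filter_not (Finset.range B)
    (fun b => |pr ξ (toR (α (m b)) *ᵥ u)| < κ ⟨ξ, hξ⟩ * ‖u‖)]
  have hA := Finset.sum_le_card_nsmul ((Finset.range B).filter
    (fun b => |pr ξ (toR (α (m b)) *ᵥ u)| < κ ⟨ξ, hξ⟩ * ‖u‖)) _ (J : ℝ) (fun b _ => htriv b)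
  have hBd := Finset.sum_le_card_nsmul ((Finset.range B).filter
    (fun b => ¬ |pr ξ (toR (α (m b)) *ᵥ u)| < κ ⟨ξ, hξ⟩ * ‖u‖)) _ (ε / 2 * J : ℝ)
    (fun b hb => hgood b (Finset.mem_filter.1 hb).1 (Finset.mem_filter.1 hb).2)
  rw [nsmul_eq_mul] at hA hBd
  have c1 : (((Finset.range B).filter
    (fun b => |pr ξ (toR (α (m b)) *ᵥ u)| < κ ⟨ξ, hξ⟩ * ‖u‖)).card : ℝ) ≤ ε / 2 * B := by
    have : (((Finset.range B).filter
      (fun b => |pr ξ (toR (α (m b)) *ᵥ u)| < κ ⟨ξ, hξ⟩ * ‖u‖)).card : ℝ) ≤ N := by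
      exact_mod_cast (hκ2 ⟨ξ, hξ⟩ u).le
    linarith
  have c2 : (((Finset.range B).filter
    (fun b => ¬ |pr ξ (toR (α (m b)) *ᵥ u)| < κ ⟨ξ, hξ⟩ * ‖u‖)).card : ℝ) ≤ B := by
    exact_mod_cast (Finset.card_filter_le _ _).trans (by simp)
  refine (add_le_add hA hBd).trans ?_
  push_cast
  have := mul_le_mul_of_nonneg_right c1 hJ0.le
  have := mul_le_mul_of_nonneg_right c2 (by positivity : (0:ℝ) ≤ ε / 2 * J)
  nlinarith

end KS

set_option linter.all false

namespace KS

section abs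

variable {G : Type*} [AddCommGroup G] [MeasurableSpace G] [MeasurableSub₂ G]

/-- measure of `x + B` -/
noncomputable def nb (μ : Measure G) (B : Set G) (x : G) : ℝ≥0∞ := μ {y | y - x ∈ B}

variable {μ : Measure G} [IsProbabilityMeasure μ]

theorem meas_sl {B : Set G} (hB : MeasurableSet B) (x : G) : MeasurableSet {y | y - x ∈ B} :=
  (measurable_id.sub_const x) hB

theorem meas_sl' {B : Set G} (hB : MeasurableSet B) (y : G) : MeasurableSet {x | y - x ∈ B} :=
  (measurable_id.const_sub y) hB

theorem meas_pr {B : Set G} (hB : MeasurableSet B) : MeasurableSet {q : G × G | q.2 - q.1 ∈ B} :=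
  (measurable_snd.sub measurable_fst) hB

theorem nb_meas {B : Set G} (hB : MeasurableSet B) : Measurable (nb μ B) :=
  measurable_measure_prodMk_left (meas_pr hB)

theorem nb_le_one (B : Set G) (x : G) : nb μ B x ≤ 1 := prob_le_one

theorem nb_ne_top (B : Set G) (x : G) : nb μ B x ≠ ∞ := measure_ne_top _ _

theorem nb_mono {B B' : Set G} (h : B ⊆ B') (x : G) : nb μ B x ≤ nb μ B' x :=
  measure_mono fun _ hy => h hy

theorem nb_ind {B : Set G} (hB : MeasurableSet B) (x : G) :
    nb μ B x = ∫⁻ y, {q : G × G | q.2 - q.1 ∈ B}.indicator 1 (x, y) ∂μ := by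
  rw [nb, ← lintegral_indicator_one (meas_sl hB x)]
  rfl

/-- `B` is covered by `n` translates of a set `B''` with `B'' - B'' ⊆ B'`. -/
def Cov (B B' : Set G) (n : ℕ) : Prop :=
  ∃ F : Finset G, F.card ≤ n ∧ ∃ B'' : Set G, MeasurableSet B'' ∧
    (∀ b ∈ B, ∃ c ∈ F, b - c ∈ B'') ∧ ∀ b ∈ B'', ∀ b' ∈ B'', b - b' ∈ B'

theorem small_int {S B' : Set G} (h : ∀ x ∈ S, ∀ x' ∈ S, x' - x ∈ B') (hS : MeasurableSet S) :
    ∫⁻ x in S, (nb μ B' x)⁻¹ ∂μ ≤ 1 := by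
  calc ∫⁻ x in S, (nb μ B' x)⁻¹ ∂μ ≤ ∫⁻ _ in S, (μ S)⁻¹ ∂μ := by
        refine setLIntegral_mono measurable_const fun x hx => ?_
        exact ENNReal.inv_le_inv.2 (measure_mono fun x' hx' => h x hx x' hx')
    _ = (μ S)⁻¹ * μ S := by simp
    _ ≤ 1 := by rw [mul_comm]; exact ENNReal.mul_inv_le_one _

theorem cov_int {B B' : Set G} {n : ℕ} (hB : MeasurableSet B) (hB' : MeasurableSet B')
    (h : Cov B B' n) : ∫⁻ x, nb μ B x * (nb μ B' x)⁻¹ ∂μ ≤ n := by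
  obtain ⟨F, hF, B'', hm, h1, h2⟩ := h
  have hq : Measurable fun q : G × G =>
      {q : G × G | q.2 - q.1 ∈ B}.indicator 1 q * (nb μ B' q.1)⁻¹ :=
    (measurable_one.indicator (meas_pr hB)).mul ((nb_meas hB').comp measurable_fst).inv
  calc ∫⁻ x, nb μ B x * (nb μ B' x)⁻¹ ∂μ
      = ∫⁻ x, ∫⁻ y, {q : G × G | q.2 - q.1 ∈ B}.indicator 1 (x, y) * (nb μ B' x)⁻¹ ∂μ ∂μ := by
        refine lintegral_congr fun x => ?_
        rw [nb_ind hB, lintegral_mul_const]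
        exact (measurable_one.indicator (meas_pr hB)).comp measurable_prodMk_left
    _ = ∫⁻ y, ∫⁻ x, {q : G × G | q.2 - q.1 ∈ B}.indicator 1 (x, y) * (nb μ B' x)⁻¹ ∂μ ∂μ :=
        lintegral_lintegral_swap hq.aemeasurable
    _ ≤ ∫⁻ y, n ∂μ := by
        refine lintegral_mono fun y => ?_
        calc ∫⁻ x, {q : G × G | q.2 - q.1 ∈ B}.indicator 1 (x, y) * (nb μ B' x)⁻¹ ∂μ
            ≤ ∫⁻ x, ∑ c ∈ F, {x | (y - c) - x ∈ B''}.indicator (fun x => (nb μ B' x)⁻¹) x ∂μ := by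
              refine lintegral_mono fun x => ?_
              by_cases hx : y - x ∈ B
              · obtain ⟨c, hc, hc2⟩ := h1 _ hx
                refine le_trans ?_ (Finset.single_le_sum (f := fun c =>
                  {x | (y - c) - x ∈ B''}.indicator (fun x => (nb μ B' x)⁻¹) x) (fun _ _ => zero_le) hc)
                have : x ∈ {x | (y - c) - x ∈ B''} := by
                  rw [Set.mem_ofPred_eq]; convert hc2 using 1; abel
                simp [Set.indicator_of_mem this, hx]
              · simp [Set.indicator, hx]
          _ = ∑ c ∈ F, ∫⁻ x in {x | (y - c) - x ∈ B''}, (nb μ B' x)⁻¹ ∂μ := by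
              rw [lintegral_finsetSum]
              · exact Finset.sum_congr rfl fun c _ => lintegral_indicator (meas_sl' hm _) _
              · exact fun c _ => (nb_meas hB').inv.indicator (meas_sl' hm _)
          _ ≤ ∑ c ∈ F, 1 := by
              refine Finset.sum_le_sum fun c _ => small_int ?_ (meas_sl' hm _)
              intro x hx x' hx'
              have := h2 _ hx _ hx'
              convert this using 1; abel
          _ ≤ n := by simpa using hF
    _ = n := by simp

theorem cov_low {B : Set G} {n : ℕ} (h : Cov Set.univ B n) :
    ∃ ε : ℝ, 0 < ε ∧ ∀ᵐ x ∂μ, ε ≤ (nb μ B x).toReal := by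
  obtain ⟨F, hF, B'', hm, h1, h2⟩ := h
  classical
  set F' := F.filter (fun c => μ {x | x - c ∈ B''} ≠ 0)
  obtain ⟨ε, hε, hε1⟩ : ∃ ε > 0, ∀ c : F', ε ≤ (μ {x | x - c.1 ∈ B''}).toReal := by
    have hpos : ∀ c : F', 0 < (μ {x | x - c.1 ∈ B''}).toReal := fun c =>
      ENNReal.toReal_pos (Finset.mem_filter.1 c.2).2 (measure_ne_top _ _)
    rcases isEmpty_or_nonempty F' with h | h
    · exact ⟨1, one_pos, fun c => h.elim c⟩
    · obtain ⟨c0, hc0⟩ := Finite.exists_min (fun c : F' => (μ {x | x - c.1 ∈ B''}).toReal)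
      exact ⟨_, hpos c0, hc0⟩
  refine ⟨ε, hε, ?_⟩
  have hnull : ∀ c ∈ F, ∀ᵐ x ∂μ, μ {x | x - c ∈ B''} = 0 → x - c ∉ B'' := by
    intro c hc
    by_cases h0 : μ {x | x - c ∈ B''} = 0
    · have : ∀ᵐ x ∂μ, x ∉ {x | x - c ∈ B''} := measure_eq_zero_iff_ae_notMem.1 h0
      filter_upwards [this] with x hx _ using hx
    · exact Filter.Eventually.of_forall fun x h => absurd h h0
  have hall : ∀ᵐ x ∂μ, ∀ c ∈ F, μ {x | x - c ∈ B''} = 0 → x - c ∉ B'' :=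
    (ae_ball_iff F.countable_toSet).2 hnull
  filter_upwards [hall] with x hx
  obtain ⟨c, hc, hxc⟩ := h1 x trivial
  have hc' : c ∈ F' := Finset.mem_filter.2 ⟨hc, fun h0 => hx c hc h0 hxc⟩
  refine (hε1 ⟨c, hc'⟩).trans ?_
  refine ENNReal.toReal_mono (measure_ne_top _ _) (measure_mono fun x' hx' => ?_)
  have := h2 _ hx' _ hxc
  show x' - x ∈ B
  convert this using 1; abel

/-- log of mass -/
noncomputable def lg (μ : Measure G) (B : Set G) (x : G) : ℝ := Real.log (nb μ B x).toReal

/-- positive a.e. lower bound -/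
def Low (μ : Measure G) (B : Set G) : Prop :=
  MeasurableSet B ∧ ∃ ε : ℝ, 0 < ε ∧ ∀ᵐ x ∂μ, ε ≤ (nb μ B x).toReal

theorem nbR_le_one (B : Set G) (x : G) : (nb μ B x).toReal ≤ 1 :=
  ENNReal.toReal_mono (by simp) (nb_le_one B x)

theorem lg_meas {B : Set G} (hB : MeasurableSet B) : Measurable (lg μ B) :=
  Real.measurable_log.comp (nb_meas hB).ennreal_toReal

theorem lg_nonpos (B : Set G) (x : G) : lg μ B x ≤ 0 :=
  Real.log_nonpos ENNReal.toReal_nonneg (nbR_le_one B x)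

theorem lg_int {B : Set G} (h : Low μ B) : Integrable (lg μ B) μ := by
  obtain ⟨hB, ε, hε, h⟩ := h
  refine Integrable.of_bound (lg_meas hB).aestronglyMeasurable (-Real.log ε) ?_
  filter_upwards [h] with x hx
  rw [Real.norm_eq_abs, abs_of_nonpos (lg_nonpos B x)]
  exact neg_le_neg (Real.log_le_log hε hx)

theorem step {B B' : Set G} (hB : Low μ B) (hB' : Low μ B') {n : ℕ}
    (h : Cov B B' n) (D g : ℝ) (hD : 0 < D) (hg0 : 0 ≤ g) (hn : (n : ℝ) ≤ Real.exp D)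
    (hg : g ≤ (∫ x, lg μ B x ∂μ) - ∫ x, lg μ B' x ∂μ) :
    (g / 2 - 1) / D ≤ (μ {x | (nb μ B' x) ≤ ENNReal.ofReal (Real.exp (-(g / 2))) * nb μ B x}).toReal := by
  set A := {x | (nb μ B' x) ≤ ENNReal.ofReal (Real.exp (-(g / 2))) * nb μ B x} with hA
  have hAm : MeasurableSet A :=
    measurableSet_le (nb_meas hB'.1) (measurable_const.mul (nb_meas hB.1))
  have hI : Integrable (fun x => Real.exp (lg μ B x - lg μ B' x)) μ ∧
      ∫ x, Real.exp (lg μ B x - lg μ B' x) ∂μ ≤ n := by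
    have hm : Measurable (fun x => Real.exp (lg μ B x - lg μ B' x)) :=
      Real.measurable_exp.comp ((lg_meas hB.1).sub (lg_meas hB'.1))
    have hle : ∫⁻ x, ENNReal.ofReal (Real.exp (lg μ B x - lg μ B' x)) ∂μ ≤ n := by
      refine le_trans (le_of_eq (lintegral_congr_ae ?_)) (cov_int (μ := μ) hB.1 hB'.1 h)
      obtain ⟨_, ε, hε, h1⟩ := hB
      obtain ⟨_, ε', hε', h2⟩ := hB'
      filter_upwards [h1, h2] with x hx hx'
      have p1 : 0 < (nb μ B x).toReal := hε.trans_le hx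
      have p2 : 0 < (nb μ B' x).toReal := hε'.trans_le hx'
      rw [lg, lg, Real.exp_sub, Real.exp_log p1, Real.exp_log p2, ENNReal.ofReal_div_of_pos p2,
        ENNReal.ofReal_toReal (nb_ne_top _ _), ENNReal.ofReal_toReal (nb_ne_top _ _)]
      rfl
    refine ⟨⟨hm.aestronglyMeasurable, ?_⟩, ?_⟩
    · rw [hasFiniteIntegral_iff_ofReal (Filter.Eventually.of_forall fun x => (Real.exp_pos _).le)]
      exact hle.trans_lt (by simp)
    · rw [integral_eq_lintegral_of_nonneg_ae (Filter.Eventually.of_forall fun x => (Real.exp_pos _).le)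
        hm.aestronglyMeasurable]
      exact ENNReal.toReal_le_of_le_ofReal (by positivity) (by simpa using hle)
  have hi1 := lg_int hB
  have hi2 := lg_int hB'
  have hpt : ∀ᵐ x ∂μ, lg μ B x - lg μ B' x ≤
      g / 2 + (D * A.indicator 1 x + Real.exp (-D) * Real.exp (lg μ B x - lg μ B' x)) := by
    obtain ⟨_, ε, hε, h1⟩ := hB
    obtain ⟨_, ε', hε', h2⟩ := hB'
    filter_upwards [h1, h2] with x hx hx'
    have p1 : 0 < (nb μ B x).toReal := hε.trans_le hx
    have p2 : 0 < (nb μ B' x).toReal := hε'.trans_le hx'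
    set t := lg μ B x - lg μ B' x with ht
    have e1 : Real.exp (-D) * Real.exp t = Real.exp (t - D) := by
      rw [← Real.exp_add]; ring_nf
    rw [e1]
    by_cases hx : x ∈ A
    · rw [Set.indicator_of_mem hx]
      have := Real.add_one_le_exp (t - D)
      simp; linarith
    · rw [Set.indicator_of_notMem hx]
      have hlt : ENNReal.ofReal (Real.exp (-(g / 2))) * nb μ B x < nb μ B' x := not_le.1 hx
      have h3 := (ENNReal.toReal_lt_toReal (by
          exact ENNReal.mul_ne_top (by simp) (nb_ne_top _ _)) (nb_ne_top _ _)).2 hlt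
      rw [ENNReal.toReal_mul, ENNReal.toReal_ofReal (Real.exp_pos _).le] at h3
      have h4 := Real.log_lt_log (by positivity) h3
      rw [Real.log_mul (Real.exp_pos _).ne' p1.ne', Real.log_exp] at h4
      have : 0 ≤ Real.exp (t - D) := (Real.exp_pos _).le
      simp
      have : t < g / 2 := by rw [ht, lg, lg]; linarith
      linarith
  have hind : Integrable (A.indicator (1 : G → ℝ)) μ := (integrable_const (1 : ℝ)).indicator hAm
  have hrhs : Integrable (fun x => D * A.indicator (1 : G → ℝ) x +
      Real.exp (-D) * Real.exp (lg μ B x - lg μ B' x)) μ :=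
    (hind.const_mul D).add (hI.1.const_mul _)
  have h5 := integral_mono_ae (hi1.sub hi2) ((integrable_const (g / 2)).add hrhs) hpt
  have h6 : ∫ x, (fun _ : G => g / 2) x + (D * A.indicator (1 : G → ℝ) x +
      Real.exp (-D) * Real.exp (lg μ B x - lg μ B' x)) ∂μ = g / 2 + (D * (μ A).toReal +
      Real.exp (-D) * ∫ x, Real.exp (lg μ B x - lg μ B' x) ∂μ) := by
    rw [integral_add (integrable_const _) hrhs, integral_add (hind.const_mul D) (hI.1.const_mul _),
      integral_const_mul, integral_const_mul, integral_indicator_one hAm]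
    simp [Measure.real]
  have h7 : ∫ x, (lg μ B - lg μ B') x ∂μ = (∫ x, lg μ B x ∂μ) - ∫ x, lg μ B' x ∂μ :=
    integral_sub hi1 hi2
  have h8 : Real.exp (-D) * ∫ x, Real.exp (lg μ B x - lg μ B' x) ∂μ ≤ 1 := by
    calc _ ≤ Real.exp (-D) * Real.exp D := by gcongr; exact hI.2.trans hn
      _ = 1 := by rw [← Real.exp_add]; simp
  rw [div_le_iff₀ hD]
  have h9 := h5.trans (le_of_eq h6)
  rw [h7] at h9
  linarith

end abs
end KS

set_option linter.all false

namespace KS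

section ent

variable {G : Type*} [AddCommGroup G] [MeasurableSpace G] [MeasurableSub₂ G]
variable {μ : Measure G} [IsProbabilityMeasure μ]

theorem jensen_lite {φ : G → ℝ} (hm : Measurable φ) (hφ : Integrable φ μ) (c : ℝ) (hc : 0 < c)
    (h : ∫⁻ x, ENNReal.ofReal (Real.exp (φ x)) ∂μ ≤ ENNReal.ofReal c) :
    ∫ x, φ x ∂μ ≤ Real.log c := by
  have hm' : Measurable (fun x => Real.exp (φ x)) := Real.measurable_exp.comp hm
  have hI : Integrable (fun x => Real.exp (φ x)) μ := by
    refine ⟨hm'.aestronglyMeasurable, ?_⟩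
    rw [hasFiniteIntegral_iff_ofReal (Filter.Eventually.of_forall fun x => (Real.exp_pos _).le)]
    exact h.trans_lt (by simp)
  have hI2 : ∫ x, Real.exp (φ x) ∂μ ≤ c := by
    rw [integral_eq_lintegral_of_nonneg_ae (Filter.Eventually.of_forall fun x => (Real.exp_pos _).le)
        hm'.aestronglyMeasurable]
    exact ENNReal.toReal_le_of_le_ofReal hc.le h
  have hpt : ∀ x, φ x ≤ c⁻¹ * Real.exp (φ x) + (Real.log c - 1) := by
    intro x
    have := Real.add_one_le_exp (φ x - Real.log c)
    rw [Real.exp_sub, Real.exp_log hc, div_eq_inv_mul] at this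
    linarith
  have h1 := integral_mono hφ ((hI.const_mul c⁻¹).add (integrable_const (Real.log c - 1))) hpt
  have h2 : ∫ x, (fun x => c⁻¹ * Real.exp (φ x)) x + (fun _ : G => Real.log c - 1) x ∂μ =
      c⁻¹ * ∫ x, Real.exp (φ x) ∂μ + (Real.log c - 1) := by
    rw [integral_add (hI.const_mul c⁻¹) (integrable_const _), integral_const_mul]
    simp
  have h3 : c⁻¹ * ∫ x, Real.exp (φ x) ∂μ ≤ 1 := by
    rw [inv_mul_le_iff₀ hc]; linarith
  have := h1.trans (le_of_eq h2)
  linarith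

/-- word map -/
def word (T : G → G) {m : ℕ} (c : G → Fin m) (n : ℕ) (x : G) : Fin n → Fin m := fun k => c (T^[k] x)

theorem word_meas {T : G → G} (hT : Measurable T) {m : ℕ} {c : G → Fin m} (hc : Measurable c) (n : ℕ) :
    Measurable (word T c n) :=
  measurable_pi_lambda _ fun k => hc.comp (hT.iterate k)

theorem fubini_word {T : G → G} (hT : Measurable T) {m : ℕ} {c : G → Fin m} (hc : Measurable c)
    {E U : Set G} (hE : MeasurableSet E) (gs : G → Fin m)
    (hsub : ∀ x y, T (x - y) = T x - T y)
    (hg : ∀ x y, x ∈ E → y - x ∈ U → c x = gs y) (n : ℕ) {B : Set G} (hB : MeasurableSet B)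
    (hBU : ∀ b ∈ B, ∀ k < n, T^[k] b ∈ U) (θ : ℝ≥0∞) (hθ : θ ≤ 1) :
    ∫⁻ x, nb μ B x * ((μ (word T c n ⁻¹' {word T c n x}))⁻¹ *
      ∏ k : Fin n, (E.indicator 1 (T^[k] x) + (Eᶜ).indicator (fun _ => θ) (T^[k] x))) ∂μ ≤
      (1 + m * θ) ^ n := by
  have hiter : ∀ (k : ℕ) x y, T^[k] (x - y) = T^[k] x - T^[k] y := by
    intro k
    induction k with
    | zero => simp
    | succ k ih => intro x y; rw [Function.iterate_succ_apply', ih, hsub, Function.iterate_succ_apply',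
        Function.iterate_succ_apply']
  have hW := word_meas hT hc n
  set wt : G → ℝ≥0∞ := fun x => (μ (word T c n ⁻¹' {word T c n x}))⁻¹ *
      ∏ k : Fin n, (E.indicator 1 (T^[k] x) + (Eᶜ).indicator (fun _ => θ) (T^[k] x)) with hwt
  have hwm : Measurable wt := by
    refine Measurable.mul ?_ ?_
    · exact (measurable_of_finite (fun f => (μ (word T c n ⁻¹' {f}))⁻¹)).comp hW
    · refine Finset.measurable_prod _ fun k _ => ?_
      exact ((measurable_one.indicator hE).comp (hT.iterate k)).add
        ((measurable_const.indicator hE.compl).comp (hT.iterate k))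
  have hq : Measurable fun q : G × G =>
      {q : G × G | q.2 - q.1 ∈ B}.indicator 1 q * wt q.1 :=
    (measurable_one.indicator (meas_pr hB)).mul (hwm.comp measurable_fst)
  calc ∫⁻ x, nb μ B x * wt x ∂μ
      = ∫⁻ x, ∫⁻ y, {q : G × G | q.2 - q.1 ∈ B}.indicator 1 (x, y) * wt x ∂μ ∂μ := by
        refine lintegral_congr fun x => ?_
        rw [nb_ind hB, lintegral_mul_const]
        exact (measurable_one.indicator (meas_pr hB)).comp measurable_prodMk_left
    _ = ∫⁻ y, ∫⁻ x, {q : G × G | q.2 - q.1 ∈ B}.indicator 1 (x, y) * wt x ∂μ ∂μ :=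
        lintegral_lintegral_swap hq.aemeasurable
    _ ≤ ∫⁻ y, (1 + m * θ) ^ n ∂μ := by
        refine lintegral_mono fun y => ?_
        set w : Fin n → Fin m → ℝ≥0∞ := fun k i => if i = gs (T^[k] y) then 1 else θ with hw
        calc ∫⁻ x, {q : G × G | q.2 - q.1 ∈ B}.indicator 1 (x, y) * wt x ∂μ
            ≤ ∫⁻ x, ∑ f : Fin n → Fin m, (word T c n ⁻¹' {f}).indicator
                (fun _ => (μ (word T c n ⁻¹' {f}))⁻¹ * ∏ k, w k (f k)) x ∂μ := by
              refine lintegral_mono fun x => ?_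
              by_cases hx : y - x ∈ B
              · refine le_trans ?_ (Finset.single_le_sum (f := fun f =>
                  (word T c n ⁻¹' {f}).indicator (fun _ => (μ (word T c n ⁻¹' {f}))⁻¹ * ∏ k, w k (f k)) x)
                  (fun _ _ => zero_le) (Finset.mem_univ (word T c n x)))
                have h0 : x ∈ word T c n ⁻¹' {word T c n x} := rfl
                simp only [Set.indicator_of_mem h0]
                rw [Set.indicator_of_mem (show (x, y) ∈ {q : G × G | q.2 - q.1 ∈ B} from hx)]
                rw [Pi.one_apply, one_mul, hwt]
                refine mul_le_mul_right (Finset.prod_le_prod' fun k _ => ?_) _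
                by_cases hk : T^[k] x ∈ E
                · have : c (T^[k] x) = gs (T^[k] y) := hg _ _ hk (by
                    rw [← hiter]; exact hBU _ hx k k.2)
                  simp [hk, hw, word, this]
                · simp only [Set.indicator_of_notMem hk, zero_add,
                    Set.indicator_of_mem (show T^[k] x ∈ Eᶜ from hk), hw]
                  split_ifs <;> simp [hθ]
              · simp [Set.indicator, hx]
          _ = ∑ f : Fin n → Fin m, ((μ (word T c n ⁻¹' {f}))⁻¹ * ∏ k, w k (f k)) *
                μ (word T c n ⁻¹' {f}) := by
              rw [lintegral_finsetSum]
              · refine Finset.sum_congr rfl fun f _ => ?_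
                rw [lintegral_indicator_const (hW (measurableSet_singleton f))]
              · exact fun f _ => measurable_const.indicator (hW (measurableSet_singleton f))
          _ ≤ ∑ f : Fin n → Fin m, ∏ k, w k (f k) := by
              refine Finset.sum_le_sum fun f _ => ?_
              calc _ = (∏ k, w k (f k)) * (μ (word T c n ⁻¹' {f}) * (μ (word T c n ⁻¹' {f}))⁻¹) := by ring
                _ ≤ (∏ k, w k (f k)) * 1 := by gcongr; exact ENNReal.mul_inv_le_one _
                _ = _ := mul_one _
          _ = ∏ k, ∑ i, w k i := by
              rw [Finset.prod_univ_sum, Fintype.piFinset_univ]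
          _ ≤ ∏ k : Fin n, (1 + m * θ) := by
              refine Finset.prod_le_prod' fun k _ => ?_
              calc ∑ i, w k i ≤ ∑ i, ((if i = gs (T^[k] y) then 1 else 0) + θ) := by
                    refine Finset.sum_le_sum fun i _ => ?_
                    simp only [hw]; split_ifs <;> simp
                _ = _ := by rw [Finset.sum_add_distrib]; simp
          _ = _ := by simp
    _ = _ := by simp

theorem ent_core {T : G → G} (hT : MeasurePreserving T μ μ) {m : ℕ} {c : G → Fin m} (hc : Measurable c)
    {E U : Set G} (hE : MeasurableSet E) (gs : G → Fin m)
    (hsub : ∀ x y, T (x - y) = T x - T y)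
    (hg : ∀ x y, x ∈ E → y - x ∈ U → c x = gs y) (n : ℕ) {B : Set G} (hB : Low μ B)
    (hBU : ∀ b ∈ B, ∀ k < n, T^[k] b ∈ U) (θ : ℝ) (hθ0 : 0 < θ) (hθ : θ ≤ 1) :
    ∑ f, Real.negMulLog (μ (word T c n ⁻¹' {f})).toReal - n * (m * θ + (μ Eᶜ).toReal * (-Real.log θ)) ≤
      - ∫ x, lg μ B x ∂μ := by
  have hTm := hT.measurable
  have hW := word_meas hTm hc n
  set ψ : (Fin n → Fin m) → ℝ := fun f => Real.log (μ (word T c n ⁻¹' {f})).toReal with hψ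
  set φ : G → ℝ := fun x => lg μ B x - ψ (word T c n x) +
    ∑ k : Fin n, (Eᶜ).indicator (fun _ => Real.log θ) (T^[k] x) with hφ
  have i1 := lg_int hB
  have i2 : Integrable (fun x => ψ (word T c n x)) μ :=
    (Integrable.of_finite (f := ψ) (μ := μ.map (word T c n))).comp_measurable hW
  have i3 : ∀ k : ℕ, Integrable (fun x => (Eᶜ).indicator (fun _ => Real.log θ) (T^[k] x)) μ := fun k =>
    ((hT.iterate k).integrable_comp (measurable_const.indicator hE.compl).aestronglyMeasurable).2
        ((integrable_const (Real.log θ)).indicator hE.compl)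
  have i4 : Integrable (fun x => ∑ k : Fin n, (Eᶜ).indicator (fun _ => Real.log θ) (T^[k] x)) μ :=
    integrable_finset_sum _ fun k _ => i3 k
  have hφi : Integrable φ μ := (i1.sub i2).add i4
  have hφm : Measurable φ := by
    refine ((lg_meas hB.1).sub ((measurable_of_finite ψ).comp hW)).add ?_
    exact Finset.measurable_sum _ fun k _ => (measurable_const.indicator hE.compl).comp (hTm.iterate k)
  have e2 : ∫ x, ψ (word T c n x) ∂μ = - ∑ f, Real.negMulLog (μ (word T c n ⁻¹' {f})).toReal := by
    rw [← integral_map (φ := word T c n) hW.aemeasurable (f := ψ) (by fun_prop),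
      integral_fintype (Integrable.of_finite), ← Finset.sum_neg_distrib]
    refine Finset.sum_congr rfl fun f _ => ?_
    rw [Measure.real, Measure.map_apply hW (measurableSet_singleton f), hψ, Real.negMulLog]
    simp
  have e3 : ∀ k : ℕ, ∫ x, (Eᶜ).indicator (fun _ => Real.log θ) (T^[k] x) ∂μ = (μ Eᶜ).toReal * Real.log θ := by
    intro k
    have := integral_map (μ := μ) (φ := T^[k]) (hTm.iterate k).aemeasurable
      (f := (Eᶜ).indicator (fun _ => Real.log θ)) (measurable_const.indicator hE.compl).aestronglyMeasurable
    rw [← this, (hT.iterate k).map_eq, integral_indicator_const _ hE.compl]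
    simp [Measure.real]
  have e4 : ∫ x, φ x ∂μ = ∫ x, lg μ B x ∂μ + ∑ f, Real.negMulLog (μ (word T c n ⁻¹' {f})).toReal +
      n * ((μ Eᶜ).toReal * Real.log θ) := by
    have i12 : Integrable (fun x => lg μ B x - ψ (word T c n x)) μ := i1.sub i2
    have e5 : ∫ x, φ x ∂μ = ∫ x, (lg μ B x - ψ (word T c n x)) ∂μ +
        ∫ x, ∑ k : Fin n, (Eᶜ).indicator (fun _ => Real.log θ) (T^[k] x) ∂μ := integral_add i12 i4
    rw [e5, integral_sub i1 i2, e2, integral_finset_sum (Finset.univ : Finset (Fin n)) (fun k _ => i3 (k : ℕ))]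
    simp only [e3]
    simp
  have hpos : ∀ᵐ x ∂μ, μ (word T c n ⁻¹' {word T c n x}) ≠ 0 := by
    have : ∀ f, ∀ᵐ x ∂μ, word T c n x = f → μ (word T c n ⁻¹' {f}) ≠ 0 := by
      intro f
      by_cases h0 : μ (word T c n ⁻¹' {f}) = 0
      · have : ∀ᵐ x ∂μ, x ∉ word T c n ⁻¹' {f} := measure_eq_zero_iff_ae_notMem.1 h0
        filter_upwards [this] with x hx h using absurd h hx
      · exact Filter.Eventually.of_forall fun _ _ => h0
    have := (ae_all_iff (ι := Fin n → Fin m)).2 this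
    filter_upwards [this] with x hx using hx _ rfl
  have hle := fubini_word (μ := μ) hTm hc hE gs hsub hg n hB.1 hBU (ENNReal.ofReal θ) (by simpa using hθ)
  have hmain := jensen_lite hφm hφi ((1 + m * θ) ^ n) (by positivity) (by
    have e : ENNReal.ofReal ((1 + m * θ) ^ n) = (1 + m * ENNReal.ofReal θ) ^ n := by
      rw [ENNReal.ofReal_pow (by positivity), ENNReal.ofReal_add (by positivity) (by positivity),
        ENNReal.ofReal_mul (by positivity)]
      simp
    rw [e]
    refine le_trans (le_of_eq (lintegral_congr_ae ?_)) hle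
    obtain ⟨_, ε, hε, h1⟩ := hB
    filter_upwards [h1, hpos] with x hx hx2
    have p1 : 0 < (nb μ B x).toReal := hε.trans_le hx
    have p2 : 0 < (μ (word T c n ⁻¹' {word T c n x})).toReal :=
      ENNReal.toReal_pos hx2 (measure_ne_top _ _)
    rw [hφ]
    simp only
    rw [Real.exp_add, Real.exp_sum, ENNReal.ofReal_mul (Real.exp_pos _).le, Real.exp_sub, lg,
      Real.exp_log p1, hψ]
    simp only
    rw [Real.exp_log p2, ENNReal.ofReal_div_of_pos p2, ENNReal.ofReal_toReal (nb_ne_top _ _),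
      ENNReal.ofReal_toReal (measure_ne_top _ _), ENNReal.ofReal_prod_of_nonneg fun _ _ => (Real.exp_pos _).le,
      div_eq_mul_inv, mul_assoc]
    congr 2
    refine Finset.prod_congr rfl fun k _ => ?_
    by_cases hk : T^[k] x ∈ E
    · simp [hk]
    · simp [hk, Real.exp_log hθ0])
  rw [e4, Real.log_pow] at hmain
  have hlog : Real.log (1 + m * θ) ≤ m * θ := by
    have := Real.log_le_sub_one_of_pos (x := 1 + m * θ) (by positivity)
    linarith
  have := mul_le_mul_of_nonneg_left hlog (Nat.cast_nonneg (α := ℝ) n)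
  linarith

end ent
end KS

set_option linter.all false

namespace KS

section entf

variable {G : Type*} [AddCommGroup G] [MeasurableSpace G] [MeasurableSub₂ G]
variable {μ : Measure G} [IsProbabilityMeasure μ]

theorem symb {m : ℕ} {P : Fin m → Set G} (hP : IsFinMeasPartition μ P) :
    ∃ c : G → Fin m, Measurable c ∧ ∀ i, ∀ x ∈ P i, c x = i := by
  classical
  obtain ⟨h1, h2, h3⟩ := hP
  have hne : ∃ i0 : Fin m, True := by
    by_contra h
    push Not at h
    have : (⋃ i, P i) = ∅ := by
      ext x; simp; intro i; exact (h i).elim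
    rw [this] at h3
    simp at h3
  obtain ⟨i0, -⟩ := hne
  have huniq : ∀ i j x, x ∈ P i → x ∈ P j → i = j := by
    intro i j x hi hj
    by_contra hij
    exact (Set.disjoint_left.1 (h2 hij)) hi hj
  set c : G → Fin m := fun x => if h : ∃ i, x ∈ P i then h.choose else i0 with hc
  have hcP : ∀ i, ∀ x ∈ P i, c x = i := by
    intro i x hx
    have h : ∃ i, x ∈ P i := ⟨i, hx⟩
    simp only [hc, dif_pos h]
    exact huniq _ _ _ h.choose_spec hx
  refine ⟨c, ?_, hcP⟩
  refine measurable_to_countable' fun i => ?_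
  have : c ⁻¹' {i} = P i ∪ (if i = i0 then (⋃ i, P i)ᶜ else ∅) := by
    ext x
    by_cases hx : ∃ j, x ∈ P j
    · obtain ⟨j, hj⟩ := hx
      have h5 : x ∉ (⋃ i, P i)ᶜ := by simp; exact ⟨j, hj⟩
      have h6 : c x = j := hcP j x hj
      have h7 : x ∉ (if i = i0 then (⋃ i, P i)ᶜ else ∅) := by
        split_ifs <;> simp_all
      constructor
      · intro h
        left
        have : j = i := h6.symm.trans h
        rwa [← this]
      · rintro (h | h)
        · exact hcP i x h
        · exact absurd h h7
    · have h6 : c x = i0 := by simp only [hc, dif_neg hx]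
      have h5 : x ∈ (⋃ i, P i)ᶜ := by simpa using hx
      have h8 : x ∉ P i := fun h => hx ⟨i, h⟩
      constructor
      · intro h
        right
        have : i = i0 := (h6.symm.trans h).symm
        rw [if_pos this]; exact h5
      · rintro (h | h)
        · exact absurd h h8
        · split_ifs at h with hi
          · show c x = i
            rw [h6, hi]
          · exact absurd h (by simp)
  rw [this]
  refine (h1 i).union ?_
  split_ifs
  · exact (MeasurableSet.iUnion h1).compl
  · exact MeasurableSet.empty

variable [TopologicalSpace G] [IsTopologicalAddGroup G] [T2Space G] [BorelSpace G]

theorem ent_final [μ.InnerRegularCompactLTTop] {T : G → G} (hT : MeasurePreserving T μ μ)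
    (hsub : ∀ x y, T (x - y) = T x - T y) (hent : 0 < ksEntropy T μ) :
    ∃ h > 0, ∃ U : Set G, IsOpen U ∧ (0 : G) ∈ U ∧ ∀ n : ℕ, 1 ≤ n → ∀ B, Low μ B →
      (∀ b ∈ B, ∀ k < n, T^[k] b ∈ U) → h * n ≤ - ∫ x, lg μ B x ∂μ := by
  classical
  unfold ksEntropy at hent
  obtain ⟨m, hent⟩ := lt_iSup_iff.1 hent
  obtain ⟨P, hent⟩ := lt_iSup_iff.1 hent
  obtain ⟨hP, hent⟩ := lt_iSup_iff.1 hent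
  obtain ⟨h0, hh0, hlt⟩ := ENNReal.lt_iff_exists_nnreal_btwn.1 hent
  obtain ⟨h, hh⟩ : ∃ h : ℝ, h = (h0 : ℝ) := ⟨_, rfl⟩
  have hpos : 0 < h := by
    have : (0 : NNReal) < h0 := by exact_mod_cast hh0
    rw [hh]; exact_mod_cast this
  obtain ⟨c, hcm, hcP⟩ := symb hP
  have hH : ∀ n : ℕ, 1 ≤ n → h * n ≤ ∑ f, Real.negMulLog (μ (word T c n ⁻¹' {f})).toReal := by
    intro n hn
    obtain ⟨k, rfl⟩ : ∃ k, n = k + 1 := ⟨n - 1, by omega⟩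
    have h1 : (h0 : ℝ≥0∞) ≤ finPartitionEntropy μ (refinedPartition T P (k + 1)) / (k + 1 : ℝ≥0∞) :=
      hlt.le.trans (iInf_le _ k)
    rw [ENNReal.le_div_iff_mul_le (by simp) (by left; simp)] at h1
    unfold finPartitionEntropy at h1
    have e : ∀ f, μ (refinedPartition T P (k + 1) f) = μ (word T c (k + 1) ⁻¹' {f}) := by
      intro f
      refine measure_congr ?_
      have hall : ∀ᵐ x ∂μ, ∀ i : Fin (k + 1), T^[i] x ∈ ⋃ i, P i := by
        refine ae_all_iff.2 fun i => ?_
        exact (hT.iterate i).quasiMeasurePreserving.ae (p := fun x => x ∈ ⋃ i, P i)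
          (by rw [ae_iff]; exact hP.2.2)
      filter_upwards [hall] with x hx
      refine propext ?_
      show x ∈ refinedPartition T P (k + 1) f ↔ x ∈ word T c (k + 1) ⁻¹' {f}
      simp only [refinedPartition, Set.mem_iInter, Set.mem_preimage, Set.mem_singleton_iff]
      constructor
      · intro hf
        funext i
        exact hcP _ _ (hf i)
      · intro hf i
        obtain ⟨j, hj⟩ := Set.mem_iUnion.1 (hx i)
        have : c (T^[i] x) = f i := congrFun hf i
        rw [hcP j _ hj] at this
        rwa [← this]
    simp only [e] at h1
    have e2 : (h0 : ℝ≥0∞) * (k + 1 : ℝ≥0∞) = ENNReal.ofReal (h * (k + 1 : ℕ)) := by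
      rw [ENNReal.ofReal_mul hpos.le, hh, ENNReal.ofReal_coe_nnreal, ENNReal.ofReal_natCast]
      push_cast; rfl
    rw [e2] at h1
    exact (ENNReal.ofReal_le_ofReal_iff' .. |>.1 h1).resolve_right (by
      push Not; positivity)
  have hm0 : 0 < m := by
    rcases Nat.eq_zero_or_pos m with h | h
    · subst h
      exact Fin.elim0 (c 0)
    · exact h
  have hm1 : (0 : ℝ) < m := by exact_mod_cast hm0
  obtain ⟨θ, hθ0, hθ1, hθ2⟩ : ∃ θ : ℝ, 0 < θ ∧ θ ≤ 1 ∧ m * θ ≤ h / 4 := by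
    refine ⟨min 1 (h / 4 / m), by positivity, min_le_left _ _, ?_⟩
    calc m * min 1 (h / 4 / m) ≤ m * (h / 4 / m) := by gcongr; exact min_le_right _ _
      _ = h / 4 := by field_simp
  have hlθ : 0 ≤ -Real.log θ := by
    have := Real.log_nonpos hθ0.le hθ1; linarith
  set ε := h / 4 / (-Real.log θ + 1) with hε
  have hε0 : 0 < ε := by positivity
  have hK : ∀ i : Fin m, ∃ K ⊆ c ⁻¹' {i}, IsCompact K ∧ μ (c ⁻¹' {i} \ K) < ENNReal.ofReal (ε / m) := by
    intro i
    exact (hcm (measurableSet_singleton i)).exists_isCompact_sdiff_lt (measure_ne_top _ _)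
      (by simp; positivity)
  choose K hKc hKcomp hKm using hK
  set E := ⋃ i, K i with hE
  have hEm : MeasurableSet E := MeasurableSet.iUnion fun i => (hKcomp i).measurableSet
  have hEc : (μ Eᶜ).toReal ≤ ε := by
    have h1 : Eᶜ ⊆ ⋃ i, (c ⁻¹' {i} \ K i) := by
      intro x hx
      refine Set.mem_iUnion.2 ⟨c x, rfl, fun h => hx (Set.mem_iUnion.2 ⟨_, h⟩)⟩
    have h2 : μ Eᶜ ≤ ENNReal.ofReal ε := by
      calc μ Eᶜ ≤ ∑ i, μ (c ⁻¹' {i} \ K i) := (measure_mono h1).trans (measure_iUnion_fintype_le _ _)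
        _ ≤ ∑ i : Fin m, ENNReal.ofReal (ε / m) := Finset.sum_le_sum fun i _ => (hKm i).le
        _ = ENNReal.ofReal ε := by
          rw [Finset.sum_const, Finset.card_univ, Fintype.card_fin, nsmul_eq_mul,
            ← ENNReal.ofReal_natCast, ← ENNReal.ofReal_mul (by positivity)]
          congr 1; field_simp
    exact ENNReal.toReal_le_of_le_ofReal hε0.le h2
  -- separation
  have hV : ∃ V : Set G, V ∈ nhds (0 : G) ∧ ∀ i j, i ≠ j → ∀ x ∈ K i, ∀ y ∈ K j, x - y ∉ V := by
    refine ⟨⋂ q : Fin m × Fin m, (if q.1 = q.2 then Set.univ else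
      ((fun p : G × G => p.1 - p.2) '' (K q.1 ×ˢ K q.2))ᶜ), ?_, ?_⟩
    · refine (Filter.iInter_mem).2 fun q => ?_
      split_ifs with hq
      · exact Filter.univ_mem
      · refine IsOpen.mem_nhds ?_ ?_
        · exact (((hKcomp q.1).prod (hKcomp q.2)).image (by fun_prop)).isClosed.isOpen_compl
        · rintro ⟨⟨x, y⟩, ⟨hx, hy⟩, hxy⟩
          have hxy' : x = y := sub_eq_zero.1 hxy
          subst hxy'
          have a1 : c x = q.1 := hKc _ hx
          have a2 : c x = q.2 := hKc _ hy
          exact hq (a1.symm.trans a2)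
    · intro i j hij x hx y hy hmem
      have := Set.mem_iInter.1 hmem (i, j)
      rw [if_neg hij] at this
      exact this ⟨(x, y), ⟨hx, hy⟩, rfl⟩
  obtain ⟨V, hV0, hV1⟩ := hV
  have hcont : Filter.Tendsto (fun p : G × G => p.1 - p.2) (nhds (0, 0)) (nhds 0) := by
    have : Continuous (fun p : G × G => p.1 - p.2) := by fun_prop
    simpa using this.tendsto (0, 0)
  have hpre := hcont hV0
  rw [Filter.mem_map, nhds_prod_eq, Filter.mem_prod_same_iff] at hpre
  obtain ⟨U0, hU0, hUU⟩ := hpre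
  obtain ⟨U, hUU0, hUo, hU0'⟩ := mem_nhds_iff.1 hU0
  set gs : G → Fin m := fun y => if hy : ∃ i, ∃ z ∈ K i, y - z ∈ U then hy.choose else ⟨0, hm0⟩ with hgs
  have hg : ∀ x y, x ∈ E → y - x ∈ U → c x = gs y := by
    intro x y hx hyx
    obtain ⟨i, hi⟩ := Set.mem_iUnion.1 hx
    have hy : ∃ i, ∃ z ∈ K i, y - z ∈ U := ⟨i, x, hi, hyx⟩
    simp only [hgs, dif_pos hy]
    obtain ⟨z, hz, hyz⟩ := hy.choose_spec
    have hcx : c x = i := hKc _ hi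
    rw [hcx]
    by_contra hne
    refine hV1 _ _ hne x hi z hz ?_
    have : (y - z, y - x) ∈ U0 ×ˢ U0 := ⟨hUU0 hyz, hUU0 hyx⟩
    have := hUU this
    simpa using this
  refine ⟨h / 2, by positivity, U, hUo, hU0', fun n hn B hB hBU => ?_⟩
  have hfin := ent_core (μ := μ) hT hcm hEm gs hsub hg n hB hBU θ hθ0 hθ1
  have hb : (μ Eᶜ).toReal * (-Real.log θ) ≤ h / 4 := by
    calc _ ≤ ε * (-Real.log θ + 1) := by gcongr; linarith
      _ = h / 4 := by rw [hε]; field_simp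
  have hH' := hH n hn
  have hn0 : (0 : ℝ) ≤ n := Nat.cast_nonneg n
  nlinarith

end entf
end KS

set_option linter.all false

namespace KS

section ker

variable {G : Type*} [AddCommGroup G] [MeasurableSpace G] [MeasurableSub₂ G]
variable {μ : Measure G} [IsProbabilityMeasure μ]

noncomputable def nuK (μ : Measure G) (A B1 B32 : Set G) (x : G) : Measure G :=
  (nb μ B32 x)⁻¹ • μ.restrict (A ∩ {y | y - x ∈ B1})

theorem nuK_ae {A B1 B32 : Set G} (hA : MeasurableSet A) (h1 : MeasurableSet B1) (x : G) :
    ∀ᵐ y ∂(nuK μ A B1 B32 x), y ∈ A ∧ y - x ∈ B1 :=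
  Measure.ae_smul_measure (ae_restrict_mem (hA.inter (meas_sl h1 x))) _

theorem nuK_le {A B1 B32 : Set G} (x : G) (S : Set G) (hS : MeasurableSet S) :
    nuK μ A B1 B32 x S ≤ (nb μ B32 x)⁻¹ * μ S := by
  rw [nuK, Measure.smul_apply, smul_eq_mul]
  gcongr
  exact Measure.restrict_le_self

theorem nuK_mass {A B1 B32 : Set G} (h : B1 ⊆ B32) (x : G) :
    nuK μ A B1 B32 x Set.univ ≤ 1 := by
  rw [nuK, Measure.smul_apply, smul_eq_mul, Measure.restrict_apply_univ]
  calc _ ≤ (nb μ B32 x)⁻¹ * nb μ B32 x := by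
        gcongr
        exact measure_mono fun y hy => h hy.2
    _ ≤ 1 := by rw [mul_comm]; exact ENNReal.mul_inv_le_one _

theorem nuK_diag {A B1 B32 B B' : Set G} (hA : MeasurableSet A) (h1 : MeasurableSet B1)
    (h' : MeasurableSet B')
    (h : B1 ⊆ B32) (hadd : ∀ b ∈ B, ∀ b' ∈ B1, b + b' ∈ B32) (γ : ℝ≥0∞)
    (hγ : ∀ y ∈ A, nb μ B' y ≤ γ * nb μ B y) (x : G) :
    ∫⁻ y, nuK μ A B1 B32 x {z | z - y ∈ B'} ∂(nuK μ A B1 B32 x) ≤ γ := by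
  calc ∫⁻ y, nuK μ A B1 B32 x {z | z - y ∈ B'} ∂(nuK μ A B1 B32 x)
      ≤ ∫⁻ y, γ ∂(nuK μ A B1 B32 x) := by
        refine lintegral_mono_ae ?_
        filter_upwards [nuK_ae hA h1 x] with y hy
        calc nuK μ A B1 B32 x {z | z - y ∈ B'} ≤ (nb μ B32 x)⁻¹ * nb μ B' y :=
              nuK_le x _ (meas_sl h' y)
          _ ≤ (nb μ B32 x)⁻¹ * (γ * nb μ B y) := by gcongr; exact hγ y hy.1
          _ ≤ (nb μ B32 x)⁻¹ * (γ * nb μ B32 x) := by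
              gcongr
              refine measure_mono fun z hz => ?_
              have := hadd _ hz _ hy.2
              show z - x ∈ B32
              convert this using 1; abel
          _ = γ * (nb μ B32 x * (nb μ B32 x)⁻¹) := by ring
          _ ≤ γ * 1 := by gcongr; exact ENNReal.mul_inv_le_one _
          _ = γ := mul_one _
    _ = γ * nuK μ A B1 B32 x Set.univ := by simp
    _ ≤ γ * 1 := by gcongr; exact nuK_mass h x
    _ = γ := mul_one _

theorem nuK_int {A B1 B32 : Set G} (hA : MeasurableSet A) (h1 : MeasurableSet B1) 
    (x : G) (φ : G → ℝ≥0∞) (hφ : Measurable φ) :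
    ∫⁻ y, φ y ∂(nuK μ A B1 B32 x) = ∫⁻ y, {q : G × G | q.2 - q.1 ∈ B1}.indicator 1 (x, y) *
      (nb μ B32 x)⁻¹ * (A.indicator φ y) ∂μ := by
  rw [nuK, lintegral_smul_measure, smul_eq_mul, ← lintegral_indicator (hA.inter (meas_sl h1 x)),
    ← lintegral_const_mul]
  · refine lintegral_congr fun y => ?_
    by_cases hy : y ∈ A <;> by_cases hy2 : y - x ∈ B1 <;> simp [Set.indicator, hy, hy2]
  · exact hφ.indicator (hA.inter (meas_sl h1 x))

theorem nuK_jm {A B1 B32 : Set G} (hA : MeasurableSet A) (h1 : MeasurableSet B1) (h2 : MeasurableSet B32)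
    (φ : G → ℝ≥0∞) (hφ : Measurable φ) : Measurable fun q : G × G =>
      {q : G × G | q.2 - q.1 ∈ B1}.indicator 1 q * (nb μ B32 q.1)⁻¹ * (A.indicator φ q.2) :=
  ((measurable_one.indicator (meas_pr h1)).mul ((nb_meas h2).comp measurable_fst).inv).mul
    ((hφ.indicator hA).comp measurable_snd)

theorem nuK_swap {A B1 B32 : Set G} (hA : MeasurableSet A) (h1 : MeasurableSet B1) (h2 : MeasurableSet B32)
    (φ : G → ℝ≥0∞) (hφ : Measurable φ) :
    ∫⁻ x, ∫⁻ y, φ y ∂(nuK μ A B1 B32 x) ∂μ =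
      ∫⁻ y, (∫⁻ x in {x | y - x ∈ B1}, (nb μ B32 x)⁻¹ ∂μ) * A.indicator φ y ∂μ := by
  have hq := nuK_jm (μ := μ) hA h1 h2 φ hφ
  calc ∫⁻ x, ∫⁻ y, φ y ∂(nuK μ A B1 B32 x) ∂μ
      = ∫⁻ x, ∫⁻ y, {q : G × G | q.2 - q.1 ∈ B1}.indicator 1 (x, y) *
      (nb μ B32 x)⁻¹ * (A.indicator φ y) ∂μ ∂μ := lintegral_congr fun x => nuK_int hA h1 x φ hφ
    _ = ∫⁻ y, ∫⁻ x, {q : G × G | q.2 - q.1 ∈ B1}.indicator 1 (x, y) *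
      (nb μ B32 x)⁻¹ * (A.indicator φ y) ∂μ ∂μ := lintegral_lintegral_swap hq.aemeasurable
    _ = _ := by
      refine lintegral_congr fun y => ?_
      rw [lintegral_mul_const]
      · congr 1
        rw [← lintegral_indicator (meas_sl' h1 y)]
        refine lintegral_congr fun x => ?_
        by_cases hx : y - x ∈ B1 <;> simp [Set.indicator, hx]
      · exact ((measurable_one.indicator (meas_pr h1)).comp measurable_prodMk_right).mul (nb_meas h2).inv

theorem nuK_meas {A B1 B32 : Set G} (hA : MeasurableSet A) (h1 : MeasurableSet B1) (h2 : MeasurableSet B32)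
    (φ : G → ℝ≥0∞) (hφ : Measurable φ) : Measurable fun x => ∫⁻ y, φ y ∂(nuK μ A B1 B32 x) := by
  have : (fun x => ∫⁻ y, φ y ∂(nuK μ A B1 B32 x)) = fun x =>
      ∫⁻ y, {q : G × G | q.2 - q.1 ∈ B1}.indicator 1 (x, y) *
      (nb μ B32 x)⁻¹ * (A.indicator φ y) ∂μ := funext fun x => nuK_int hA h1 x φ hφ
  rw [this]
  exact (nuK_jm (μ := μ) hA h1 h2 φ hφ).lintegral_prod_right'

theorem nuK_avg {A B1 B32 : Set G} (hA : MeasurableSet A) (h1 : MeasurableSet B1) (h2 : MeasurableSet B32)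
    (hd : ∀ b ∈ B1, ∀ b' ∈ B1, b - b' ∈ B32) (φ : G → ℝ≥0∞) (hφ : Measurable φ) :
    ∫⁻ x, ∫⁻ y, φ y ∂(nuK μ A B1 B32 x) ∂μ ≤ ∫⁻ y, φ y ∂μ := by
  rw [nuK_swap hA h1 h2 φ hφ]
  refine lintegral_mono fun y => ?_
  calc _ ≤ 1 * φ y := by
        gcongr
        · refine small_int ?_ (meas_sl' h1 y)
          intro x hx x' hx'
          have := hd _ hx _ hx'
          convert this using 1; abel
        · exact Set.indicator_le_self _ _ _
    _ = φ y := one_mul _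

theorem nuK_low {A B1 B32 B2 : Set G} (hA : MeasurableSet A) (h1 : Low μ B1) (h2 : MeasurableSet B32)
    (h3 : Low μ B2) (hsymm : ∀ b ∈ B1, -b ∈ B1) (hadd : ∀ b ∈ B32, ∀ b' ∈ B1, b + b' ∈ B2) {M : ℕ}
    (hM : 0 < M) (hcov : Cov B2 B1 M) (c : ℝ) (hc : 0 < c) (hcA : ENNReal.ofReal c ≤ μ A) :
    ENNReal.ofReal (c ^ 2 / M) ≤ ∫⁻ x, nuK μ A B1 B32 x Set.univ ∂μ := by
  have hM' : (0 : ℝ) < M := by exact_mod_cast hM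
  have e1 : ∀ x, nuK μ A B1 B32 x Set.univ = ∫⁻ y, (fun _ => 1) y ∂(nuK μ A B1 B32 x) := by
    intro x; simp
  simp only [e1]
  rw [nuK_swap hA h1.1 h2 _ measurable_const]
  set S := ∫⁻ y, (∫⁻ x in {x | y - x ∈ B1}, (nb μ B32 x)⁻¹ ∂μ) * A.indicator (fun _ => 1) y ∂μ with hS
  have hS1 : ∫⁻ y in A, nb μ B1 y * (nb μ B2 y)⁻¹ ∂μ ≤ S := by
    rw [hS, ← lintegral_indicator hA]
    refine lintegral_mono fun y => ?_
    by_cases hy : y ∈ A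
    · simp only [Set.indicator_of_mem hy, mul_one]
      calc nb μ B1 y * (nb μ B2 y)⁻¹ ≤ ∫⁻ x in {x | y - x ∈ B1}, (nb μ B2 y)⁻¹ ∂μ := by
            rw [setLIntegral_const, mul_comm]
            gcongr
            refine measure_mono fun x hx => ?_
            have := hsymm _ hx
            show y - x ∈ B1
            convert this using 1; abel
        _ ≤ _ := by
            refine setLIntegral_mono (nb_meas h2).inv fun x hx => ?_
            refine ENNReal.inv_le_inv.2 (measure_mono fun z hz => ?_)
            have := hadd _ hz _ (hsymm _ hx)
            show z - y ∈ B2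
            convert this using 1; abel
    · simp [Set.indicator_of_notMem hy]
  have hcv := cov_int (μ := μ) h3.1 h1.1 hcov
  set t : ℝ := c / M with ht
  have hq1 : Measurable fun y => nb μ B1 y * (nb μ B2 y)⁻¹ := (nb_meas h1.1).mul (nb_meas h3.1).inv
  have hq2 : Measurable fun y => nb μ B2 y * (nb μ B1 y)⁻¹ := (nb_meas h3.1).mul (nb_meas h1.1).inv
  have key : ENNReal.ofReal (2 * t) * μ A ≤ S + ENNReal.ofReal (t ^ 2) * M := by
    calc ENNReal.ofReal (2 * t) * μ A = ∫⁻ y in A, ENNReal.ofReal (2 * t) ∂μ := by simp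
      _ ≤ ∫⁻ y in A, (nb μ B1 y * (nb μ B2 y)⁻¹ + ENNReal.ofReal (t ^ 2) * (nb μ B2 y * (nb μ B1 y)⁻¹)) ∂μ := by
        refine lintegral_mono_ae (ae_restrict_of_ae ?_)
        obtain ⟨_, ε, hε, k1⟩ := h1
        obtain ⟨_, ε', hε', k2⟩ := h3
        filter_upwards [k1, k2] with y hy hy'
        have p1 : 0 < (nb μ B1 y).toReal := hε.trans_le hy
        have p2 : 0 < (nb μ B2 y).toReal := hε'.trans_le hy'
        set a := (nb μ B1 y).toReal with ha
        set b := (nb μ B2 y).toReal with hb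
        have ea : nb μ B1 y = ENNReal.ofReal a := (ENNReal.ofReal_toReal (nb_ne_top _ _)).symm
        have eb : nb μ B2 y = ENNReal.ofReal b := (ENNReal.ofReal_toReal (nb_ne_top _ _)).symm
        rw [ea, eb, ← ENNReal.ofReal_inv_of_pos p1, ← ENNReal.ofReal_inv_of_pos p2,
          ← ENNReal.ofReal_mul p1.le, ← ENNReal.ofReal_mul p2.le, ← ENNReal.ofReal_mul (by positivity),
          ← ENNReal.ofReal_add (by positivity) (by positivity)]
        refine ENNReal.ofReal_le_ofReal ?_
        have e : a * b⁻¹ + t ^ 2 * (b * a⁻¹) - 2 * t = (a - t * b) ^ 2 * (a⁻¹ * b⁻¹) := by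
          field_simp; ring
        have : 0 ≤ (a - t * b) ^ 2 * (a⁻¹ * b⁻¹) := by positivity
        linarith
      _ = ∫⁻ y in A, nb μ B1 y * (nb μ B2 y)⁻¹ ∂μ +
          ENNReal.ofReal (t ^ 2) * ∫⁻ y in A, nb μ B2 y * (nb μ B1 y)⁻¹ ∂μ := by
        rw [lintegral_add_left hq1, lintegral_const_mul _ hq2]
      _ ≤ S + ENNReal.ofReal (t ^ 2) * M := by
        gcongr
        exact (setLIntegral_le_lintegral _ _).trans hcv
  have k2 : ENNReal.ofReal (c ^ 2 / M) + ENNReal.ofReal (c ^ 2 / M) ≤ S + ENNReal.ofReal (c ^ 2 / M) := by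
    calc _ = ENNReal.ofReal (2 * t) * ENNReal.ofReal c := by
          rw [← ENNReal.ofReal_add (by positivity) (by positivity), ← ENNReal.ofReal_mul (by positivity)]
          congr 1; rw [ht]; field_simp; ring
      _ ≤ ENNReal.ofReal (2 * t) * μ A := by gcongr
      _ ≤ _ := key
      _ = S + ENNReal.ofReal (c ^ 2 / M) := by
          rw [← ENNReal.ofReal_natCast, ← ENNReal.ofReal_mul (by positivity)]
          congr 2; rw [ht]; field_simp
  exact ENNReal.le_of_add_le_add_right (by simp) k2

end ker
end KS

set_option linter.all false
namespace KS

lemma fou {G : Type*} [AddCommGroup G] [MeasurableSpace G] [MeasurableSub₂ G]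
    (ν : Measure G) (hν : ν Set.univ ≤ 1) {n : ℕ} (e : Fin n → G → ℂ)
    (he : ∀ i, Measurable (e i)) (hb : ∀ i x, ‖e i x‖ ≤ 1)
    (hm : ∀ i y z, e i z * (starRingEnd ℂ) (e i y) = e i (z - y))
    (B' : Set G) (hB' : MeasurableSet B') (γ ε : ℝ) (hγ0 : 0 ≤ γ) (hε0 : 0 ≤ ε)
    (hγ : ∫⁻ y, ν {z | z - y ∈ B'} ∂ν ≤ ENNReal.ofReal γ)
    (h : ∀ᵐ y ∂ν, ∀ᵐ z ∂ν, z - y ∉ B' → ‖∑ i, e i (z - y)‖ ≤ ε * n) :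
    ∑ i, ‖∫ x, e i x ∂ν‖ ^ 2 ≤ (ε + γ) * n := by
  haveI : IsFiniteMeasure ν := ⟨lt_of_le_of_lt hν ENNReal.one_lt_top⟩
  have hei : ∀ i, Integrable (e i) ν := fun i =>
    Integrable.of_bound (he i).aestronglyMeasurable 1 (Filter.Eventually.of_forall (hb i))
  have hm1 : ν.real Set.univ ≤ 1 := by
    have := ENNReal.toReal_mono ENNReal.one_ne_top hν
    simpa [Measure.real] using this
  have key : ((∑ i, ‖∫ x, e i x ∂ν‖ ^ 2 : ℝ) : ℂ) = ∫ y, ∫ z, ∑ i, e i (z - y) ∂ν ∂ν := by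
    have h1 : ∀ y, ∫ z, ∑ i, e i (z - y) ∂ν
        = ∑ i, (∫ z, e i z ∂ν) * (starRingEnd ℂ) (e i y) := by
      intro y
      rw [integral_finsetSum]
      · refine Finset.sum_congr rfl fun i _ => ?_
        rw [← integral_mul_const]
        simp [hm]
      · intro i _
        have := (hei i).mul_const ((starRingEnd ℂ) (e i y))
        simpa [hm] using this
    simp_rw [h1]
    rw [integral_finsetSum]
    · push_cast
      refine Finset.sum_congr rfl fun i _ => ?_
      rw [integral_const_mul, integral_conj, Complex.mul_conj, Complex.normSq_eq_norm_sq]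
      push_cast; rfl
    · intro i _
      refine Integrable.const_mul ?_ _
      exact (LinearIsometryEquiv.integrable_comp_iff (Complex.conjLIE)).2 (hei i)
  have hpos : 0 ≤ ∑ i, ‖∫ x, e i x ∂ν‖ ^ 2 := Finset.sum_nonneg fun i _ => by positivity
  have hk2 : ∑ i, ‖∫ x, e i x ∂ν‖ ^ 2 = ‖∫ y, ∫ z, ∑ i, e i (z - y) ∂ν ∂ν‖ := by
    rw [← key, Complex.norm_real, Real.norm_of_nonneg hpos]
  rw [hk2]
  have hsl : ∀ y, MeasurableSet {z | z - y ∈ B'} := fun y => meas_sl hB' y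
  have hin : ∀ᵐ y ∂ν, ‖∫ z, ∑ i, e i (z - y) ∂ν‖ ≤ ε * n + n * (ν {z | z - y ∈ B'}).toReal := by
    filter_upwards [h] with y hy
    have h2 : ∀ᵐ z ∂ν, ‖∑ i, e i (z - y)‖ ≤ ε * n + n * ({z | z - y ∈ B'}.indicator (fun _ => (1:ℝ)) z) := by
      filter_upwards [hy] with z hz
      by_cases hzB : z - y ∈ B'
      · have : ‖∑ i, e i (z - y)‖ ≤ n := by
          refine (norm_sum_le _ _).trans ?_
          refine (Finset.sum_le_sum fun i _ => hb i _).trans ?_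
          simp
        rw [Set.indicator_of_mem (by exact hzB)]
        nlinarith [mul_nonneg hε0 (Nat.cast_nonneg (α := ℝ) n)]
      · rw [Set.indicator_of_notMem (by exact hzB)]
        simpa using hz hzB
    have hint : Integrable ({z | z - y ∈ B'}.indicator (fun _ => (1:ℝ))) ν :=
      (integrable_const _).indicator (hsl y)
    have h3 := norm_integral_le_of_norm_le (((integrable_const (ε * n)).add (hint.const_mul n))) h2
    refine h3.trans ?_
    have : ∫ z, (ε * n + n * ({z | z - y ∈ B'}.indicator (fun _ => (1:ℝ)) z)) ∂ν
      = ν.real Set.univ * (ε * n) + n * (ν {z | z - y ∈ B'}).toReal := by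
      rw [integral_add (integrable_const _) (hint.const_mul n), integral_const, integral_const_mul, integral_indicator (hsl y)]
      simp [Measure.real]
    simp only [Pi.add_apply]
    rw [this]
    have : ν.real Set.univ * (ε * n) ≤ 1 * (ε * n) := by gcongr
    linarith
  have hmeas : Measurable fun y => ν {z | z - y ∈ B'} := measurable_measure_prodMk_left (ν := ν) (meas_pr hB')
  have hgi : Integrable (fun y => (ν {z | z - y ∈ B'}).toReal) ν := by
    refine Integrable.of_bound hmeas.ennreal_toReal.aestronglyMeasurable 1 (Filter.Eventually.of_forall fun y => ?_)
    rw [Real.norm_of_nonneg ENNReal.toReal_nonneg]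
    have := ENNReal.toReal_mono ENNReal.one_ne_top ((measure_mono (Set.subset_univ {z | z - y ∈ B'})).trans hν)
    simpa using this
  have h4 := norm_integral_le_of_norm_le ((integrable_const (ε * n)).add (hgi.const_mul (n:ℝ))) hin
  refine h4.trans ?_
  have h5 : ∫ y, (ε * n + n * (ν {z | z - y ∈ B'}).toReal) ∂ν
     = ν.real Set.univ * (ε * n) + n * (∫⁻ y, ν {z | z - y ∈ B'} ∂ν).toReal := by
    rw [integral_add (integrable_const _) (hgi.const_mul _), integral_const, integral_const_mul, integral_toReal hmeas.aemeasurable]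
    · simp
    · exact Filter.Eventually.of_forall fun y => measure_lt_top _ _
  simp only [Pi.add_apply]
  rw [h5]
  have h6 : (∫⁻ y, ν {z | z - y ∈ B'} ∂ν).toReal ≤ γ := ENNReal.toReal_le_of_le_ofReal hγ0 hγ
  have h7 : ν.real Set.univ * (ε * n) ≤ 1 * (ε * n) := by gcongr
  have h8 : (n:ℝ) * (∫⁻ y, ν {z | z - y ∈ B'} ∂ν).toReal ≤ n * γ := by gcongr
  linarith

lemma fou1 {G : Type*} [AddCommGroup G] [MeasurableSpace G] [MeasurableSub₂ G]
    (ν : Measure G) (hν : ν Set.univ ≤ 1) {n : ℕ} (e : Fin n → G → ℂ)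
    (he : ∀ i, Measurable (e i)) (hb : ∀ i x, ‖e i x‖ ≤ 1)
    (hm : ∀ i y z, e i z * (starRingEnd ℂ) (e i y) = e i (z - y))
    (B' : Set G) (hB' : MeasurableSet B') (γ ε : ℝ) (hγ0 : 0 ≤ γ) (hε0 : 0 ≤ ε)
    (hγ : ∫⁻ y, ν {z | z - y ∈ B'} ∂ν ≤ ENNReal.ofReal γ)
    (h : ∀ᵐ y ∂ν, ∀ᵐ z ∂ν, z - y ∉ B' → ‖∑ i, e i (z - y)‖ ≤ ε * n) :
    ‖∑ i, ∫ x, e i x ∂ν‖ ≤ n * Real.sqrt (ε + γ) := by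
  have h1 := fou ν hν e he hb hm B' hB' γ ε hγ0 hε0 hγ h
  refine (norm_sum_le _ _).trans ?_
  have h2 := sq_sum_le_card_mul_sum_sq (s := Finset.univ) (f := fun i => ‖∫ x, e i x ∂ν‖)
  simp only [Finset.card_univ, Fintype.card_fin] at h2
  refine le_of_sq_le_sq ?_ (by positivity) |>.trans le_rfl
  rw [mul_pow, Real.sq_sqrt (by positivity)]
  nlinarith [Nat.cast_nonneg (α := ℝ) n]

end KS

set_option linter.all false
namespace KS
open Matrix

abbrev Tor (N : ℕ) := Fin N → UnitAddCircle

noncomputable def prj {N : ℕ} (w : Fin N → ℝ) : Tor N := fun i => ((w i : ℝ) : UnitAddCircle)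

noncomputable def ch {N : ℕ} (ξ : Fin N → ℤ) : C(Tor N, ℂ) := UnitAddTorus.mFourier ξ

lemma ch_apply {N : ℕ} (ξ : Fin N → ℤ) (x : Tor N) : ch ξ x = ∏ i, fourier (ξ i) (x i) := rfl

lemma ch_zero {N : ℕ} (x : Tor N) : ch 0 x = 1 := by simp [ch_apply]

lemma ch_add {N : ℕ} (ξ : Fin N → ℤ) (x y : Tor N) : ch ξ (x + y) = ch ξ x * ch ξ y := by
  simp only [ch_apply, ← Finset.prod_mul_distrib]
  refine Finset.prod_congr rfl fun i _ => ?_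
  simp [fourier_apply, AddCircle.toCircle_add, smul_add]

lemma norm_ch {N : ℕ} (ξ : Fin N → ℤ) (x : Tor N) : ‖ch ξ x‖ = 1 := by
  rw [ch_apply, norm_prod]
  refine Finset.prod_eq_one fun i _ => ?_
  rw [fourier_apply]; exact Circle.norm_coe _

lemma ch_sub {N : ℕ} (ξ : Fin N → ℤ) (y z : Tor N) :
    ch ξ z * (starRingEnd ℂ) (ch ξ y) = ch ξ (z - y) := by
  have h : ch ξ z = ch ξ (z - y) * ch ξ y := by rw [← ch_add, sub_add_cancel]
  rw [h, mul_assoc, Complex.mul_conj, Complex.normSq_eq_norm_sq, norm_ch]; simp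

lemma ch_prj {N : ℕ} (ξ : Fin N → ℤ) (w : Fin N → ℝ) : ch ξ (prj w) = ee (pr ξ w) := by
  simp only [ch_apply, prj, fourier_coe_apply, ee, pr, ← Complex.exp_sum]
  congr 1
  push_cast
  rw [Finset.mul_sum, Finset.mul_sum]
  refine Finset.sum_congr rfl fun i _ => ?_
  ring

instance vol_prob (N : ℕ) : IsProbabilityMeasure (volume : Measure (Tor N)) := by
  haveI : IsProbabilityMeasure (volume : Measure UnitAddCircle) := ⟨UnitAddCircle.measure_univ⟩
  exact Measure.pi.instIsProbabilityMeasure _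

lemma chr_int {N : ℕ} (ξ : Fin N → ℤ) (hξ : ξ ≠ 0) : ∫ x : Tor N, ch ξ x = 0 := by
  obtain ⟨i, hi⟩ := Function.ne_iff.1 hξ
  have hi' : (ξ i : ℝ) ≠ 0 := by exact_mod_cast hi
  have h1 : ch ξ (prj (Pi.single i (1 / (2 * (ξ i : ℝ))))) = -1 := by
    rw [ch_prj]
    have : pr ξ (Pi.single i (1 / (2 * (ξ i : ℝ)))) = 1 / 2 := by
      simp only [pr]
      rw [Finset.sum_eq_single i]
      · simp; field_simp
      · intro j _ hj; simp [hj]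
      · simp
    rw [this, ee]
    rw [← Complex.exp_pi_mul_I]; congr 1; push_cast; ring
  have h2 := integral_add_right_eq_self (μ := (volume : Measure (Tor N))) (fun x => ch ξ x)
    (prj (Pi.single i (1 / (2 * (ξ i : ℝ)))))
  simp_rw [ch_add, h1] at h2
  rw [integral_mul_const] at h2
  linear_combination (-1/2 : ℂ) * h2

lemma trig {N : ℕ} (f : C(Tor N, ℝ)) (δ : ℝ) (hδ : 0 < δ) :
    ∃ (Ξ : Finset (Fin N → ℤ)) (a : (Fin N → ℤ) → ℂ), (∀ ξ ∈ Ξ, ξ ≠ 0) ∧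
      ∀ x, ‖(f x : ℂ) - ((∫ y, f y : ℝ) : ℂ) - ∑ ξ ∈ Ξ, a ξ * ch ξ x‖ ≤ δ := by
  let F : C(Tor N, ℂ) := ⟨fun x => (f x : ℂ), by fun_prop⟩
  have hF : F ∈ closure ((Submodule.span ℂ (Set.range (ch (N := N)))) : Set C(Tor N, ℂ)) := by
    have := UnitAddTorus.span_mFourier_closure_eq_top (d := Fin N)
    have h2 : F ∈ (Submodule.span ℂ (Set.range (UnitAddTorus.mFourier (d := Fin N)))).topologicalClosure := by
      rw [this]; trivial
    exact h2
  obtain ⟨p, hp, hFp⟩ := Metric.mem_closure_iff.1 hF (δ / 2) (by positivity)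
  obtain ⟨c, hc⟩ := Finsupp.mem_span_range_iff_exists_finsupp.1 hp
  have hd : ∀ x, ‖(f x : ℂ) - p x‖ ≤ δ / 2 := fun x => by
    have := ContinuousMap.dist_apply_le_dist (f := F) (g := p) x
    rw [dist_eq_norm] at this
    exact this.trans hFp.le
  classical
  have hpx : ∀ x, p x = c 0 + ∑ ξ ∈ c.support.erase 0, c ξ * ch ξ x := by
    intro x
    rw [← hc]
    simp only [Finsupp.sum, ContinuousMap.coe_sum, Finset.sum_apply, ContinuousMap.coe_smul, Pi.smul_apply, smul_eq_mul]
    by_cases h0 : (0 : Fin N → ℤ) ∈ c.support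
    · rw [← Finset.add_sum_erase _ _ h0, ch_zero, mul_one]
    · rw [Finset.erase_eq_of_notMem h0, Finsupp.notMem_support_iff.1 h0, zero_add]
  have hint : ∀ g : C(Tor N, ℂ), Integrable (fun x => g x) (volume : Measure (Tor N)) := fun g =>
    g.continuous.integrable_of_hasCompactSupport (HasCompactSupport.of_compactSpace _)
  have hpi : ∫ x, p x = c 0 := by
    simp_rw [hpx]
    rw [integral_add (integrable_const _) (integrable_finset_sum _ fun ξ _ => (hint _).const_mul _), integral_finsetSum]
    · rw [Finset.sum_eq_zero]
      · simp
      · intro ξ hξ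
        rw [integral_const_mul, chr_int ξ (Finset.ne_of_mem_erase hξ), mul_zero]
    · exact fun ξ _ => (hint _).const_mul _
  have hdi : ‖((∫ y, f y : ℝ) : ℂ) - c 0‖ ≤ δ / 2 := by
    rw [← hpi, ← integral_complex_ofReal, ← integral_sub (f := fun x => (f x : ℂ)) (hint F) (hint p)]
    have := norm_integral_le_of_norm_le_const (μ := (volume : Measure (Tor N))) (f := fun x => (f x : ℂ) - p x) (C := δ/2) (Filter.Eventually.of_forall hd)
    simpa using this
  refine ⟨c.support.erase 0, c, fun ξ hξ => Finset.ne_of_mem_erase hξ, fun x => ?_⟩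
  have h1 := hd x
  rw [hpx] at h1
  have : (f x : ℂ) - ((∫ y, f y : ℝ) : ℂ) - ∑ ξ ∈ c.support.erase 0, c ξ * ch ξ x
    = ((f x : ℂ) - (c 0 + ∑ ξ ∈ c.support.erase 0, c ξ * ch ξ x)) - (((∫ y, f y : ℝ) : ℂ) - c 0) := by ring
  rw [this]
  refine (norm_sub_le _ _).trans ?_
  linarith

/-- Fourier step. -/
lemma fstep {N : ℕ} (f : C(Tor N, ℝ)) (hf : ∀ x, 0 ≤ f x) (δ : ℝ) (Ξ : Finset (Fin N → ℤ))
    (a : (Fin N → ℤ) → ℂ)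
    (hfa : ∀ x, ‖(f x : ℂ) - ((∫ y, f y : ℝ) : ℂ) - ∑ ξ ∈ Ξ, a ξ * ch ξ x‖ ≤ δ)
    (ν : Measure (Tor N)) (hν : ν Set.univ ≤ 1) {n : ℕ} (S : Fin n → Tor N → Tor N)
    (hS : ∀ i, Continuous (S i)) (hSs : ∀ i x y, S i (x - y) = S i x - S i y)
    (B' : Set (Tor N)) (hB' : MeasurableSet B') (γ ε : ℝ) (hγ0 : 0 ≤ γ) (hε0 : 0 ≤ ε)
    (hγ : ∫⁻ y, ν {z | z - y ∈ B'} ∂ν ≤ ENNReal.ofReal γ)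
    (h : ∀ ξ ∈ Ξ, ∀ᵐ y ∂ν, ∀ᵐ z ∂ν, z - y ∉ B' → ‖∑ i, ch ξ (S i (z - y))‖ ≤ ε * n) :
    (n : ℝ≥0∞) * ENNReal.ofReal (∫ y, f y) * ν Set.univ ≤
      ∑ i, ∫⁻ y, ENNReal.ofReal (f (S i y)) ∂ν +
        n * ENNReal.ofReal (δ + (∑ ξ ∈ Ξ, ‖a ξ‖) * Real.sqrt (ε + γ)) := by
  haveI : IsFiniteMeasure ν := ⟨lt_of_le_of_lt hν ENNReal.one_lt_top⟩
  have hm1 : ν.real Set.univ ≤ 1 := by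
    have := ENNReal.toReal_mono ENNReal.one_ne_top hν
    simpa [Measure.real] using this
  have hδ : 0 ≤ δ := (norm_nonneg _).trans (hfa 0)
  have hI : 0 ≤ ∫ y, f y := integral_nonneg hf
  have hint : ∀ g : Tor N → ℂ, Continuous g → Integrable g ν := fun g hg =>
    hg.integrable_of_hasCompactSupport (HasCompactSupport.of_compactSpace _)
  have hintR : ∀ g : Tor N → ℝ, Continuous g → Integrable g ν := fun g hg =>
    hg.integrable_of_hasCompactSupport (HasCompactSupport.of_compactSpace _)
  have h1 : ∀ ξ ∈ Ξ, ‖∑ i, ∫ x, ch ξ (S i x) ∂ν‖ ≤ n * Real.sqrt (ε + γ) := fun ξ hξ => by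
    refine fou1 ν hν (fun i x => ch ξ (S i x)) (fun i => ((ch ξ).continuous.comp (hS i)).measurable)
      (fun i x => (norm_ch _ _).le) (fun i y z => ?_) B' hB' γ ε hγ0 hε0 hγ (h ξ hξ)
    simp only [hSs, ch_sub]
  have h2 : ∀ i, ‖∫ x, ((f (S i x) : ℂ) - ((∫ y, f y : ℝ) : ℂ) - ∑ ξ ∈ Ξ, a ξ * ch ξ (S i x)) ∂ν‖ ≤ δ := fun i => by
    have := norm_integral_le_of_norm_le_const (μ := ν) (f := fun x => (f (S i x) : ℂ) - ((∫ y, f y : ℝ) : ℂ) - ∑ ξ ∈ Ξ, a ξ * ch ξ (S i x)) (C := δ) (Filter.Eventually.of_forall fun x => hfa _)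
    nlinarith
  have hcS : ∀ i ξ, Continuous fun x => a ξ * ch ξ (S i x) := fun i ξ =>
    continuous_const.mul ((ch ξ).continuous.comp (hS i))
  have hfS : ∀ i, Continuous fun x => f (S i x) := fun i => f.continuous.comp (hS i)
  have h3 : ∀ i, ∫ x, ((f (S i x) : ℂ) - ((∫ y, f y : ℝ) : ℂ) - ∑ ξ ∈ Ξ, a ξ * ch ξ (S i x)) ∂ν
      = ((∫ x, f (S i x) ∂ν : ℝ) : ℂ) - ((ν.real Set.univ * ∫ y, f y : ℝ) : ℂ) - ∑ ξ ∈ Ξ, a ξ * ∫ x, ch ξ (S i x) ∂ν := fun i => by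
    rw [integral_sub, integral_sub, integral_finsetSum, integral_const, integral_complex_ofReal]
    · simp_rw [integral_const_mul]
      simp
    · exact fun ξ _ => hint _ (hcS i ξ)
    · exact hint _ (Complex.continuous_ofReal.comp (hfS i))
    · exact integrable_const _
    · exact hint _ ((Complex.continuous_ofReal.comp (hfS i)).sub continuous_const)
    · exact hint _ (continuous_finset_sum _ fun ξ _ => hcS i ξ)
  have h4 : ‖∑ i, (((∫ x, f (S i x) ∂ν : ℝ) : ℂ) - ((ν.real Set.univ * ∫ y, f y : ℝ) : ℂ) - ∑ ξ ∈ Ξ, a ξ * ∫ x, ch ξ (S i x) ∂ν)‖ ≤ n * δ := by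
    refine (norm_sum_le _ _).trans ?_
    refine (Finset.sum_le_sum fun i _ => (by rw [← h3 i]; exact h2 i : _ ≤ δ)).trans ?_
    simp
  have h5 : ‖∑ i, ∑ ξ ∈ Ξ, a ξ * ∫ x, ch ξ (S i x) ∂ν‖ ≤ (∑ ξ ∈ Ξ, ‖a ξ‖) * (n * Real.sqrt (ε + γ)) := by
    rw [Finset.sum_comm, Finset.sum_mul]
    refine (norm_sum_le _ _).trans (Finset.sum_le_sum fun ξ hξ => ?_)
    rw [← Finset.mul_sum, norm_mul]
    exact mul_le_mul_of_nonneg_left (h1 ξ hξ) (norm_nonneg _)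
  have h6 : n * (ν.real Set.univ * ∫ y, f y) ≤ ∑ i, ∫ x, f (S i x) ∂ν + n * (δ + (∑ ξ ∈ Ξ, ‖a ξ‖) * Real.sqrt (ε + γ)) := by
    have e1 : (((n * (ν.real Set.univ * ∫ y, f y) - ∑ i, ∫ x, f (S i x) ∂ν) : ℝ) : ℂ)
      = -(∑ i, (((∫ x, f (S i x) ∂ν : ℝ) : ℂ) - ((ν.real Set.univ * ∫ y, f y : ℝ) : ℂ) - ∑ ξ ∈ Ξ, a ξ * ∫ x, ch ξ (S i x) ∂ν)) - ∑ i, ∑ ξ ∈ Ξ, a ξ * ∫ x, ch ξ (S i x) ∂ν := by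
      rw [Finset.sum_sub_distrib, Finset.sum_sub_distrib]
      simp
    have e2 : ‖(((n * (ν.real Set.univ * ∫ y, f y) - ∑ i, ∫ x, f (S i x) ∂ν) : ℝ) : ℂ)‖ ≤ n * δ + (∑ ξ ∈ Ξ, ‖a ξ‖) * (n * Real.sqrt (ε + γ)) := by
      rw [e1]
      refine (norm_sub_le _ _).trans ?_
      rw [norm_neg]
      exact add_le_add h4 h5
    rw [Complex.norm_real] at e2
    have := (le_abs_self _).trans e2
    linarith
  have h7 : ∀ i, ∫⁻ y, ENNReal.ofReal (f (S i y)) ∂ν = ENNReal.ofReal (∫ x, f (S i x) ∂ν) := fun i => by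
    rw [ofReal_integral_eq_lintegral_ofReal (hintR _ (hfS i)) (Filter.Eventually.of_forall fun x => hf _)]
  simp_rw [h7]
  rw [← ENNReal.ofReal_sum_of_nonneg (fun i _ => integral_nonneg fun x => hf _)]
  have hu : ν Set.univ = ENNReal.ofReal (ν.real Set.univ) := by simp [Measure.real]
  rw [hu, ← ENNReal.ofReal_natCast n, ← ENNReal.ofReal_mul (by positivity), ← ENNReal.ofReal_mul (by positivity), ← ENNReal.ofReal_mul (by positivity), ← ENNReal.ofReal_add (Finset.sum_nonneg fun i _ => integral_nonneg fun x => hf _) (by positivity)]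
  apply ENNReal.ofReal_le_ofReal
  linarith

end KS

set_option linter.all false
namespace KS
open Matrix

lemma prj_add {N : ℕ} (w w' : Fin N → ℝ) : prj (w + w') = prj w + prj w' := by
  ext i; simp [prj]

lemma prj_sub {N : ℕ} (w w' : Fin N → ℝ) : prj (w - w') = prj w - prj w' := by
  ext i; simp [prj]

lemma prj_neg {N : ℕ} (w : Fin N → ℝ) : prj (-w) = -prj w := by
  ext i; simp [prj]

lemma prj_zero {N : ℕ} : prj (0 : Fin N → ℝ) = 0 := by
  ext i; simp [prj]

lemma prj_cont {N : ℕ} : Continuous (prj (N := N)) :=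
  continuous_pi fun i => (AddCircle.continuous_mk' 1).comp (continuous_apply i)

lemma prj_open {N : ℕ} : IsOpenMap (prj (N := N)) := by
  have h : IsOpenMap (fun x : ℝ => (x : UnitAddCircle)) := QuotientAddGroup.isOpenMap_coe
  have h2 : ∀ᶠ i in Filter.cofinite (α := Fin N), Function.Surjective (fun x : ℝ => (x : UnitAddCircle)) :=
    Filter.Eventually.of_forall fun i => QuotientAddGroup.mk_surjective
  exact IsOpenMap.piMap (fun _ => h) h2

lemma prj_surj {N : ℕ} (x : Tor N) : ∃ w, ‖w‖ ≤ 1 ∧ prj w = x := by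
  have : ∀ i, ∃ t : ℝ, t ∈ Set.Ico (0:ℝ) (0+1) ∧ (t : UnitAddCircle) = x i := fun i => by
    have := AddCircle.coe_image_Ico_eq (1:ℝ) 0
    have h : x i ∈ (Set.univ : Set UnitAddCircle) := trivial
    rw [← this] at h
    obtain ⟨t, ht, h⟩ := h
    exact ⟨t, ht, h⟩
  choose w h1 h2 using this
  refine ⟨w, (pi_norm_le_iff_of_nonneg zero_le_one).2 fun i => ?_, funext h2⟩
  rw [Real.norm_eq_abs, abs_le]
  have := h1 i
  constructor <;> linarith [this.1, this.2]

lemma toral_prj {N : ℕ} (A : Matrix (Fin N) (Fin N) ℤ) (w : Fin N → ℝ) :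
    toralMap A (prj w) = prj (toR A *ᵥ w) := by
  ext i
  simp only [toralMap, prj, Matrix.mulVec, dotProduct, Matrix.map_apply]
  rw [show ((∑ j, (A i j : ℝ) * w j : ℝ) : UnitAddCircle) = (QuotientAddGroup.mk' _) (∑ j, (A i j : ℝ) * w j) from rfl, map_sum]
  refine Finset.sum_congr rfl fun j _ => ?_
  rw [← zsmul_eq_mul, map_zsmul]; rfl

lemma toral_sub {N : ℕ} (A : Matrix (Fin N) (Fin N) ℤ) (x y : Tor N) :
    toralMap A (x - y) = toralMap A x - toralMap A y := by
  ext i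
  simp [toralMap, smul_sub]

lemma toral_cont {N : ℕ} (A : Matrix (Fin N) (Fin N) ℤ) : Continuous (toralMap A) := by
  unfold toralMap
  refine continuous_pi fun i => continuous_finset_sum _ fun j _ => ?_
  exact (continuous_zsmul _).comp (continuous_apply j)

lemma toral_mul {N : ℕ} (A B : Matrix (Fin N) (Fin N) ℤ) (x : Tor N) :
    toralMap (A * B) x = toralMap A (toralMap B x) := by
  obtain ⟨w, -, rfl⟩ := prj_surj x
  rw [toral_prj, toral_prj, toral_prj]
  congr 1
  rw [Matrix.mulVec_mulVec]
  congr 1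
  ext i j
  simp [Matrix.mul_apply]

lemma toral_one {N : ℕ} (x : Tor N) : toralMap 1 x = x := by
  obtain ⟨w, -, rfl⟩ := prj_surj x
  rw [toral_prj]
  congr 1
  have : toR (1 : Matrix (Fin N) (Fin N) ℤ) = 1 := by
    ext i j; simp [Matrix.one_apply]
  rw [this, Matrix.one_mulVec]

variable {d N : ℕ} {α : (Fin d → ℤ) → Matrix (Fin N) (Fin N) ℤ}

def Eig.bx (E : Eig α) (r : Fin N → ℝ) : Set (Tor N) := prj '' {w | ∀ j, ‖E.lam j w‖ < r j}

lemma Eig.bx_open (E : Eig α) (r : Fin N → ℝ) : IsOpen (E.bx r) := by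
  apply prj_open
  rw [Set.setOf_forall]
  refine isOpen_iInter_of_finite fun j => ?_
  exact isOpen_lt ((LinearMap.continuous_of_finiteDimensional (E.lam j)).norm) continuous_const

lemma Eig.bx_meas (E : Eig α) (r : Fin N → ℝ) : MeasurableSet (E.bx r) := (E.bx_open r).measurableSet

lemma Eig.bx_neg (E : Eig α) {r : Fin N → ℝ} {b : Tor N} (hb : b ∈ E.bx r) : -b ∈ E.bx r := by
  obtain ⟨w, hw, rfl⟩ := hb
  exact ⟨-w, fun j => by simpa using hw j, prj_neg w⟩

lemma Eig.bx_add (E : Eig α) {r r' q : Fin N → ℝ} (h : ∀ j, r j + r' j ≤ q j) {b b' : Tor N}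
    (hb : b ∈ E.bx r) (hb' : b' ∈ E.bx r') : b + b' ∈ E.bx q := by
  obtain ⟨w, hw, rfl⟩ := hb
  obtain ⟨w', hw', rfl⟩ := hb'
  refine ⟨w + w', fun j => ?_, prj_add w w'⟩
  rw [map_add]
  have h1 : ‖E.lam j w‖ < r j := hw j
  have h2 : ‖E.lam j w'‖ < r' j := hw' j
  exact lt_of_lt_of_le (lt_of_le_of_lt (norm_add_le _ _) (add_lt_add h1 h2)) (h j)

lemma Eig.bx_sub (E : Eig α) {r r' q : Fin N → ℝ} (h : ∀ j, r j + r' j ≤ q j) {b b' : Tor N}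
    (hb : b ∈ E.bx r) (hb' : b' ∈ E.bx r') : b - b' ∈ E.bx q := by
  rw [sub_eq_add_neg]; exact E.bx_add h hb (E.bx_neg hb')

lemma Eig.bx_mono (E : Eig α) {r q : Fin N → ℝ} (h : ∀ j, r j ≤ q j) : E.bx r ⊆ E.bx q := by
  rintro _ ⟨w, hw, rfl⟩
  exact ⟨w, fun j => (hw j).trans_le (h j), rfl⟩

lemma Eig.bx_cov (E : Eig α) {q r : Fin N → ℝ} (hr : ∀ j, 0 < r j) (T : ℝ) (hT : 0 ≤ T)
    (h : ∀ j, q j ≤ Real.exp T * r j) :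
    ∃ n : ℕ, 0 < n ∧ Cov (E.bx q) (E.bx r) n ∧ (n : ℝ) ≤ Real.exp (2 * N * (T + 3)) := by
  classical
  set Y : ℝ := 4 * Real.exp T with hY
  have hexp : 1 ≤ Real.exp T := Real.one_le_exp hT
  set M : ℕ := ⌈Y⌉₊ with hM
  have hYM : Y ≤ M := Nat.le_ceil _
  let cell : (Fin N → ℝ) → (Fin N → ℤ × ℤ) := fun w j =>
    (⌊4 * (E.lam j w).re / r j⌋, ⌊4 * (E.lam j w).im / r j⌋)
  let Fs : Finset (Fin N → ℤ × ℤ) := Fintype.piFinset fun _ =>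
    (Finset.Icc (-(M:ℤ)) M) ×ˢ (Finset.Icc (-(M:ℤ)) M)
  have hcard : Fs.card = ((2 * M + 1) ^ 2) ^ N := by
    simp only [Fs, Fintype.card_piFinset_const, Finset.card_product, Int.card_Icc]
    simp
    congr 1
    rw [show ((M:ℤ) + 1 + M).toNat = 2 * M + 1 by omega, sq]
  let rep : (Fin N → ℤ × ℤ) → (Fin N → ℝ) := fun c =>
    if hc : ∃ w, cell w = c then hc.choose else 0
  have hrep : ∀ w, cell (rep (cell w)) = cell w := fun w => by
    have hc : ∃ w', cell w' = cell w := ⟨w, rfl⟩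
    simp only [rep, dif_pos hc]
    exact hc.choose_spec
  have hbd : ∀ t s : ℝ, 0 < s → |t| < Y / 4 * s → ⌊4 * t / s⌋ ∈ Finset.Icc (-(M:ℤ)) M := by
    intro t s hs hts
    have h1 : |4 * t / s| < Y := by
      rw [abs_div, abs_mul, abs_of_pos hs, div_lt_iff₀ hs]
      norm_num; linarith
    rw [abs_lt] at h1
    rw [Finset.mem_Icc]
    constructor
    · rw [Int.le_floor]; push_cast; linarith
    · have : (⌊4 * t / s⌋ : ℝ) ≤ M := (Int.floor_le _).trans (by linarith)
      exact_mod_cast this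
  have hnear : ∀ t t' s : ℝ, 0 < s → ⌊4 * t / s⌋ = ⌊4 * t' / s⌋ → |t - t'| < s / 4 := by
    intro t t' s hs hh
    have := Int.abs_sub_lt_one_of_floor_eq_floor hh
    rw [← sub_div, abs_div, abs_of_pos hs, div_lt_one hs, ← mul_sub, abs_mul] at this
    norm_num at this
    linarith
  refine ⟨((2 * M + 1) ^ 2) ^ N, by positivity, ⟨Fs.image fun c => prj (rep c), Finset.card_image_le.trans hcard.le,
    E.bx (fun j => r j / 2), E.bx_meas _, ?_, ?_⟩, ?_⟩
  · rintro _ ⟨w, hw, rfl⟩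
    refine ⟨prj (rep (cell w)), Finset.mem_image_of_mem _ ?_, ?_⟩
    · rw [Fintype.mem_piFinset]
      intro j
      have h1 : ‖E.lam j w‖ < Y / 4 * r j := by
        have := (hw j).trans_le (h j)
        rw [hY]; linarith
      rw [Finset.mem_product]
      exact ⟨hbd _ _ (hr j) ((Complex.abs_re_le_norm _).trans_lt h1), hbd _ _ (hr j) ((Complex.abs_im_le_norm _).trans_lt h1)⟩
    · rw [← prj_sub]
      refine ⟨_, fun j => ?_, rfl⟩
      have h1 := congrFun (hrep w) j
      simp only [cell, Prod.mk.injEq] at h1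
      have h2 := hnear _ _ _ (hr j) h1.1
      have h3 := hnear _ _ _ (hr j) h1.2
      rw [abs_sub_comm] at h2 h3
      rw [map_sub]
      refine (Complex.norm_le_abs_re_add_abs_im _).trans_lt ?_
      rw [Complex.sub_re, Complex.sub_im]
      linarith
  · intro b hb b' hb'
    exact E.bx_sub (fun j => by linarith) hb hb'
  · push_cast
    have h1 : (2 * (M:ℝ) + 1) ≤ Real.exp (T + 3) := by
      have : (M:ℝ) < Y + 1 := Nat.ceil_lt_add_one (by positivity)
      have e3 : (11:ℝ) ≤ Real.exp 3 := by
        have h2 : (2.7:ℝ) < Real.exp 1 := by linarith [Real.exp_one_gt_d9]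
        have : Real.exp 3 = Real.exp 1 ^ 3 := by rw [← Real.exp_nat_mul]; norm_num
        rw [this]
        calc (11:ℝ) ≤ 2.7 ^ 3 := by norm_num
          _ ≤ _ := by gcongr
      rw [Real.exp_add]
      nlinarith
    calc ((2 * (M:ℝ) + 1) ^ 2) ^ N ≤ (Real.exp (T + 3) ^ 2) ^ N := by gcongr
      _ = _ := by rw [← pow_mul, ← Real.exp_nat_mul]; push_cast; ring_nf

lemma Eig.bx_univ (E : Eig α) : ∃ C > 0, ∀ r : Fin N → ℝ, (∀ j, C ≤ r j) → E.bx r = Set.univ := by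
  obtain ⟨C, hC, h⟩ := E.lam_le
  refine ⟨C + 1, by positivity, fun r hr => Set.eq_univ_of_forall fun x => ?_⟩
  obtain ⟨w, hw, rfl⟩ := prj_surj x
  refine ⟨w, fun j => ?_, rfl⟩
  have := h w j
  have := hr j
  nlinarith

lemma Eig.bx_low (E : Eig α) (μ : Measure (Tor N)) [IsProbabilityMeasure μ] {r : Fin N → ℝ} (hr : ∀ j, 0 < r j) : Low μ (E.bx r) := by
  refine ⟨E.bx_meas r, ?_⟩
  obtain ⟨C, hC, h⟩ := E.bx_univ
  obtain ⟨a, ha, ha2⟩ := fin_min r hr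
  obtain ⟨n, -, hn, -⟩ := E.bx_cov (q := fun _ => C) hr (max 0 (Real.log (C / a))) (le_max_left _ _) (fun j => by
    have h1 : C / a ≤ Real.exp (max 0 (Real.log (C / a))) := by
      rw [← Real.log_le_iff_le_exp (by positivity)]; exact le_max_right _ _
    rw [div_le_iff₀ ha] at h1
    refine h1.trans ?_
    exact mul_le_mul_of_nonneg_left (ha2 j) (Real.exp_pos _).le)
  rw [h _ fun j => le_rfl] at hn
  exact cov_low hn

lemma Eig.bx_nhds (E : Eig α) {U : Set (Tor N)} (hU : IsOpen U) (h0 : (0 : Tor N) ∈ U) :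
    ∃ δ > 0, ∀ w : Fin N → ℝ, (∀ j, ‖E.lam j w‖ ≤ δ) → prj w ∈ U := by
  have h1 : prj ⁻¹' U ∈ nhds (0 : Fin N → ℝ) := (hU.preimage prj_cont).mem_nhds (by
    show prj 0 ∈ U; rwa [prj_zero])
  obtain ⟨ε, hε, h⟩ := Metric.mem_nhds_iff.1 h1
  obtain ⟨C, hC, hn⟩ := E.norm_le
  refine ⟨ε / (2 * C), by positivity, fun w hw => h ?_⟩
  rw [mem_ball_zero_iff]
  have := hn w (ε / (2 * C)) (by positivity) hw
  have e : C * (ε / (2 * C)) = ε / 2 := by field_simp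
  linarith

end KS

set_option linter.all false
namespace KS
open Matrix

variable {d N : ℕ} {α : (Fin d → ℤ) → Matrix (Fin N) (Fin N) ℤ}

lemma vol_ac (μ : Measure (Tor N)) [IsProbabilityMeasure μ] (c : ℝ) (hc : 0 < c)
    (H : ∀ f : C(Tor N, ℝ), (∀ x, 0 ≤ f x) →
      ENNReal.ofReal c * ENNReal.ofReal (∫ y, f y) ≤ ∫⁻ y, ENNReal.ofReal (f y) ∂μ) :
    (volume : Measure (Tor N)) ≪ μ := by
  have h1 : ∀ U : Set (Tor N), IsOpen U → ENNReal.ofReal c * volume U ≤ μ U := by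
    intro U hU
    rw [hU.measure_eq_iSup_isCompact, ENNReal.mul_iSup]
    refine iSup_le fun K => ?_
    rw [ENNReal.mul_iSup]
    refine iSup_le fun hKU => ?_
    rw [ENNReal.mul_iSup]
    refine iSup_le fun hK => ?_
    obtain ⟨f, hf0, hf1, hf⟩ := exists_continuous_zero_one_of_isClosed hU.isClosed_compl hK.isClosed
      (Set.disjoint_left.2 fun x hx hxK => hx (hKU hxK))
    refine le_trans ?_ ((H f fun x => (hf x).1).trans ?_)
    · gcongr
      have hint : Integrable (fun x => f x) (volume : Measure (Tor N)) :=
        f.continuous.integrable_of_hasCompactSupport (HasCompactSupport.of_compactSpace _)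
      rw [ofReal_integral_eq_lintegral_ofReal hint (Filter.Eventually.of_forall fun x => (hf x).1)]
      rw [← lintegral_indicator_one hK.isClosed.measurableSet]
      refine lintegral_mono fun x => ?_
      by_cases hx : x ∈ K
      · simp [hx, hf1 hx]
      · simp [hx]
    · rw [← lintegral_indicator_one hU.measurableSet]
      refine lintegral_mono fun x => ?_
      by_cases hx : x ∈ U
      · simp [hx, (hf x).2]
      · simp [hx, hf0 (show x ∈ Uᶜ from hx)]
  intro A hA
  by_contra hne
  have hpos : 0 < ENNReal.ofReal c * volume A := ENNReal.mul_pos (by simpa using hc) hne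
  obtain ⟨U, hAU, hU, hlt⟩ := A.exists_isOpen_lt_of_lt (μ := μ) _ (by rw [hA]; exact hpos)
  refine absurd hlt (not_lt.2 ?_)
  refine le_trans ?_ (h1 U hU)
  gcongr

lemma concl (hα0 : α 0 = 1) (hαadd : ∀ v w, α (v + w) = α v * α w)
    (μ : Measure (Tor N)) [IsProbabilityMeasure μ]
    (hinv : ∀ v, Measure.map (toralMap (α v)) μ = μ)
    (herg : ∀ A : Set (Tor N), MeasurableSet A →
      (∀ v, toralMap (α v) ⁻¹' A = A) → μ A = 0 ∨ μ A = 1)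
    (hac : (volume : Measure (Tor N)) ≪ μ) : μ = volume := by
  have hadd : ∀ v w x, toralMap (α v) (toralMap (α w) x) = toralMap (α (w + v)) x := fun v w x => by
    rw [add_comm, hαadd, toral_mul]
  have hmμ : ∀ v, MeasurePreserving (toralMap (α v)) μ μ := fun v => ⟨(toral_cont _).measurable, hinv v⟩
  have hmv : ∀ v, MeasurePreserving (toralMap (α v)) (volume : Measure (Tor N)) volume := fun v => by
    let φ : Tor N →+ Tor N := AddMonoidHom.ofMapSub (toralMap (α v)) (toral_sub _)
    refine AddMonoidHom.measurePreserving (f := φ) (toral_cont _) (fun x => ⟨toralMap (α (-v)) x, ?_⟩) rfl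
    show toralMap (α v) (toralMap (α (-v)) x) = x
    rw [hadd, neg_add_cancel, hα0, toral_one]
  set g := (volume : Measure (Tor N)).rnDeriv μ with hg
  have hgm : Measurable g := Measure.measurable_rnDeriv _ _
  have hginv : ∀ v, g ∘ toralMap (α v) =ᵐ[μ] g := fun v => (hmv v).rnDeriv_comp_aeEq (hmμ v)
  let G : Tor N → ℝ≥0∞ := fun x => ⨆ v, g (toralMap (α v) x)
  have hGm : Measurable G := Measurable.iSup fun v => hgm.comp (toral_cont _).measurable
  have hGg : G =ᵐ[μ] g := by
    have : ∀ᵐ x ∂μ, ∀ v, g (toralMap (α v) x) = g x := ae_all_iff.2 fun v => hginv v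
    filter_upwards [this] with x hx
    simp only [G, hx, ciSup_const]
  have hGi : ∀ w x, G (toralMap (α w) x) = G x := fun w x => by
    simp only [G, hadd]
    exact (Equiv.addLeft w).iSup_comp (g := fun v => g (toralMap (α v) x))
  obtain ⟨a, ha⟩ := Filter.exists_eventuallyEq_const_of_forall_separating (l := ae μ) (f := G) MeasurableSet
    (fun U hU => by
      rcases herg (G ⁻¹' U) (hGm hU) (fun v => by ext x; simp [hGi]) with h | h
      · right; exact measure_eq_zero_iff_ae_notMem.1 h
      · left; exact (mem_ae_iff_prob_eq_one (hGm hU)).2 h)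
  have hfin : (volume : Measure (Tor N)) = a • μ := by
    rw [← Measure.withDensity_rnDeriv_eq _ _ hac]
    rw [withDensity_congr_ae (hGg.symm.trans ha)]
    exact withDensity_const a
  have h1 : a = 1 := by
    have := congrArg (fun m : Measure (Tor N) => m Set.univ) hfin
    simpa using this.symm
  rw [hfin, h1, one_smul]

end KS

set_option linter.all false
namespace KS
open Matrix

variable {d N : ℕ} {α : (Fin d → ℤ) → Matrix (Fin N) (Fin N) ℤ}

open Classical in
noncomputable def Eig.rad (E : Eig α) (X η : ℝ) (s : Fin N → ℝ) (j : Fin N) : ℝ :=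
  if E.xv j = 0 then η else X * Real.exp (-(s j * ‖E.xv j‖))

lemma Eig.rad_pos (E : Eig α) {X η : ℝ} (hX : 0 < X) (hη : 0 < η) (s : Fin N → ℝ) (j : Fin N) :
    0 < E.rad X η s j := by
  unfold Eig.rad; split_ifs <;> positivity

lemma toral_iter (E : Eig α) (v : Fin d → ℤ) (w : Fin N → ℝ) (k : ℕ) :
    ∃ w', (toralMap (α v))^[k] (prj w) = prj w' ∧ ∀ j, E.lam j w' = E.sg j v ^ k * E.lam j w := by
  induction k with
  | zero => exact ⟨w, rfl, fun j => by simp⟩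
  | succ k ih =>
    obtain ⟨w', h1, h2⟩ := ih
    refine ⟨toR (α v) *ᵥ w', ?_, fun j => ?_⟩
    · rw [Function.iterate_succ_apply', h1, toral_prj]
    · rw [E.eig, h2]; ring

lemma ent_box (E : Eig α) (μ : Measure (Tor N)) [IsProbabilityMeasure μ]
    (hinv : ∀ v, Measure.map (toralMap (α v)) μ = μ)
    (hent : ∃ v, 0 < ksEntropy (toralMap (α v)) μ) :
    ∃ h > 0, ∃ δ > 0, ∀ X η : ℝ, 0 < X → 0 < η → η ≤ δ → ∃ R0 : ℝ, ∀ R ≥ R0,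
      h * R ≤ - ∫ x, lg μ (E.bx (E.rad X η (fun _ => R))) x ∂μ := by
  obtain ⟨v0, hv0⟩ := hent
  obtain ⟨h, hh, U, hU, hU0, H⟩ := ent_final (μ := μ) (T := toralMap (α v0))
    ⟨(toral_cont _).measurable, hinv v0⟩ (toral_sub _) hv0
  obtain ⟨δ, hδ, hδU⟩ := E.bx_nhds hU hU0
  set V : ℝ := ‖(WithLp.toLp 2 (fun i => (v0 i : ℝ)) : EuclideanSpace ℝ (Fin d))‖ + 1 with hV
  have hV0 : 0 < V := by positivity
  refine ⟨h / (4 * V), by positivity, δ, hδ, fun X η hX hη hηδ => ?_⟩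
  -- lower bound for the nonzero norms
  obtain ⟨κ, hκ, hκ2⟩ := fin_min (fun j => if E.xv j = 0 then 1 else ‖E.xv j‖) (fun j => by
    split_ifs with h
    · exact one_pos
    · exact norm_pos_iff.2 h)
  refine ⟨max (4 * V) (2 / κ * Real.log (X / δ)), fun R hR => ?_⟩
  have hR1 : 4 * V ≤ R := (le_max_left _ _).trans hR
  have hR2 : 2 / κ * Real.log (X / δ) ≤ R := (le_max_right _ _).trans hR
  have hR0 : 0 < R := by linarith
  set n : ℕ := ⌊R / (2 * V)⌋₊ with hn
  have hnle : (n : ℝ) ≤ R / (2 * V) := Nat.floor_le (by positivity)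
  have hnge : R / (2 * V) < n + 1 := Nat.lt_floor_add_one _
  have h2 : 2 ≤ R / (2 * V) := by rw [le_div_iff₀ (by positivity)]; linarith
  have hn1 : 1 ≤ n := by
    rw [hn, Nat.one_le_floor_iff]; linarith
  have hq : R / (2 * V) = 2 * (R / (4 * V)) := by field_simp; ring
  have hb := H n hn1 (E.bx (E.rad X η (fun _ => R))) (E.bx_low μ (E.rad_pos hX hη _)) (by
    rintro _ ⟨w, hw, rfl⟩ k hk
    obtain ⟨w', h1, h3⟩ := toral_iter E v0 w k
    rw [h1]
    refine hδU _ fun j => ?_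
    rw [h3, norm_mul, norm_pow, E.norm_sg, ← Real.exp_nat_mul]
    have hwj : ‖E.lam j w‖ < E.rad X η (fun _ => R) j := hw j
    unfold Eig.rad at hwj
    have hchi := E.chi_abs_le j v0
    split_ifs at hwj with hx
    · have : E.chi j v0 = 0 := by simp [Eig.chi, hx]
      rw [this]; simp; linarith
    · have hκj := hκ2 j
      rw [if_neg hx] at hκj
      have hkR : (k:ℝ) * V ≤ R / 2 := by
        have : (k : ℝ) ≤ R / (2 * V) := le_trans (by exact_mod_cast hk.le) hnle
        rw [le_div_iff₀ (by positivity)] at this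
        linarith
      have e1 : (k:ℝ) * E.chi j v0 ≤ R / 2 * ‖E.xv j‖ := by
        have hnj := norm_nonneg (E.xv j)
        calc (k:ℝ) * E.chi j v0 ≤ k * (‖E.xv j‖ * V) := by
              gcongr; refine hchi.trans ?_; rw [hV]; gcongr; linarith
          _ = (k * V) * ‖E.xv j‖ := by ring
          _ ≤ _ := by gcongr
      calc Real.exp (k * E.chi j v0) * ‖E.lam j w‖
          ≤ Real.exp (R / 2 * ‖E.xv j‖) * (X * Real.exp (-(R * ‖E.xv j‖))) := by gcongr
        _ = X * Real.exp (-(R / 2 * ‖E.xv j‖)) := by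
            rw [mul_left_comm, ← Real.exp_add]; congr 2; ring
        _ ≤ X * Real.exp (-(Real.log (X / δ))) := by
            gcongr
            calc Real.log (X / δ) = κ / 2 * (2 / κ * Real.log (X / δ)) := by field_simp
              _ ≤ κ / 2 * R := by gcongr
              _ ≤ _ := by nlinarith
        _ = δ := by
            rw [Real.exp_neg, Real.exp_log (by positivity)]; field_simp)
  refine le_trans ?_ hb
  rw [div_mul_eq_mul_div, mul_div_assoc]
  gcongr
  linarith

lemma fin_step (f : Finset (Fin N) → ℝ) (hN : 0 < N) (G : ℝ) (h : G ≤ f Finset.univ - f ∅) :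
    ∃ S r, G / N ≤ f (insert r S) - f S := by
  by_contra! hc
  have hN' : (0 : ℝ) < N := by exact_mod_cast hN
  have : ∀ S : Finset (Fin N), f S - f ∅ ≤ S.card * (G / N) ∧ (S.Nonempty → f S - f ∅ < S.card * (G / N)) := by
    intro S
    induction S using Finset.induction_on with
    | empty => simp
    | insert a S ha ih =>
      have := hc S a
      rw [Finset.card_insert_of_notMem ha]; push_cast
      constructor
      · linarith [ih.1]
      · intro _; linarith [ih.1]
  have h1 := (this Finset.univ).2 ⟨⟨0, hN⟩, Finset.mem_univ _⟩
  simp only [Finset.card_univ, Fintype.card_fin] at h1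
  rw [mul_div_cancel₀ _ hN'.ne'] at h1
  linarith

open Classical in
lemma pigeon (E : Eig α) (hN : 0 < N) (X η : ℝ) (Φ : (Fin N → ℝ) → ℝ)
    (hΦ : ∀ s s', E.rad X η s = E.rad X η s' → Φ s = Φ s') (h : ℝ) (hh : 0 < h) (R0 : ℝ)
    (H : ∀ R ≥ R0, h * R ≤ Φ (fun _ => R)) (smin l : ℝ) (hl : 0 < l) :
    ∃ s ≥ smin, ∃ D : Finset (Fin N), ∃ r, E.xv r ≠ 0 ∧
      h * l / (2 * N) ≤ Φ (fun j => if j ∈ D ∪ E.cls r then s + l else s) - Φ (fun j => if j ∈ D then s + l else s) := by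
  have hN' : (0 : ℝ) < N := by exact_mod_cast hN
  have h1 : ∃ s ≥ smin, h * l / 2 ≤ Φ (fun _ => s + l) - Φ (fun _ => s) := by
    by_contra! hc
    have hk : ∀ k : ℕ, Φ (fun _ => smin + k * l) ≤ Φ (fun _ => smin) + k * (h * l / 2) := by
      intro k
      induction k with
      | zero => simp
      | succ k ih =>
        have := hc (smin + k * l) (by nlinarith [Nat.cast_nonneg (α := ℝ) k])
        push_cast
        rw [show smin + (k + 1) * l = smin + k * l + l by ring]
        linarith
    obtain ⟨k, hk1⟩ := exists_nat_gt (max ((R0 - smin) / l) ((Φ (fun _ => smin) - h * smin) / (h * l / 2)))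
    have hk2 := (le_max_left _ _).trans_lt hk1
    have hk3 := (le_max_right _ _).trans_lt hk1
    rw [div_lt_iff₀ hl] at hk2
    rw [div_lt_iff₀ (by positivity)] at hk3
    have := H (smin + k * l) (by linarith)
    have := hk k
    nlinarith
  obtain ⟨s, hs, h1⟩ := h1
  let C : Finset (Fin N) → Finset (Fin N) := fun S => S.biUnion E.cls
  obtain ⟨S, r, hSr⟩ := fin_step (fun S => Φ (fun j => if j ∈ C S then s + l else s)) hN (h * l / 2) (by
    refine h1.trans (le_of_eq ?_)
    congr 1
    · apply hΦ
      funext j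
      unfold Eig.rad
      by_cases hj : E.xv j = 0
      · simp [hj]
      · have : j ∈ C Finset.univ := Finset.mem_biUnion.2 ⟨j, Finset.mem_univ _, E.self_mem_cls j hj⟩
        simp [hj, this])
  have hC : C (insert r S) = C S ∪ E.cls r := by
    simp only [C, Finset.biUnion_insert, Finset.union_comm]
  simp only [hC] at hSr
  refine ⟨s, hs, C S, r, fun hr => ?_, ?_⟩
  · have : E.cls r = ∅ := by
      ext j; rw [E.mem_cls]; simp [hr]
    rw [this, Finset.union_empty, sub_self] at hSr
    have : 0 < h * l / 2 / N := by positivity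
    linarith
  · rwa [div_div] at hSr

end KS

set_option linter.all false
namespace KS
open Matrix

variable {d N : ℕ} {α : (Fin d → ℤ) → Matrix (Fin N) (Fin N) ℤ}

open Classical in
lemma box_osc (E : Eig α) (hN : 0 < N) (hd : 1 < d) (hα0 : α 0 = 1)
    (hαadd : ∀ v w, α (v + w) = α v * α w)
    (hstrirr : ∀ Λ : AddSubgroup (Fin d → ℤ), Λ.FiniteIndex → IsIrreducibleOn α Λ)
    (l ε δ : ℝ) (hl : 0 < l) (hε : 0 < ε) (hδ : 0 < δ) (Ξ : Finset (Fin N → ℤ)) (hΞ : ∀ ξ ∈ Ξ, ξ ≠ 0) :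
    ∃ X > 0, ∃ η > 0, η ≤ δ ∧ ∃ smin : ℝ, ∀ s ≥ smin, ∀ (D : Finset (Fin N)) (r : Fin N), E.xv r ≠ 0 →
      ∃ n : ℕ, 0 < n ∧ ∃ K : Fin n → (Fin d → ℤ), ∀ b : Tor N,
        b ∈ E.bx (E.rad X η (fun j => if j ∈ D then s + l else s)) →
        b ∉ E.bx (E.rad X η (fun j => if j ∈ D ∪ E.cls r then s + l else s)) →
        ∀ ξ ∈ Ξ, ‖∑ i, ch ξ (toralMap (α (K i)) b)‖ ≤ ε * n := by
  obtain ⟨C, hC, hround⟩ := E.round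
  obtain ⟨Q, hQ, hQ2⟩ := fin_max (fun j => ‖E.xv j‖)
  have hosc := fun r => osc E hN hd hα0 hαadd hstrirr r (2 * C + l * Q) ε hε Ξ hΞ
  choose X0 hX0 hosc using hosc
  obtain ⟨X, hX, hXX⟩ := fin_max X0
  have hosc' := fun r => hosc r (X * Real.exp C) (by
    have h1 := hXX r
    have h2 : 1 ≤ Real.exp C := Real.one_le_exp hC.le
    nlinarith)
  choose n hn K η hη hosc' using hosc'
  obtain ⟨η0, hη0, hη02⟩ := fin_min η hη
  let gap : Fin N × Fin N → ℝ := fun p =>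
    ‖E.xv p.1‖ - inner ℝ (E.xv p.1) (E.xv p.2) / ‖E.xv p.2‖
  obtain ⟨κ, hκ, hκ2⟩ := fin_min (fun p : Fin N × Fin N => if 0 < gap p then gap p else 1) (fun p => by
    split_ifs with h
    · exact h
    · exact one_pos)
  refine ⟨X, hX, min η0 δ, lt_min hη0 hδ, min_le_right _ _, max 0 (1 / κ * (Real.log (X / η0) + C)), fun s hs D r hr => ?_⟩
  have hs0 : 0 ≤ s := (le_max_left _ _).trans hs
  have hs1 : Real.log (X / η0) + C ≤ κ * s := by
    have := (le_max_right _ _).trans hs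
    calc _ = κ * (1 / κ * (Real.log (X / η0) + C)) := by field_simp
      _ ≤ _ := by gcongr
  obtain ⟨m, hm⟩ := hround r hr s
  have hrn : 0 < ‖E.xv r‖ := norm_pos_iff.2 hr
  refine ⟨n r, hn r, fun i => K r i + m, ?_⟩
  rintro _ ⟨w, hw, rfl⟩ hnot ξ hξ
  have key : ∀ i, ch ξ (toralMap (α (K r i + m)) (prj w)) = ee (pr ξ (toR (α (K r i)) *ᵥ (toR (α m) *ᵥ w))) := by
    intro i
    rw [hαadd, toral_mul, toral_prj, toral_prj, ch_prj]
  simp_rw [key]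
  have hlam : ∀ j, ‖E.lam j (toR (α m) *ᵥ w)‖ = Real.exp (E.chi j m) * ‖E.lam j w‖ := fun j => by
    rw [E.eig, norm_mul, E.norm_sg]
  have hw' : ∀ j, E.xv j ≠ 0 → ‖E.lam j w‖ ≤ X * Real.exp (-(s * ‖E.xv j‖)) := by
    intro j hj
    have h1 : ‖E.lam j w‖ < _ := hw j
    unfold Eig.rad at h1
    rw [if_neg hj] at h1
    refine h1.le.trans ?_
    gcongr
    dsimp only; split_ifs <;> linarith
  have hcl : ∀ j ∈ E.cls r, inner ℝ (E.xv j) (E.xv r) / ‖E.xv r‖ = ‖E.xv j‖ := by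
    intro j hj
    rw [((E.mem_cls r j).1 hj).2.2]; field_simp
  refine hosc' r _ ?_ ?_ ?_ ξ hξ
  · intro j hj
    have h1 := hm j
    rw [hcl j hj, abs_le] at h1
    have h2 := hw' j ((E.mem_cls r j).1 hj).1
    rw [hlam]
    calc _ ≤ Real.exp (s * ‖E.xv j‖ + C) * (X * Real.exp (-(s * ‖E.xv j‖))) := by
          gcongr; linarith [h1.2]
      _ = _ := by rw [mul_left_comm, ← Real.exp_add]; congr 2; ring
  · have h1 : ∃ j, E.rad X (min η0 δ) (fun j => if j ∈ D ∪ E.cls r then s + l else s) j ≤ ‖E.lam j w‖ := by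
      by_contra! hcon
      exact hnot ⟨w, hcon, rfl⟩
    obtain ⟨j, hj⟩ := h1
    have hwj : ‖E.lam j w‖ < _ := hw j
    have hlt := hj.trans_lt hwj
    have hx : E.xv j ≠ 0 := by
      intro hx
      simp [Eig.rad, hx] at hlt
    simp only [Eig.rad, if_neg hx] at hlt hj
    have hjc : j ∈ E.cls r := by
      by_contra hjc
      simp [hjc] at hlt
    have hjD : j ∈ D ∪ E.cls r := Finset.mem_union_right _ hjc
    rw [if_pos hjD] at hj
    refine ⟨j, hjc, ?_⟩
    have h1 := hm j
    rw [hcl j hjc, abs_le] at h1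
    rw [hlam]
    have hQj := hQ2 j
    calc _ = X * Real.exp (-C - l * Q) := by rw [mul_assoc, ← Real.exp_add]; congr 2; ring
      _ ≤ X * Real.exp (-C - l * ‖E.xv j‖) := by gcongr
      _ = Real.exp (s * ‖E.xv j‖ - C) * (X * Real.exp (-((s + l) * ‖E.xv j‖))) := by
          rw [mul_left_comm, ← Real.exp_add]; congr 2; ring
      _ ≤ _ := by gcongr; linarith [h1.1]
  · intro j hj
    rw [hlam]
    by_cases hx : E.xv j = 0
    · have h1 : ‖E.lam j w‖ < _ := hw j
      simp only [Eig.rad, if_pos hx] at h1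
      have : E.chi j m = 0 := by simp [Eig.chi, hx]
      rw [this, Real.exp_zero, one_mul]
      exact h1.le.trans ((min_le_left _ _).trans (hη02 r))
    · have hg : 0 < gap (j, r) := by
        have h1 := real_inner_le_norm (E.xv j) (E.xv r)
        have h2 : inner ℝ (E.xv j) (E.xv r) ≠ ‖E.xv j‖ * ‖E.xv r‖ := fun h => hj ((E.mem_cls r j).2 ⟨hx, hr, h⟩)
        have h3 := lt_of_le_of_ne h1 h2
        simp only [gap]
        rw [sub_pos, div_lt_iff₀ hrn]; exact h3
      have hκj := hκ2 (j, r)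
      rw [if_pos hg] at hκj
      have h1 := hm j
      rw [abs_le] at h1
      have h2 := hw' j hx
      refine le_trans ?_ (hη02 r)
      calc _ ≤ Real.exp (s * (inner ℝ (E.xv j) (E.xv r) / ‖E.xv r‖) + C) * (X * Real.exp (-(s * ‖E.xv j‖))) := by
            gcongr; linarith [h1.2]
        _ = X * Real.exp (C - s * gap (j, r)) := by
            rw [mul_left_comm, ← Real.exp_add]; congr 2; simp only [gap]; ring
        _ ≤ X * Real.exp (-(Real.log (X / η0))) := by
            gcongr
            nlinarith
        _ = η0 := by rw [Real.exp_neg, Real.exp_log (by positivity)]; field_simp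

end KS

set_option linter.all false
namespace KS
open Matrix

variable {d N : ℕ} {α : (Fin d → ℤ) → Matrix (Fin N) (Fin N) ℤ}

/-- The averaging step for a single pair of boxes. -/
lemma avg_step (E : Eig α) (μ : Measure (Tor N)) [IsProbabilityMeasure μ]
    (hinv : ∀ v, Measure.map (toralMap (α v)) μ = μ)
    (r r' : Fin N → ℝ) (hr : ∀ j, 0 < r j) (hr' : ∀ j, 0 < r' j)
    (g c' : ℝ) (hc' : 0 < c')
    (hA : c' ≤ (μ {x | (nb μ (E.bx r') x) ≤ ENNReal.ofReal (Real.exp (-(g / 2))) * nb μ (E.bx r) x}).toReal)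
    (f : C(Tor N, ℝ)) (hf : ∀ x, 0 ≤ f x) (δ : ℝ) (Ξ : Finset (Fin N → ℤ))
    (a : (Fin N → ℤ) → ℂ)
    (hfa : ∀ x, ‖(f x : ℂ) - ((∫ y, f y : ℝ) : ℂ) - ∑ ξ ∈ Ξ, a ξ * ch ξ x‖ ≤ δ)
    (ε : ℝ) (hε : 0 ≤ ε) {n : ℕ} (hn : 0 < n) (K : Fin n → (Fin d → ℤ))
    (hK : ∀ b ∈ E.bx r, b ∉ E.bx r' → ∀ ξ ∈ Ξ, ‖∑ i, ch ξ (toralMap (α (K i)) b)‖ ≤ ε * n) :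
    ENNReal.ofReal (c' ^ 2 / Real.exp (2 * N * (Real.log 4 + 3))) * ENNReal.ofReal (∫ y, f y) ≤
      ∫⁻ y, ENNReal.ofReal (f y) ∂μ +
        ENNReal.ofReal (δ + (∑ ξ ∈ Ξ, ‖a ξ‖) * Real.sqrt (ε + Real.exp (-(g / 2)))) := by
  set A := {x | (nb μ (E.bx r') x) ≤ ENNReal.ofReal (Real.exp (-(g / 2))) * nb μ (E.bx r) x} with hAdef
  have hAm : MeasurableSet A :=
    measurableSet_le (nb_meas (E.bx_meas _)) ((nb_meas (E.bx_meas _)).const_mul _)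
  set B1 := E.bx (fun j => r j / 2) with hB1
  set B32 := E.bx (fun j => 3 * r j / 2) with hB32
  set B2 := E.bx (fun j => 2 * r j) with hB2
  have m1 : MeasurableSet B1 := E.bx_meas _
  have m32 : MeasurableSet B32 := E.bx_meas _
  have hsub : B1 ⊆ B32 := E.bx_mono fun j => by linarith [hr j]
  have hin : ∀ x, (n : ℝ≥0∞) * ENNReal.ofReal (∫ y, f y) * nuK μ A B1 B32 x Set.univ ≤
      ∑ i, ∫⁻ y, ENNReal.ofReal (f (toralMap (α (K i)) y)) ∂(nuK μ A B1 B32 x) +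
        n * ENNReal.ofReal (δ + (∑ ξ ∈ Ξ, ‖a ξ‖) * Real.sqrt (ε + Real.exp (-(g / 2)))) := by
    intro x
    refine fstep f hf δ Ξ a hfa _ (nuK_mass hsub x) (fun i => toralMap (α (K i))) (fun i => toral_cont _)
      (fun i => toral_sub _) (E.bx r') (E.bx_meas _) _ ε (Real.exp_pos _).le hε ?_ ?_
    · exact nuK_diag (B := E.bx r) hAm m1 (E.bx_meas _) hsub
        (fun b hb b' hb' => E.bx_add (fun j => by linarith) hb hb') _ (fun y hy => hy) x
    · intro ξ hξ
      filter_upwards [nuK_ae (μ := μ) (B32 := B32) hAm m1 x] with y hy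
      filter_upwards [nuK_ae (μ := μ) (B32 := B32) hAm m1 x] with z hz hzy
      refine hK _ ?_ hzy ξ hξ
      have := E.bx_sub (q := r) (fun j => by linarith) hz.2 hy.2
      rwa [sub_sub_sub_cancel_right] at this
  have hmeasf : ∀ i, Measurable fun y => ENNReal.ofReal (f (toralMap (α (K i)) y)) := fun i =>
    ENNReal.measurable_ofReal.comp (f.continuous.comp (toral_cont _)).measurable
  have hav : ∀ i, ∫⁻ x, ∫⁻ y, ENNReal.ofReal (f (toralMap (α (K i)) y)) ∂(nuK μ A B1 B32 x) ∂μ ≤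
      ∫⁻ y, ENNReal.ofReal (f y) ∂μ := fun i => by
    refine (nuK_avg hAm m1 m32 (fun b hb b' hb' => E.bx_sub (fun j => by linarith [hr j]) hb hb') _ (hmeasf i)).trans ?_
    have hmp : MeasurePreserving (toralMap (α (K i))) μ μ := ⟨(toral_cont _).measurable, hinv _⟩
    exact (hmp.lintegral_comp (f := fun y => ENNReal.ofReal (f y)) (ENNReal.measurable_ofReal.comp f.continuous.measurable)).le
  obtain ⟨M, hM, hcov, hMle⟩ := E.bx_cov (q := fun j => 2 * r j) (r := fun j => r j / 2) (fun j => half_pos (hr j)) (Real.log 4)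
    (Real.log_nonneg (by norm_num)) (fun j => by rw [Real.exp_log (by norm_num)]; linarith)
  have hlow := nuK_low (μ := μ) hAm (E.bx_low μ fun j => half_pos (hr j)) m32 (E.bx_low μ fun j => mul_pos two_pos (hr j))
    (fun b hb => E.bx_neg hb) (fun b hb b' hb' => E.bx_add (fun j => by linarith) hb hb') hM hcov c' hc'
    (by rw [ENNReal.ofReal_le_iff_le_toReal (measure_ne_top _ _)]; exact hA)
  have hlow2 : ENNReal.ofReal (c' ^ 2 / Real.exp (2 * N * (Real.log 4 + 3))) ≤ ∫⁻ x, nuK μ A B1 B32 x Set.univ ∂μ := by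
    refine le_trans (ENNReal.ofReal_le_ofReal ?_) hlow
    have : (0:ℝ) < M := by exact_mod_cast hM
    gcongr
  set err := ENNReal.ofReal (δ + (∑ ξ ∈ Ξ, ‖a ξ‖) * Real.sqrt (ε + Real.exp (-(g / 2)))) with herr
  have hmν : Measurable fun x => nuK μ A B1 B32 x Set.univ := by
    have := nuK_meas (μ := μ) hAm m1 m32 (fun _ => 1) measurable_const
    simpa using this
  have hmi : ∀ i, Measurable fun x => ∫⁻ y, ENNReal.ofReal (f (toralMap (α (K i)) y)) ∂(nuK μ A B1 B32 x) := fun i =>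
    nuK_meas hAm m1 m32 _ (hmeasf i)
  have h1 : (n : ℝ≥0∞) * ENNReal.ofReal (∫ y, f y) * ∫⁻ x, nuK μ A B1 B32 x Set.univ ∂μ ≤
      n * (∫⁻ y, ENNReal.ofReal (f y) ∂μ + err) := by
    rw [← lintegral_const_mul _ hmν]
    refine (lintegral_mono hin).trans ?_
    rw [lintegral_add_right _ measurable_const, lintegral_finsetSum _ (fun i _ => hmi i), mul_add]
    refine add_le_add ?_ (by simp)
    refine (Finset.sum_le_sum fun i _ => hav i).trans ?_
    simp
  have hn0 : (n : ℝ≥0∞) ≠ 0 := by exact_mod_cast hn.ne'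
  have h2 : (n : ℝ≥0∞) * (ENNReal.ofReal (c' ^ 2 / Real.exp (2 * N * (Real.log 4 + 3))) * ENNReal.ofReal (∫ y, f y)) ≤
      n * (∫⁻ y, ENNReal.ofReal (f y) ∂μ + err) := by
    refine le_trans ?_ h1
    calc _ = (n : ℝ≥0∞) * ENNReal.ofReal (∫ y, f y) * ENNReal.ofReal (c' ^ 2 / Real.exp (2 * N * (Real.log 4 + 3))) := by ring
      _ ≤ _ := mul_le_mul_right hlow2 _
  exact (ENNReal.mul_le_mul_iff_right hn0 (ENNReal.natCast_ne_top n)).1 h2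

open Classical in
lemma main_lower (E : Eig α) (hN : 0 < N) (hd : 1 < d) (hα0 : α 0 = 1)
    (hαadd : ∀ v w, α (v + w) = α v * α w)
    (hstrirr : ∀ Λ : AddSubgroup (Fin d → ℤ), Λ.FiniteIndex → IsIrreducibleOn α Λ)
    (μ : Measure (Tor N)) [IsProbabilityMeasure μ]
    (hinv : ∀ v, Measure.map (toralMap (α v)) μ = μ)
    (hent : ∃ v, 0 < ksEntropy (toralMap (α v)) μ) :
    ∃ c > 0, ∀ f : C(Tor N, ℝ), (∀ x, 0 ≤ f x) →
      ENNReal.ofReal c * ENNReal.ofReal (∫ y, f y) ≤ ∫⁻ y, ENNReal.ofReal (f y) ∂μ := by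
  obtain ⟨h, hh, δ', hδ', Hent⟩ := ent_box E μ hinv hent
  obtain ⟨Q, hQ, hQ2⟩ := fin_max (fun j => ‖E.xv j‖)
  have hN' : (0 : ℝ) < N := by exact_mod_cast hN
  set c := h / (2 * N) with hc
  have hc0 : 0 < c := by positivity
  set c' := (c / 4) / (2 * N * (Q + 3)) with hc'
  have hc'0 : 0 < c' := by positivity
  refine ⟨c' ^ 2 / Real.exp (2 * N * (Real.log 4 + 3)), by positivity, fun f hf => ?_⟩
  refine ENNReal.le_of_forall_pos_le_add fun e he _ => ?_
  obtain ⟨Ξ, a, hΞ, hfa⟩ := trig f (e / 2) (by positivity)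
  set S := ∑ ξ ∈ Ξ, ‖a ξ‖ with hS
  have hS0 : 0 ≤ S := Finset.sum_nonneg fun _ _ => norm_nonneg _
  -- choose small parameter
  have hex : ∃ ε' : ℝ, 0 < ε' ∧ S * Real.sqrt (ε' + ε') ≤ e / 2 := by
    have he' : (0:ℝ) < e := he
    refine ⟨((e / 2) / (S + 1)) ^ 2 / 2, by positivity, ?_⟩
    rw [add_halves, Real.sqrt_sq (by positivity)]
    rw [mul_div_assoc', div_le_iff₀ (by positivity)]
    nlinarith
  obtain ⟨ε', hε', hSε⟩ := hex
  set l := max (max (4 / c) 1) (2 / c * Real.log (1 / ε')) with hl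
  have hl1 : 4 / c ≤ l := (le_max_left _ _).trans (le_max_left _ _)
  have hl2 : 1 ≤ l := (le_max_right _ _).trans (le_max_left _ _)
  have hl3 : 2 / c * Real.log (1 / ε') ≤ l := le_max_right _ _
  have hl0 : 0 < l := by linarith
  have hγ : Real.exp (-(c * l / 2)) ≤ ε' := by
    rw [← Real.le_log_iff_exp_le hε']
    have : Real.log (1 / ε') ≤ c * l / 2 := by
      calc _ = c / 2 * (2 / c * Real.log (1 / ε')) := by field_simp
        _ ≤ c / 2 * l := by gcongr
        _ = _ := by ring
    rw [one_div, Real.log_inv] at this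
    linarith
  obtain ⟨X, hX, η, hη, hηδ, smin, Hosc⟩ := box_osc E hN hd hα0 hαadd hstrirr l ε' δ' hl0 hε' hδ' Ξ hΞ
  obtain ⟨R0, HR⟩ := Hent X η hX hη hηδ
  obtain ⟨s, hs, D, r, hr, hgain⟩ := pigeon E hN X η
    (fun s => - ∫ x, lg μ (E.bx (E.rad X η s)) x ∂μ) (fun s s' hss => by simp only [hss]) h hh R0 HR smin l hl0
  obtain ⟨n, hn, K, hK⟩ := Hosc s hs D r hr
  set r1 := E.rad X η (fun j => if j ∈ D then s + l else s) with hr1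
  set r2 := E.rad X η (fun j => if j ∈ D ∪ E.cls r then s + l else s) with hr2
  have hp1 : ∀ j, 0 < r1 j := E.rad_pos hX hη _
  have hp2 : ∀ j, 0 < r2 j := E.rad_pos hX hη _
  have hg : c * l ≤ (∫ x, lg μ (E.bx r1) x ∂μ) - ∫ x, lg μ (E.bx r2) x ∂μ := by
    have : h * l / (2 * N) = c * l := by rw [hc]; ring
    rw [this] at hgain
    linarith
  obtain ⟨n', -, hcov, hn'⟩ := E.bx_cov (q := r1) (r := r2) hp2 (l * Q) (by positivity) (fun j => by
    simp only [hr1, hr2, Eig.rad]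
    split_ifs with h1 h2 h3
    · exact le_mul_of_one_le_left hη.le (Real.one_le_exp (by positivity))
    all_goals
      rw [mul_left_comm, ← Real.exp_add]
      gcongr
      have := hQ2 j
      have := norm_nonneg (E.xv j)
      have : l * ‖E.xv j‖ ≤ l * Q := by gcongr
      nlinarith)
  have hst := step (E.bx_low μ hp1) (E.bx_low μ hp2) hcov (2 * N * (l * Q + 3)) (c * l) (by positivity) (by positivity) hn' hg
  have hc'le : c' ≤ (c * l / 2 - 1) / (2 * N * (l * Q + 3)) := by
    rw [hc', div_le_div_iff₀ (by positivity) (by positivity)]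
    have h1 : c / 4 * l ≤ c * l / 2 - 1 := by
      rw [div_le_iff₀ hc0] at hl1; linarith
    have h2 : l * Q + 3 ≤ l * (Q + 3) := by nlinarith
    calc c / 4 * (2 * N * (l * Q + 3)) ≤ c / 4 * (2 * N * (l * (Q + 3))) := by gcongr
      _ = (c / 4 * l) * (2 * N * (Q + 3)) := by ring
      _ ≤ _ := by gcongr
  have hfin := avg_step E μ hinv r1 r2 hp1 hp2 (c * l) c' hc'0 (hc'le.trans hst) f hf (e / 2) Ξ a hfa ε' hε'.le hn K hK
  refine hfin.trans ?_
  gcongr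
  rw [← ENNReal.ofReal_coe_nnreal]
  apply ENNReal.ofReal_le_ofReal
  have : Real.sqrt (ε' + Real.exp (-(c * l / 2))) ≤ Real.sqrt (ε' + ε') := Real.sqrt_le_sqrt (by linarith)
  have := mul_le_mul_of_nonneg_left this hS0
  linarith

end KS

theorem katok_spatzier_weak_mixing_positive_entropy
    (d N : ℕ) (hd : 1 < d)
    (α : (Fin d → ℤ) → Matrix (Fin N) (Fin N) ℤ)
    (hα0 : α 0 = 1)
    (hαadd : ∀ v w, α (v + w) = α v * α w)
    (hfaithful : ∀ v : Fin d → ℤ, v ≠ 0 → α v ≠ 1)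
    (hstrirr : ∀ Λ : AddSubgroup (Fin d → ℤ), Λ.FiniteIndex → IsIrreducibleOn α Λ)
    (μ : Measure (Fin N → UnitAddCircle)) [IsProbabilityMeasure μ]
    (hinv : ∀ v, Measure.map (toralMap (α v)) μ = μ)
    (herg : ∀ A : Set (Fin N → UnitAddCircle), MeasurableSet A →
      (∀ v, toralMap (α v) ⁻¹' A = A) → μ A = 0 ∨ μ A = 1)
    (hent : ∃ v, 0 < ksEntropy (toralMap (α v)) μ)
    (hwm : ∀ A : Set ((Fin N → UnitAddCircle) × (Fin N → UnitAddCircle)),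
      MeasurableSet A →
      (∀ v, (fun p : (Fin N → UnitAddCircle) × (Fin N → UnitAddCircle) =>
          (toralMap (α v) p.1, toralMap (α v) p.2)) ⁻¹' A = A) →
      (μ.prod μ) A = 0 ∨ (μ.prod μ) A = 1) :
    μ = volume := by
  have hN : 0 < N := by
    rcases Nat.eq_zero_or_pos N with rfl | h
    · exfalso
      refine hfaithful (fun _ => 1) (fun h => ?_) (by ext i; exact i.elim0)
      have := congrFun h ⟨0, by omega⟩
      simp at this
    · exact h
  haveI : NeZero N := ⟨hN.ne'⟩
  obtain ⟨E⟩ := KS.exists_eig α hα0 hαadd hfaithful (hstrirr ⊤ inferInstance)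
  obtain ⟨c, hc, H⟩ := KS.main_lower E hN hd hα0 hαadd hstrirr μ hinv hent
  exact KS.concl hα0 hαadd μ hinv herg (KS.vol_ac μ c hc H)
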